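/- arXiv:1509.04689 — 7 statements merged into one kernel-verified Lean document; each statement's English description precedes it below -/
import Mathlib

section
/- Let 1 ≤ d ≤ s be integers. Let x be a random vector distributed according to the uniform (unitarily invariant) probability measure on the unit sphere of ℂ^d ⊗ ℂ^s ≅ ℂ^{ds} (coordinates indexed by pairs (i,a) ∈ {1,…,d}×{1,…,s}), and let ρ ∈ M_d(ℂ) be the partial trace over ℂ^s of the rank-one projection xx*, i.e. ρ_{ij} = Σ_{a=1}^{s} x_{(i,a)} · conj(x_{(j,a)}). Then the expected von Neumann entropy of ρ is E[H(ρ)] = Σ_{i=s+1}^{ds} 1/i − (d−1)/(2s), where H(ρ) = −Σ_{i=1}^{d} λ_i log λ_i with λ₁,…,λ_d the eigenvalues of ρ (and the convention 0·log 0 = 0). -/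
open MeasureTheory

noncomputable instance euclideanComplexMeasurableSpace {ι : Type*} :
    MeasurableSpace (EuclideanSpace ℂ ι) := borel _

instance euclideanComplexBorelSpace {ι : Type*} : BorelSpace (EuclideanSpace ℂ ι) := ⟨rfl⟩

/-!
The moments `E[tr ρ ^ n]` determine the expected entropy. To compute them, write the power sum as
`p_n = ∑ (-1) ^ (j + 1) * j * e_j * h_k` over `j + k = n`. Here `e_j(ρ)` is the sum of the principal
`j × j` minors of `ρ`, and `h_k(ρ)` is, up to a constant, the mean of `(g* ρ g) ^ k` over a column
`g` of an independent uniform state. By unitary invariance `g` may be rotated to a coordinate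
vector, so `E[e_j h_k]` reduces to the mean of a minor times a power of one diagonal entry, an
explicit monomial moment of the sphere. The resulting moments are the values at `z = n` of a
rational function `F` with simple poles at negative integers and `F(∞) = 0`; partial fractions
exhibit `F` as the Mellin transform of a polynomial density on `[0, 1]`. By Weierstrass
approximation this density integrates every continuous `f` with `f 0 = 0` to `E[tr f(ρ)]`, so the
expected entropy is `-F'(1)`, which is computed term by term.
-/

namespace Page

open Finset ComplexConjugate Matrix

/-! ### Symmetric functions -/

section SymmetricFunctions

open PowerSeries

variable {ι R : Type*}

theorem sum_finsuppAntidiag_univ [Fintype ι] [DecidableEq ι] {M : Type*} [AddCommMonoid M]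
    (F : (ι → ℕ) → M) (k : ℕ) :
    ∑ f ∈ finsuppAntidiag (univ : Finset ι) k, F f = ∑ a ∈ piAntidiag univ k, F a :=
  sum_bij' (fun f _ => (f : ι → ℕ)) (fun a _ => Finsupp.equivFunOnFinite.symm a)
    (fun _ hf => by simpa using hf) (fun _ ha => by simpa using ha)
    (fun _ _ => by simp) (fun _ _ => by simp) (fun _ _ => rfl)

theorem card_piAntidiag_univ [Fintype ι] [DecidableEq ι] (k : ℕ) :
    #(piAntidiag (univ : Finset ι) k) = (Fintype.card ι + k - 1).choose k := by
  rw [card_eq_sum_ones, ← sum_finsuppAntidiag_univ (fun _ => 1), ← card_eq_sum_ones,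
    card_finsuppAntidiag_nat_eq_choose, card_univ]

/-- The complete homogeneous symmetric function of degree `k`, written as a sum over exponent
vectors of total degree `k`. -/
noncomputable def completeSymm [Fintype ι] [DecidableEq ι] [CommSemiring R] (l : ι → R)
    (k : ℕ) : R :=
  ∑ a ∈ piAntidiag (univ : Finset ι) k, ∏ i, l i ^ a i

theorem coeff_prod_mk_pow [Fintype ι] [DecidableEq ι] [CommSemiring R] (l : ι → R) (k : ℕ) :
    coeff k (∏ i, PowerSeries.mk fun n => l i ^ n) = completeSymm l k := by
  simp only [PowerSeries.coeff_prod, coeff_mk]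
  exact sum_finsuppAntidiag_univ (fun a => ∏ i, l i ^ a i) k

variable [CommRing R]

theorem mk_pow_mul_one_sub (r : R) :
    (PowerSeries.mk fun n => r ^ n) * (1 - C r * X) = 1 := by
  simpa [rescale_mk, rescale_X] using congrArg (rescale r) (mk_one_mul_one_sub_eq_one R)

theorem coeff_prod_one_sub [Fintype ι] (l : ι → R) (j : ℕ) :
    PowerSeries.coeff j (∏ i, (1 - C (l i) * X)) = (-1) ^ j * (univ.val.map l).esymm j := by
  have expansion : ∏ i, (1 - C (l i) * X) =
      ∑ S ∈ (univ : Finset ι).powerset, C ((-1) ^ #S * ∏ i ∈ S, l i) * X ^ #S := by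
    simp only [sub_eq_add_neg, prod_one_add, prod_neg, prod_mul_distrib, prod_const, map_mul,
      map_prod, map_pow, map_neg, map_one, mul_assoc]
  rw [expansion, map_sum, esymm_map_val, powersetCard_eq_filter, sum_filter, mul_sum]
  refine sum_congr rfl fun S _ => ?_
  rw [PowerSeries.coeff_C_mul, coeff_X_pow]
  split_ifs <;> simp_all

theorem derivative_prod_one_sub (l : ι → R) (T : Finset ι) :
    -(X * derivative R (∏ i ∈ T, (1 - C (l i) * X))) * ∏ i ∈ T, (PowerSeries.mk fun n => l i ^ n) =
      ∑ i ∈ T, C (l i) * X * PowerSeries.mk fun n => l i ^ n := by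
  classical
  induction T using Finset.induction_on with
  | empty => simp
  | insert i T hi ih =>
    have derivative_factor : derivative R (1 - C (l i) * X : PowerSeries R) = -C (l i) := by
      rw [map_sub, Derivation.leibniz]
      simp
    have prod_cancel : (∏ k ∈ T, (1 - C (l k) * X)) *
        ∏ k ∈ T, (PowerSeries.mk fun n => l k ^ n) = (1 : PowerSeries R) := by
      rw [← prod_mul_distrib]
      exact prod_eq_one fun k _ => by rw [mul_comm, mk_pow_mul_one_sub]
    rw [prod_insert hi, prod_insert hi, sum_insert hi, Derivation.leibniz, ← ih,
      derivative_factor, smul_eq_mul, smul_eq_mul]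
    linear_combination (C (l i) * X * PowerSeries.mk fun n => l i ^ n) * prod_cancel +
      (-(X * derivative R (∏ i ∈ T, (1 - C (l i) * X))) *
        ∏ i ∈ T, (PowerSeries.mk fun n => l i ^ n)) * mk_pow_mul_one_sub (l i)

theorem sum_pow_eq_sum_esymm_mul_completeSymm [Fintype ι] [DecidableEq ι] (l : ι → R) {n : ℕ}
    (hn : n ≠ 0) : ∑ i, l i ^ n = ∑ p ∈ antidiagonal n,
      (-1) ^ (p.1 + 1) * p.1 * ((univ.val.map l).esymm p.1 * completeSymm l p.2) := by
  obtain ⟨m, rfl⟩ := Nat.exists_eq_succ_of_ne_zero hn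
  calc ∑ i, l i ^ (m + 1)
      = coeff (m + 1) (∑ i, C (l i) * X * PowerSeries.mk fun n => l i ^ n) := by
        simp [mul_assoc, PowerSeries.coeff_C_mul, coeff_succ_X_mul, pow_succ']
    _ = ∑ p ∈ antidiagonal (m + 1), coeff p.1 (-(X * derivative R (∏ i, (1 - C (l i) * X)))) *
          coeff p.2 (∏ i, PowerSeries.mk fun n => l i ^ n) := by
        rw [← derivative_prod_one_sub, PowerSeries.coeff_mul]
    _ = _ := sum_congr rfl fun ⟨j, k⟩ _ => by
        rw [coeff_prod_mk_pow, ← mul_assoc]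
        congr 1
        cases j with
        | zero => simp
        | succ j =>
          simp only [map_neg, coeff_succ_X_mul, coeff_derivative, coeff_prod_one_sub]
          push_cast
          ring

end SymmetricFunctions

/-! ### The uniform measure on the unit sphere -/

section UniformMeasure

variable {ι : Type*} [Fintype ι]

/-- `μ` is the distribution of a uniformly random pure state in `ℂ^ι`: a probability measure
carried by the unit sphere and invariant under all unitaries. -/
structure IsUniformOnSphere (μ : Measure (EuclideanSpace ℂ ι)) : Prop
    extends IsProbabilityMeasure μ where
  measure_sphere : μ (Metric.sphere 0 1) = 1
  map_eq (U : EuclideanSpace ℂ ι ≃ₗᵢ[ℂ] EuclideanSpace ℂ ι) : Measure.map (fun x => U x) μ = μ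

theorem star_mulVec_dotProduct_mulVec [DecidableEq ι] {V : Matrix ι ι ℂ}
    (hV : V ∈ unitaryGroup ι ℂ) (g x : ι → ℂ) : star (V *ᵥ g) ⬝ᵥ V *ᵥ x = star g ⬝ᵥ x := by
  rw [star_mulVec, dotProduct_mulVec, vecMul_vecMul, ← star_eq_conjTranspose,
    mem_unitaryGroup_iff'.1 hV, vecMul_one]

theorem exists_unitary_mulVec_eq_single [DecidableEq ι] (i : ι) (g : ι → ℂ) :
    ∃ V ∈ unitaryGroup ι ℂ, V *ᵥ g = Pi.single i (‖WithLp.toLp 2 g‖ : ℂ) := by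
  set y : EuclideanSpace ℂ ι := WithLp.toLp 2 g
  rcases eq_or_ne y 0 with hy | hy
  · have hg : g = 0 := congrArg WithLp.ofLp hy
    exact ⟨1, one_mem _, by simp [hy, hg]⟩
  have hn : ‖y‖ ≠ 0 := norm_ne_zero_iff.2 hy
  obtain ⟨b, hb⟩ := Orthonormal.exists_orthonormalBasis_extension_of_card_eq (𝕜 := ℂ)
    (E := EuclideanSpace ℂ ι) (ι := ι) (by simp) (v := fun _ => ((‖y‖ : ℂ)⁻¹) • y) (s := {i}) (by
      have h1 : ‖((‖y‖ : ℂ)⁻¹) • y‖ = 1 := by rw [norm_smul]; simp [hn]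
      rw [orthonormal_iff_ite]
      rintro ⟨j, rfl⟩ ⟨k, rfl⟩
      simp [h1])
  have hyb : y = (‖y‖ : ℂ) • b i := by
    rw [hb i rfl, smul_smul, mul_inv_cancel₀ (by exact_mod_cast hn), one_smul]
  refine ⟨b.toBasis.toMatrix (EuclideanSpace.basisFun ι ℂ),
    b.toMatrix_orthonormalBasis_mem_unitary _, ?_⟩
  have hrepr : b.toBasis.toMatrix (EuclideanSpace.basisFun ι ℂ) *ᵥ g = b.repr y := by
    simpa using! (EuclideanSpace.basisFun ι ℂ).toBasis.toMatrix_mulVec_repr b.toBasis y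
  rw [hrepr]
  conv_lhs => rw [hyb, map_smul, b.repr_self]
  ext k
  simp [Pi.single_apply]

namespace IsUniformOnSphere

variable {μ : Measure (EuclideanSpace ℂ ι)}

theorem ae_mem_sphere (hμ : IsUniformOnSphere μ) :
    ∀ᵐ x ∂μ, x ∈ Metric.sphere (0 : EuclideanSpace ℂ ι) 1 :=
  have := hμ.toIsProbabilityMeasure
  (mem_ae_iff_prob_eq_one Metric.isClosed_sphere.measurableSet).2 hμ.measure_sphere

theorem ae_sum_mul_conj_eq_one (hμ : IsUniformOnSphere μ) :
    ∀ᵐ x ∂μ, ∑ i, x i * conj (x i) = 1 := by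
  filter_upwards [hμ.ae_mem_sphere] with x hx
  have hnorm : ∑ i, ‖x i‖ ^ 2 = 1 := by
    rw [← EuclideanSpace.norm_sq_eq, mem_sphere_zero_iff_norm.1 hx, one_pow]
  simp only [Complex.mul_conj']
  exact_mod_cast hnorm

theorem nonempty (hμ : IsUniformOnSphere μ) : Nonempty ι := by
  have := hμ.toIsProbabilityMeasure
  by_contra hι
  rw [not_nonempty_iff] at hι
  obtain ⟨x, hx⟩ := hμ.ae_sum_mul_conj_eq_one.exists
  simp at hx

theorem integrable_of_continuous (hμ : IsUniformOnSphere μ) {F : Type*} [NormedAddCommGroup F]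
    [SecondCountableTopology F] {f : EuclideanSpace ℂ ι → F} (hf : Continuous f) :
    Integrable f μ := by
  have := hμ.toIsProbabilityMeasure
  obtain ⟨C, hC⟩ := (isCompact_sphere (0 : EuclideanSpace ℂ ι) 1).exists_bound_of_continuousOn
    hf.continuousOn
  exact Integrable.of_bound hf.aestronglyMeasurable C (hμ.ae_mem_sphere.mono hC)

theorem integral_mulVec [DecidableEq ι] (hμ : IsUniformOnSphere μ) {V : Matrix ι ι ℂ}
    (hV : V ∈ unitaryGroup ι ℂ) (f : EuclideanSpace ℂ ι → ℂ) :
    ∫ x, f (WithLp.toLp 2 (V *ᵥ x.ofLp)) ∂μ = ∫ x, f x ∂μ := by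
  let U : EuclideanSpace ℂ ι ≃ₗᵢ[ℂ] EuclideanSpace ℂ ι :=
    Unitary.linearIsometryEquiv ⟨toEuclideanCLM (n := ι) (𝕜 := ℂ) V, Unitary.map_mem _ hV⟩
  conv_rhs => rw [← hμ.map_eq U]
  exact (U.toHomeomorph.measurableEmbedding.integral_map f).symm

theorem integral_phase (hμ : IsUniformOnSphere μ) {θ : ι → ℂ} (hθ : ∀ i, ‖θ i‖ = 1)
    (f : EuclideanSpace ℂ ι → ℂ) :
    ∫ x, f (WithLp.toLp 2 fun i => θ i * x i) ∂μ = ∫ x, f x ∂μ := by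
  classical
  have hV : diagonal θ ∈ unitaryGroup ι ℂ := by
    rw [mem_unitaryGroup_iff, star_eq_conjTranspose, diagonal_conjTranspose,
      diagonal_mul_diagonal, ← diagonal_one]
    congr 1
    ext i
    simp [Complex.mul_conj', hθ]
  have hmul (x : EuclideanSpace ℂ ι) : diagonal θ *ᵥ x.ofLp = fun i => θ i * x i :=
    funext fun i => mulVec_diagonal θ x.ofLp i
  simp only [← hmul, hμ.integral_mulVec hV]

theorem integral_eq_zero_of_phase (hμ : IsUniformOnSphere μ) {θ : ι → ℂ} (hθ : ∀ i, ‖θ i‖ = 1)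
    {f : EuclideanSpace ℂ ι → ℂ} {c : ℂ} (hc : c ≠ 1)
    (hf : ∀ x, f (WithLp.toLp 2 fun i => θ i * x i) = c * f x) : ∫ x, f x ∂μ = 0 := by
  have h := hμ.integral_phase hθ f
  simp only [hf, integral_const_mul] at h
  have : (c - 1) * ∫ x, f x ∂μ = 0 := by rw [sub_one_mul, h, sub_self]
  exact (mul_eq_zero.1 this).resolve_left (sub_ne_zero.2 hc)

theorem integral_monomial_mul_conj_of_ne (hμ : IsUniformOnSphere μ) {a b : ι → ℕ} (hab : a ≠ b) :
    ∫ x, (∏ i, x i ^ a i) * ∏ i, conj (x i) ^ b i ∂μ = 0 := by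
  classical
  obtain ⟨e, he⟩ := Function.ne_iff.1 hab
  -- An order exceeding both exponents separates the powers `ζ ^ a e` and `ζ ^ b e`.
  set m := a e + b e + 1
  set ζ := Complex.exp (2 * Real.pi * Complex.I / m)
  have hζ : IsPrimitiveRoot ζ m := Complex.isPrimitiveRoot_exp m (by omega)
  have hnorm : ‖ζ‖ = 1 := hζ.norm'_eq_one (by omega)
  refine hμ.integral_eq_zero_of_phase (θ := fun i => if i = e then ζ else 1)
    (c := ζ ^ a e * conj ζ ^ b e) (fun i => by split_ifs <;> simp [hnorm]) ?_ fun x => ?_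
  · intro h
    have hconj : ζ ^ b e * conj ζ ^ b e = 1 := by
      rw [← mul_pow, Complex.mul_conj', hnorm]
      simp
    exact he (hζ.pow_inj (by omega) (by omega) (mul_right_cancel₀
      (right_ne_zero_of_mul_eq_one hconj) (h.trans hconj.symm)))
  · simp only [mul_pow, map_mul, prod_mul_distrib, apply_ite conj, map_one, ite_pow, one_pow,
      prod_ite_eq', mem_univ, if_true]
    ring

theorem integral_dotProduct_pow_eq (hμ : IsUniformOnSphere μ) (y : ι → ℂ) (i : ι) (n : ℕ) :
    ∫ x, ((star y ⬝ᵥ x.ofLp) * conj (star y ⬝ᵥ x.ofLp)) ^ n ∂μ =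
      (∑ k, y k * conj (y k)) ^ n * ∫ x, (x i * conj (x i)) ^ n ∂μ := by
  classical
  obtain ⟨V, hV, hVy⟩ := exists_unitary_mulVec_eq_single i y
  have hnorm : ∑ k, y k * conj (y k) = (‖WithLp.toLp 2 y‖ : ℂ) ^ 2 := by
    rw [← Complex.ofReal_pow, EuclideanSpace.norm_sq_eq]
    simp [Complex.mul_conj']
  have hdot (x : EuclideanSpace ℂ ι) :
      star y ⬝ᵥ x.ofLp = ‖WithLp.toLp 2 y‖ * (V *ᵥ x.ofLp) i := by
    rw [← star_mulVec_dotProduct_mulVec hV, hVy]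
    simp
  rw [← hμ.integral_mulVec hV fun x => (x i * conj (x i)) ^ n, ← integral_const_mul]
  congr! 2
  rw [hdot, hnorm, map_mul, Complex.conj_ofReal]
  ring

theorem integral_dotProduct_pow_eq_sum [DecidableEq ι] (hμ : IsUniformOnSphere μ)
    (y : ι → ℂ) (n : ℕ) :
    ∫ x, ((star y ⬝ᵥ x.ofLp) * conj (star y ⬝ᵥ x.ofLp)) ^ n ∂μ =
      ∑ a ∈ piAntidiag univ n, (Nat.multinomial univ a : ℂ) ^ 2 *
        (∫ x, ∏ i, (x i * conj (x i)) ^ a i ∂μ) * ∏ i, (y i * conj (y i)) ^ a i := by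
  have expansion (x : EuclideanSpace ℂ ι) :
      ((star y ⬝ᵥ x.ofLp) * conj (star y ⬝ᵥ x.ofLp)) ^ n =
        ∑ a ∈ piAntidiag univ n, ∑ b ∈ piAntidiag univ n,
          (Nat.multinomial univ a * Nat.multinomial univ b *
            (∏ i, conj (y i) ^ a i) * ∏ i, y i ^ b i) *
          ((∏ i, x i ^ a i) * ∏ i, conj (x i) ^ b i) := by
    simp only [dotProduct, Pi.star_apply, map_sum, map_mul, Complex.star_def, Complex.conj_conj]
    rw [mul_pow, sum_pow_eq_sum_piAntidiag, sum_pow_eq_sum_piAntidiag, sum_mul_sum]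
    simp only [mul_pow, prod_mul_distrib]
    refine sum_congr rfl fun a _ => sum_congr rfl fun b _ => ?_
    ring
  simp only [expansion]
  rw [integral_finsetSum _ fun a _ => hμ.integrable_of_continuous (by fun_prop)]
  refine sum_congr rfl fun a ha => ?_
  rw [integral_finsetSum _ fun a _ => hμ.integrable_of_continuous (by fun_prop),
    Finset.sum_eq_single_of_mem a ha fun b _ hb => by
      rw [integral_const_mul, hμ.integral_monomial_mul_conj_of_ne hb.symm, mul_zero],
    integral_const_mul]
  simp only [mul_pow, prod_mul_distrib]
  ring

end IsUniformOnSphere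

theorem eq_of_sum_mul_prod_normSq_eq {A : Finset (ι → ℕ)} {u v : (ι → ℕ) → ℂ}
    (h : ∀ y : ι → ℂ, ∑ a ∈ A, u a * ∏ i, (y i * conj (y i)) ^ a i =
      ∑ a ∈ A, v a * ∏ i, (y i * conj (y i)) ^ a i) : ∀ a ∈ A, u a = v a := by
  have infinite : (Set.range fun z : ℂ => z * conj z).Infinite := by
    refine Set.Infinite.mono ?_
      (Set.infinite_range_of_injective ((Nat.cast_injective (R := ℂ)).comp
        (Nat.pow_left_injective (n := 2) two_ne_zero)))
    rintro _ ⟨n, rfl⟩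
    exact ⟨n, by simp [sq]⟩
  have polynomials_eq : ∑ a ∈ A, MvPolynomial.monomial (Finsupp.equivFunOnFinite.symm a) (u a) =
      ∑ a ∈ A, MvPolynomial.monomial (Finsupp.equivFunOnFinite.symm a) (v a) := by
    refine MvPolynomial.funext_set (fun _ => Set.range fun z : ℂ => z * conj z)
      (fun _ => infinite) fun t ht => ?_
    choose y hy using fun i => ht i (Set.mem_univ i)
    obtain rfl : (fun i => y i * conj (y i)) = t := funext hy
    simpa [MvPolynomial.eval_monomial, Finsupp.prod_fintype] using h y
  intro a ha
  classical
  have := congrArg (MvPolynomial.coeff (Finsupp.equivFunOnFinite.symm a)) polynomials_eq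
  simpa [MvPolynomial.coeff_sum, MvPolynomial.coeff_monomial, ha] using this

theorem prod_factorial_add_single [DecidableEq ι] (w : ι → ℕ) (q : ι) :
    ∏ i, (((w + Pi.single q 1 : ι → ℕ) i).factorial : ℂ) =
      (w q + 1) * ∏ i, ((w i).factorial : ℂ) := by
  have hfactor (i : ι) : (((w + Pi.single q 1 : ι → ℕ) i).factorial : ℂ) =
      (if i = q then (w q + 1 : ℂ) else 1) * (w i).factorial := by
    by_cases h : i = q
    · simp [h, Nat.factorial_succ]
    · simp [h]
  simp only [hfactor, prod_mul_distrib, prod_ite_eq', mem_univ, if_true]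

namespace IsUniformOnSphere

variable {μ : Measure (EuclideanSpace ℂ ι)}

theorem multinomial_mul_integral_prod [DecidableEq ι] (hμ : IsUniformOnSphere μ) (i : ι)
    {n : ℕ} {a : ι → ℕ} (ha : a ∈ piAntidiag univ n) :
    Nat.multinomial univ a * ∫ x, ∏ k, (x k * conj (x k)) ^ a k ∂μ =
      ∫ x, (x i * conj (x i)) ^ n ∂μ := by
  have hcoeff := eq_of_sum_mul_prod_normSq_eq (A := piAntidiag univ n)
    (u := fun a => (Nat.multinomial univ a : ℂ) ^ 2 * ∫ x, ∏ k, (x k * conj (x k)) ^ a k ∂μ)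
    (v := fun a => Nat.multinomial univ a * ∫ x, (x i * conj (x i)) ^ n ∂μ) (fun y => by
      rw [← hμ.integral_dotProduct_pow_eq_sum, hμ.integral_dotProduct_pow_eq y i,
        sum_pow_eq_sum_piAntidiag, sum_mul]
      exact sum_congr rfl fun _ _ => by ring) a ha
  have hne : (Nat.multinomial univ a : ℂ) ≠ 0 := by exact_mod_cast (Nat.multinomial_pos _ _).ne'
  exact mul_left_cancel₀ hne (by linear_combination hcoeff)

theorem integral_coord_pow (hμ : IsUniformOnSphere μ) (i : ι) (n : ℕ) :
    ∫ x, (x i * conj (x i)) ^ n ∂μ = n.factorial / (Fintype.card ι).ascFactorial n := by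
  classical
  have := hμ.toIsProbabilityMeasure
  have normalisation : ∫ x, (∑ k, x k * conj (x k)) ^ n ∂μ = 1 := by
    rw [integral_congr_ae (g := fun _ => (1 : ℂ))
      (hμ.ae_sum_mul_conj_eq_one.mono fun x hx => by simp only [hx, one_pow])]
    simp
  have total : ((Fintype.card ι + n - 1).choose n : ℂ) * ∫ x, (x i * conj (x i)) ^ n ∂μ = 1 := by
    rw [← normalisation, ← card_piAntidiag_univ, ← nsmul_eq_mul, ← sum_const]
    simp only [sum_pow_eq_sum_piAntidiag]
    rw [integral_finsetSum _ fun a _ => hμ.integrable_of_continuous (by fun_prop)]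
    refine sum_congr rfl fun a ha => ?_
    rw [integral_const_mul, hμ.multinomial_mul_integral_prod i ha]
  have hchoose := left_ne_zero_of_mul_eq_one total
  have hfact : (n.factorial : ℂ) ≠ 0 := by exact_mod_cast n.factorial_ne_zero
  rw [Nat.ascFactorial_eq_factorial_mul_choose', Nat.cast_mul,
    eq_div_iff (mul_ne_zero hfact hchoose)]
  linear_combination (n.factorial : ℂ) * total

theorem integral_prod_pow (hμ : IsUniformOnSphere μ) (m : ι → ℕ) :
    ∫ x, ∏ i, (x i * conj (x i)) ^ m i ∂μ =
      (∏ i, ((m i).factorial : ℂ)) / (Fintype.card ι).ascFactorial (∑ i, m i) := by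
  classical
  obtain ⟨i⟩ := hμ.nonempty
  have hmem : m ∈ piAntidiag univ (∑ i, m i) := by simp
  have hmult : (∏ i, ((m i).factorial : ℂ)) * Nat.multinomial univ m =
      (∑ i, m i).factorial := by exact_mod_cast Nat.multinomial_spec univ m
  have hne : (Nat.multinomial univ m : ℂ) ≠ 0 := by exact_mod_cast (Nat.multinomial_pos _ _).ne'
  refine mul_left_cancel₀ hne ?_
  rw [hμ.multinomial_mul_integral_prod i hmem, hμ.integral_coord_pow, ← hmult]
  ring

theorem integral_prod_pow_mul_sum_pow (hμ : IsUniformOnSphere μ) (w : ι → ℕ) (R : Finset ι)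
    (k : ℕ) :
    ∫ x, (∏ i, (x i * conj (x i)) ^ w i) * (∑ p ∈ R, x p * conj (x p)) ^ k ∂μ =
      (∏ i, ((w i).factorial : ℂ)) * (∑ p ∈ R, (w p + 1)).ascFactorial k /
        (Fintype.card ι).ascFactorial (∑ i, w i + k) := by
  classical
  induction k generalizing w with
  | zero => simp [hμ.integral_prod_pow]
  | succ k ih =>
    let raise (q : ι) : ι → ℕ := w + Pi.single q 1
    have expansion (x : EuclideanSpace ℂ ι) :
        (∏ i, (x i * conj (x i)) ^ w i) * (∑ p ∈ R, x p * conj (x p)) ^ (k + 1) =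
          ∑ q ∈ R, (∏ i, (x i * conj (x i)) ^ raise q i) *
            (∑ p ∈ R, x p * conj (x p)) ^ k := by
      simp only [raise, Pi.add_apply, pow_add, prod_mul_distrib, Pi.single_apply, pow_ite, pow_one,
        pow_zero, prod_ite_eq', mem_univ, if_true, ← sum_mul, ← mul_sum]
      ring
    have hrow : ∀ q ∈ R, ∑ p ∈ R, (raise q p + 1) = ∑ p ∈ R, (w p + 1) + 1 := fun q hq => by
      simp [raise, sum_add_distrib, Pi.single_apply, hq, add_right_comm]
    have hdeg (q : ι) : ∑ i, raise q i + k = ∑ i, w i + (k + 1) := by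
      simp [raise, sum_add_distrib, add_assoc, add_comm k]
    have hterm : ∀ q ∈ R, ∫ x, (∏ i, (x i * conj (x i)) ^ raise q i) *
        (∑ p ∈ R, x p * conj (x p)) ^ k ∂μ = (w q + 1) * ((∏ i, ((w i).factorial : ℂ)) *
          (∑ p ∈ R, (w p + 1) + 1).ascFactorial k /
            (Fintype.card ι).ascFactorial (∑ i, w i + (k + 1))) := fun q hq => by
      rw [ih, prod_factorial_add_single, hrow q hq, hdeg]
      ring
    simp only [expansion]
    rw [integral_finsetSum _ fun q _ => hμ.integrable_of_continuous (by fun_prop),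
      sum_congr rfl hterm, ← sum_mul, Nat.ascFactorial_succ, ← Nat.succ_ascFactorial]
    push_cast
    ring

end IsUniformOnSphere

end UniformMeasure

/-! ### Principal minors and characteristic polynomials -/

section PrincipalMinors

variable {ι σ : Type*} [Fintype ι] [DecidableEq ι] [Fintype σ] [DecidableEq σ]

/-- The sum of the `j × j` principal minors, i.e. the `j`-th elementary symmetric function of the
eigenvalues expressed as a polynomial in the matrix entries. -/
noncomputable def sumMinors (M : Matrix ι ι ℂ) (j : ℕ) : ℂ :=
  ∑ S ∈ powersetCard j (univ : Finset ι),
    (M.submatrix (Subtype.val : S → ι) (Subtype.val : S → ι)).det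

theorem sumMinors_congr {M M' : Matrix ι ι ℂ} (h : M.charpoly = M'.charpoly) (j : ℕ) :
    sumMinors M j = sumMinors M' j := by
  rcases le_or_gt j (Fintype.card ι) with hj | hj
  · have hM := charpoly_coeff_eq_sum_minors M j hj
    rw [h, charpoly_coeff_eq_sum_minors M' j hj] at hM
    exact (mul_left_cancel₀ (by simp) hM).symm
  · simp [sumMinors, powersetCard_eq_empty.2 hj]

theorem sumMinors_conj {V : Matrix ι ι ℂ} (hV : V ∈ unitaryGroup ι ℂ) (M : Matrix ι ι ℂ) (j : ℕ) :
    sumMinors (V * M * Vᴴ) j = sumMinors M j := by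
  refine sumMinors_congr ?_ j
  rw [charpoly_mul_comm, ← mul_assoc, ← star_eq_conjTranspose, mem_unitaryGroup_iff'.1 hV, one_mul]

theorem sumMinors_diagonal (l : ι → ℂ) (j : ℕ) :
    sumMinors (diagonal l) j = (univ.val.map l).esymm j := by
  rw [sumMinors, esymm_map_val]
  refine sum_congr rfl fun S _ => ?_
  rw [submatrix_diagonal _ _ Subtype.val_injective, det_diagonal]
  exact prod_coe_sort S l

theorem sumMinors_eq_esymm_eigenvalues {M : Matrix ι ι ℂ} (hM : M.IsHermitian) (j : ℕ) :
    sumMinors M j = (univ.val.map fun i => (hM.eigenvalues i : ℂ)).esymm j := by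
  rw [← sumMinors_diagonal]
  exact sumMinors_congr (by rw [hM.charpoly_eq, charpoly_diagonal]; rfl) j

theorem continuous_sumMinors (j : ℕ) : Continuous fun M : Matrix ι ι ℂ => sumMinors M j :=
  continuous_finsetSum _ fun _ _ => (continuous_id.matrix_submatrix _ _).matrix_det

theorem card_mul_card_powersetCard_filter_mem (i : ι) (j : ℕ) :
    Fintype.card ι * #{S ∈ powersetCard j (univ : Finset ι) | i ∈ S} =
      j * (Fintype.card ι).choose j := by
  cases j with
  | zero => simp
  | succ j =>
    obtain ⟨m, hm⟩ : ∃ m, Fintype.card ι = m + 1 :=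
      Nat.exists_eq_add_one.2 (Fintype.card_pos_iff.2 ⟨i⟩)
    have hcard : #{S ∈ powersetCard (j + 1) (univ : Finset ι) | i ∉ S} = m.choose (j + 1) := by
      have : {S ∈ powersetCard (j + 1) (univ : Finset ι) | i ∉ S} =
          powersetCard (j + 1) (univ.erase i) := by
        ext S
        simp [mem_powersetCard, subset_erase, and_comm]
      rw [this, card_powersetCard, card_erase_of_mem (mem_univ i), card_univ, hm,
        Nat.add_sub_cancel]
    have htotal := card_filter_add_card_filter_not (s := powersetCard (j + 1) (univ : Finset ι))
      (fun S => i ∈ S)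
    rw [hcard, card_powersetCard, card_univ, hm, Nat.choose_succ_succ, Nat.add_right_cancel_iff]
      at htotal
    rw [htotal, hm, Nat.add_one_mul_choose_eq, mul_comm]

theorem sum_sign_ite_comp_eq {κ : Type*} [DecidableEq κ] (b : σ → κ) :
    (∑ π : Equiv.Perm σ, if b ∘ π = b then ((π.sign : ℤ) : ℂ) else 0) =
      if b.Injective then 1 else 0 := by
  have hdet : (∑ π : Equiv.Perm σ, if b ∘ π = b then ((π.sign : ℤ) : ℂ) else 0) =
      (of fun r t => if b r = b t then (1 : ℂ) else 0).det := by
    rw [det_apply']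
    refine sum_congr rfl fun π _ => ?_
    simp [Fintype.prod_ite_zero, funext_iff]
  rw [hdet]
  split_ifs with hb
  · simp only [hb.eq_iff]
    exact det_one
  · obtain ⟨r, t, hrt, hne⟩ := Function.not_injective_iff.1 hb
    exact det_zero_of_row_eq hne (by ext; simp [hrt])

end PrincipalMinors

/-! ### The reduced density matrix of a pure state -/

section ReducedDensity

variable {ι κ σ : Type*} [Fintype κ]

/-- The partial trace over `ℂ^κ` of the rank-one projection onto `x ∈ ℂ^ι ⊗ ℂ^κ`, written as
`A Aᴴ` for the coefficient matrix `A` of `x`. -/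
noncomputable def reducedDensity (x : EuclideanSpace ℂ (ι × κ)) : Matrix ι ι ℂ :=
  (of fun i a => x (i, a)) * (of fun i a => x (i, a))ᴴ

theorem reducedDensity_apply (x : EuclideanSpace ℂ (ι × κ)) (i k : ι) :
    reducedDensity x i k = ∑ a, x (i, a) * conj (x (k, a)) := by
  simp [reducedDensity, mul_apply]

theorem isHermitian_reducedDensity (x : EuclideanSpace ℂ (ι × κ)) :
    (reducedDensity x).IsHermitian :=
  isHermitian_mul_conjTranspose_self _

open scoped ComplexOrder in
theorem posSemidef_reducedDensity [Finite ι] (x : EuclideanSpace ℂ (ι × κ)) :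
    (reducedDensity x).PosSemidef :=
  posSemidef_self_mul_conjTranspose _

theorem trace_reducedDensity [Fintype ι] (x : EuclideanSpace ℂ (ι × κ)) :
    (reducedDensity x).trace = ∑ p, x p * conj (x p) := by
  simp [trace, reducedDensity_apply, Fintype.sum_prod_type]

@[fun_prop]
theorem continuous_reducedDensity :
    Continuous (reducedDensity : EuclideanSpace ℂ (ι × κ) → Matrix ι ι ℂ) := by
  refine continuous_matrix fun i k => ?_
  simp only [reducedDensity_apply]
  fun_prop

open scoped Kronecker in
theorem reducedDensity_kronecker_mulVec [Fintype ι] [DecidableEq κ] (V : Matrix ι ι ℂ)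
    (x : EuclideanSpace ℂ (ι × κ)) :
    reducedDensity (WithLp.toLp 2 ((V ⊗ₖ (1 : Matrix κ κ ℂ)) *ᵥ x.ofLp)) =
      V * reducedDensity x * Vᴴ := by
  have hA : (of fun i a => ((V ⊗ₖ (1 : Matrix κ κ ℂ)) *ᵥ x.ofLp) (i, a)) =
      V * of fun i a => x (i, a) := by
    ext i a
    simp [mulVec, dotProduct, mul_apply, Fintype.sum_prod_type, one_apply]
  simp only [reducedDensity, hA, conjTranspose_mul, Matrix.mul_assoc]

variable [Fintype σ]

theorem det_submatrix_reducedDensity [DecidableEq σ] (x : EuclideanSpace ℂ (ι × κ)) (e : σ → ι) :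
    ((reducedDensity x).submatrix e e).det = ∑ b : σ → κ, ∑ π : Equiv.Perm σ,
      ((π.sign : ℤ) : ℂ) * ∏ r, x (e (π r), b r) * conj (x (e r, b r)) := by
  rw [det_apply', sum_comm]
  simp only [submatrix_apply, reducedDensity_apply, ← mul_sum, Fintype.prod_sum]

variable [Fintype ι] {μ : Measure (EuclideanSpace ℂ (ι × κ))}

theorem IsUniformOnSphere.integral_perm_term_eq_zero
    (hμ : IsUniformOnSphere μ) {e : σ → ι} (he : e.Injective) {b : σ → κ} {π : Equiv.Perm σ}
    (hb : b ∘ π ≠ b) (i : ι) (k : ℕ) :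
    ∫ x, (∏ r, x (e (π r), b r) * conj (x (e r, b r))) * reducedDensity x i i ^ k ∂μ = 0 := by
  classical
  obtain ⟨r, hr⟩ := Function.ne_iff.1 hb
  -- The coordinate `q` occurs exactly once among the unconjugated factors and never conjugated.
  set q := (e (π r), b r)
  let θ (p : ι × κ) : ℂ := if p = q then -1 else 1
  have hθ (p : ι × κ) : ‖θ p‖ = 1 := by simp only [θ]; split_ifs <;> simp
  have hconj (t : σ) : θ (e t, b t) = 1 := if_neg fun h => by
    obtain ⟨h1, h2⟩ := Prod.ext_iff.1 h
    exact hr ((congrArg b (he h1)).symm.trans h2)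
  have hplain (t : σ) : θ (e (π t), b t) = if t = r then -1 else 1 := by
    refine if_congr ⟨fun h => π.injective (he (Prod.ext_iff.1 h).1), ?_⟩ rfl rfl
    rintro rfl
    rfl
  refine hμ.integral_eq_zero_of_phase hθ (c := -1) (by norm_num) fun x => ?_
  have hdiag : reducedDensity (WithLp.toLp 2 fun p => θ p * x p) i i = reducedDensity x i i := by
    simp only [reducedDensity_apply, map_mul]
    refine sum_congr rfl fun a _ => ?_
    rw [mul_mul_mul_comm, Complex.mul_conj', hθ]
    simp
  simp only [hdiag, hconj, hplain, one_mul, prod_mul_distrib, prod_ite_eq', mem_univ, if_true]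
  ring

theorem IsUniformOnSphere.integral_prod_graph_mul_diag_pow [DecidableEq ι]
    (hμ : IsUniformOnSphere μ) {e : σ → ι} (he : e.Injective) (b : σ → κ) (i : ι) (k : ℕ) :
    ∫ x, (∏ r, x (e r, b r) * conj (x (e r, b r))) * reducedDensity x i i ^ k ∂μ =
      (Fintype.card κ + if i ∈ univ.image e then 1 else 0).ascFactorial k /
        (Fintype.card ι * Fintype.card κ).ascFactorial (Fintype.card σ + k) := by
  classical
  set T : Finset (ι × κ) := univ.image fun r => (e r, b r) with hT
  have hinj : Function.Injective fun r => (e r, b r) := fun r t h => he (Prod.ext_iff.1 h).1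
  have hgraph (x : EuclideanSpace ℂ (ι × κ)) : ∏ r, x (e r, b r) * conj (x (e r, b r)) =
      ∏ p, (x p * conj (x p)) ^ (if p ∈ T then 1 else 0) := by
    simp only [pow_ite, pow_one, pow_zero, prod_ite_mem, univ_inter, hT,
      prod_image hinj.injOn]
  have hrowsum (x : EuclideanSpace ℂ (ι × κ)) : reducedDensity x i i =
      ∑ p ∈ {i} ×ˢ univ, x p * conj (x p) := by
    rw [reducedDensity_apply, sum_product, sum_singleton]
  have hrow : ∑ p ∈ ({i} : Finset ι) ×ˢ (univ : Finset κ), ((if p ∈ T then 1 else 0) + 1) =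
      Fintype.card κ + if i ∈ univ.image e then 1 else 0 := by
    rw [sum_product, sum_singleton, sum_add_distrib, add_comm]
    congr 1
    · simp
    · split_ifs with hi
      · obtain ⟨r, -, rfl⟩ := mem_image.1 hi
        have hmem (a : κ) : (e r, a) ∈ T ↔ b r = a := by simp [hT, he.eq_iff]
        simp [hmem]
      · refine sum_eq_zero fun a _ => if_neg fun h => hi ?_
        obtain ⟨r, -, hr⟩ := mem_image.1 h
        exact mem_image.2 ⟨r, mem_univ r, congrArg Prod.fst hr⟩
  have hdeg : ∑ p, (if p ∈ T then 1 else 0) = Fintype.card σ := by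
    simp [hT, card_image_of_injective _ hinj]
  have hfact (p : ι × κ) : (if p ∈ T then 1 else 0 : ℕ).factorial = 1 := by split_ifs <;> rfl
  simp only [hgraph, hrowsum]
  rw [hμ.integral_prod_pow_mul_sum_pow, hrow, hdeg, Fintype.card_prod]
  simp [hfact]

theorem IsUniformOnSphere.integral_minor_mul_diag_pow [DecidableEq ι] [DecidableEq σ]
    (hμ : IsUniformOnSphere μ) {e : σ → ι} (he : e.Injective) (i : ι) (k : ℕ) :
    ∫ x, ((reducedDensity x).submatrix e e).det * reducedDensity x i i ^ k ∂μ =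
      (Fintype.card κ).descFactorial (Fintype.card σ) *
        ((Fintype.card κ + if i ∈ univ.image e then 1 else 0).ascFactorial k /
          (Fintype.card ι * Fintype.card κ).ascFactorial (Fintype.card σ + k)) := by
  classical
  set c : ℂ := (Fintype.card κ + if i ∈ univ.image e then 1 else 0).ascFactorial k /
    (Fintype.card ι * Fintype.card κ).ascFactorial (Fintype.card σ + k)
  have hterm (b : σ → κ) (π : Equiv.Perm σ) : ∫ x, ((π.sign : ℤ) : ℂ) *
      ((∏ r, x (e (π r), b r) * conj (x (e r, b r))) * reducedDensity x i i ^ k) ∂μ =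
        (if b ∘ π = b then ((π.sign : ℤ) : ℂ) else 0) * c := by
    rw [integral_const_mul]
    split_ifs with hb
    · have hprod (x : EuclideanSpace ℂ (ι × κ)) :
          ∏ r, x (e (π r), b r) * conj (x (e r, b r)) =
            ∏ r, x (e r, b r) * conj (x (e r, b r)) := by
        rw [prod_mul_distrib, prod_mul_distrib, ← Equiv.prod_comp π fun r => x (e r, b r)]
        simp only [← Function.comp_apply (f := b) (g := π), hb]
      simp only [hprod]
      exact congrArg _ (hμ.integral_prod_graph_mul_diag_pow he b i k)
    · rw [hμ.integral_perm_term_eq_zero he hb, mul_zero, zero_mul]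
  have hcount : #{b : σ → κ | b.Injective} = (Fintype.card κ).descFactorial (Fintype.card σ) := by
    rw [← Fintype.card_embedding_eq, ← Fintype.card_subtype]
    exact Fintype.card_congr (Equiv.subtypeInjectiveEquivEmbedding σ κ)
  simp only [det_submatrix_reducedDensity, sum_mul, mul_assoc]
  rw [integral_finsetSum _ fun b _ => hμ.integrable_of_continuous (by fun_prop)]
  calc _ = ∑ b : σ → κ, ∑ π : Equiv.Perm σ, (if b ∘ π = b then ((π.sign : ℤ) : ℂ) else 0) * c :=
        sum_congr rfl fun b _ => by
          rw [integral_finsetSum _ fun π _ => hμ.integrable_of_continuous (by fun_prop)]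
          exact sum_congr rfl fun π _ => hterm b π
    _ = _ := by
      simp only [← sum_mul, sum_sign_ite_comp_eq]
      rw [sum_boole, hcount]

end ReducedDensity

/-! ### Averaging over two independent states -/

section Averages

variable {ι κ : Type*} [Fintype ι] [Fintype κ]

theorem star_dotProduct_conj_mulVec (V M : Matrix ι ι ℂ) (g : ι → ℂ) :
    star g ⬝ᵥ (V * M * Vᴴ) *ᵥ g = star (Vᴴ *ᵥ g) ⬝ᵥ M *ᵥ (Vᴴ *ᵥ g) := by
  rw [star_mulVec, conjTranspose_conjTranspose, ← mulVec_mulVec, ← mulVec_mulVec,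
    dotProduct_mulVec]

theorem star_single_dotProduct_mulVec_single [DecidableEq ι] (M : Matrix ι ι ℂ) (i : ι) (c : ℂ) :
    star (Pi.single i c) ⬝ᵥ M *ᵥ Pi.single i c = conj c * c * M i i := by
  rw [← Pi.single_star, single_dotProduct, mulVec_single]
  simp only [MulOpposite.smul_eq_mul_unop, MulOpposite.unop_op, Pi.smul_apply, col_apply,
    RCLike.star_def]
  ring

theorem star_dotProduct_diagonal_mulVec [DecidableEq ι] (l g : ι → ℂ) :
    star g ⬝ᵥ diagonal l *ᵥ g = ∑ i, l i * (g i * conj (g i)) := by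
  refine sum_congr rfl fun i _ => ?_
  rw [mulVec_diagonal, Pi.star_apply, RCLike.star_def]
  ring

theorem kronecker_one_mulVec_apply [DecidableEq κ] (V : Matrix ι ι ℂ) (x : ι × κ → ℂ) (i : ι)
    (a : κ) : (kroneckerMap (· * ·) V (1 : Matrix κ κ ℂ) *ᵥ x) (i, a) =
      (V *ᵥ fun k => x (k, a)) i := by
  simp [mulVec, dotProduct, Fintype.sum_prod_type, one_apply]

/-- The spectrum of the reduced density matrix of `x`, i.e. the squared Schmidt coefficients of
`x ∈ ℂ^ι ⊗ ℂ^κ`. -/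
noncomputable def schmidtWeights [DecidableEq ι] (x : EuclideanSpace ℂ (ι × κ)) : ι → ℝ :=
  (isHermitian_reducedDensity x).eigenvalues

theorem sumMinors_reducedDensity [DecidableEq ι] (x : EuclideanSpace ℂ (ι × κ)) (j : ℕ) :
    sumMinors (reducedDensity x) j =
      (univ.val.map fun i => (schmidtWeights x i : ℂ)).esymm j :=
  sumMinors_eq_esymm_eigenvalues (isHermitian_reducedDensity x) j

namespace IsUniformOnSphere

variable {μ : Measure (EuclideanSpace ℂ (ι × κ))}

theorem integrable_uncurry_of_continuous {ι ι' : Type*} [Fintype ι] [Fintype ι']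
    {μ : Measure (EuclideanSpace ℂ ι)} {ν : Measure (EuclideanSpace ℂ ι')}
    (hμ : IsUniformOnSphere μ) (hν : IsUniformOnSphere ν)
    {F : EuclideanSpace ℂ ι → EuclideanSpace ℂ ι' → ℂ} (hF : Continuous (Function.uncurry F)) :
    Integrable (Function.uncurry F) (μ.prod ν) := by
  have := hμ.toIsProbabilityMeasure
  have := hν.toIsProbabilityMeasure
  obtain ⟨C, hC⟩ := ((isCompact_sphere (0 : EuclideanSpace ℂ ι) 1).prod
    (isCompact_sphere (0 : EuclideanSpace ℂ ι') 1)).exists_bound_of_continuousOn hF.continuousOn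
  refine Integrable.of_bound hF.aestronglyMeasurable C ?_
  filter_upwards [Measure.quasiMeasurePreserving_fst.ae hμ.ae_mem_sphere,
    Measure.quasiMeasurePreserving_snd.ae hν.ae_mem_sphere] with p hp hp'
  exact hC p ⟨hp, hp'⟩

theorem factorial_div_ascFactorial_ne_zero (hμ : IsUniformOnSphere μ) (k : ℕ) :
    (k.factorial / (Fintype.card ι * Fintype.card κ).ascFactorial k : ℂ) ≠ 0 := by
  have := hμ.nonempty
  obtain ⟨n, hn⟩ := Nat.exists_eq_add_one.2 (Fintype.card_pos (α := ι × κ))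
  rw [← Fintype.card_prod, hn]
  exact div_ne_zero (Nat.cast_ne_zero.2 k.factorial_ne_zero)
    (Nat.cast_ne_zero.2 (n.ascFactorial_pos k).ne')

variable [DecidableEq ι]

theorem integral_minor_mul_diag_pow_eq (hμ : IsUniformOnSphere μ) (S : Finset ι) (i : ι) (k : ℕ) :
    ∫ x, ((reducedDensity x).submatrix (Subtype.val : S → ι) Subtype.val).det *
        reducedDensity x i i ^ k ∂μ =
      (Fintype.card κ).descFactorial #S * (Fintype.card κ).ascFactorial k /
        (Fintype.card κ * (Fintype.card ι * Fintype.card κ).ascFactorial (#S + k)) *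
        (Fintype.card κ + k * if i ∈ S then 1 else 0) := by
  obtain ⟨-, a⟩ := hμ.nonempty
  have hκ : (Fintype.card κ : ℂ) ≠ 0 := Nat.cast_ne_zero.2 (Fintype.card_pos_iff.2 ⟨a⟩).ne'
  have hasc : (Fintype.card κ : ℂ) * (Fintype.card κ + if i ∈ S then 1 else 0).ascFactorial k =
      (Fintype.card κ).ascFactorial k * (Fintype.card κ + k * if i ∈ S then 1 else 0) := by
    split_ifs
    · rw [mul_one, mul_comm (Nat.cast (Nat.ascFactorial _ k))]
      exact_mod_cast Nat.succ_ascFactorial (Fintype.card κ) k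
    · simp [mul_comm]
  have hmem : i ∈ univ.image (Subtype.val : S → ι) ↔ i ∈ S := by simp
  rw [hμ.integral_minor_mul_diag_pow Subtype.val_injective]
  simp only [hmem, Fintype.card_coe]
  rw [← mul_div_mul_left _ _ hκ, hasc]
  ring

theorem integral_sumMinors_mul_diag_pow (hμ : IsUniformOnSphere μ) (i : ι) (j k : ℕ) :
    ∫ x, sumMinors (reducedDensity x) j * reducedDensity x i i ^ k ∂μ =
      (Fintype.card κ).descFactorial j * (Fintype.card κ).ascFactorial k *
        (Fintype.card ι).choose j * (Fintype.card ι * Fintype.card κ + j * k) /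
        (Fintype.card ι * Fintype.card κ *
          (Fintype.card ι * Fintype.card κ).ascFactorial (j + k)) := by
  have hι : (Fintype.card ι : ℂ) ≠ 0 := Nat.cast_ne_zero.2 (Fintype.card_pos_iff.2 ⟨i⟩).ne'
  have hcount : (Fintype.card ι : ℂ) * ∑ S ∈ powersetCard j (univ : Finset ι),
      (Fintype.card κ + k * if i ∈ S then 1 else 0 : ℂ) =
        (Fintype.card ι).choose j * (Fintype.card ι * Fintype.card κ + j * k) := by
    have hmem : (Fintype.card ι : ℂ) * #{S ∈ powersetCard j (univ : Finset ι) | i ∈ S} =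
        j * (Fintype.card ι).choose j := mod_cast card_mul_card_powersetCard_filter_mem i j
    rw [sum_add_distrib, ← mul_sum, sum_boole, sum_const, card_powersetCard, card_univ,
      nsmul_eq_mul, mul_add, mul_left_comm _ (k : ℂ), hmem]
    ring
  simp only [sumMinors, sum_mul]
  rw [integral_finsetSum _ fun S _ => hμ.integrable_of_continuous (by fun_prop)]
  calc _ = ∑ S ∈ powersetCard j (univ : Finset ι),
        ((Fintype.card κ).descFactorial j * (Fintype.card κ).ascFactorial k /
          (Fintype.card κ * (Fintype.card ι * Fintype.card κ).ascFactorial (j + k)) *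
          (Fintype.card κ + k * if i ∈ S then 1 else 0) : ℂ) :=
        sum_congr rfl fun S hS => by
          rw [hμ.integral_minor_mul_diag_pow_eq, (mem_powersetCard.1 hS).2]
    _ = _ := by
      rw [← mul_sum, ← mul_div_cancel_left₀ (∑ S ∈ _, _) hι, hcount]
      ring

theorem integral_column_diagonal_pow (hμ : IsUniformOnSphere μ) (a : κ) (l : ι → ℂ) (k : ℕ) :
    ∫ y, (star (fun i => y (i, a)) ⬝ᵥ diagonal l *ᵥ fun i => y (i, a)) ^ k ∂μ =
      k.factorial / (Fintype.card ι * Fintype.card κ).ascFactorial k * completeSymm l k := by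
  classical
  have hcolumn {M : Type} [CommMonoid M] (f : ℕ → κ → ι → M) (hf : ∀ b i, f 0 b i = 1)
      (m : ι → ℕ) : ∏ p : ι × κ, f (if p.2 = a then m p.1 else 0) p.2 p.1 =
        ∏ i, f (m i) a i := by
    rw [Fintype.prod_prod_type]
    refine prod_congr rfl fun i _ => ?_
    rw [Fintype.prod_eq_single a fun b hb => by rw [if_neg hb, hf], if_pos rfl]
  have expansion (y : EuclideanSpace ℂ (ι × κ)) :
      (star (fun i => y (i, a)) ⬝ᵥ diagonal l *ᵥ fun i => y (i, a)) ^ k =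
        ∑ m ∈ piAntidiag (univ : Finset ι) k, ((Nat.multinomial univ m : ℂ) * ∏ i, l i ^ m i) *
          ∏ p : ι × κ, (y p * conj (y p)) ^ (if p.2 = a then m p.1 else 0) := by
    rw [star_dotProduct_diagonal_mulVec, sum_pow_eq_sum_piAntidiag]
    refine sum_congr rfl fun m _ => ?_
    rw [hcolumn (fun n b i => (y (i, b) * conj (y (i, b))) ^ n) (by simp), mul_assoc,
      ← prod_mul_distrib]
    simp only [mul_pow]
  simp only [expansion]
  rw [integral_finsetSum _ fun m _ => hμ.integrable_of_continuous (by fun_prop), completeSymm,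
    mul_sum]
  refine sum_congr rfl fun m hm => ?_
  have hm : ∑ i, m i = k := by simpa using hm
  have hdeg : ∑ p : ι × κ, (if p.2 = a then m p.1 else 0) = k := by
    simp [Fintype.sum_prod_type, hm]
  have hmultinomial : (∏ i, ((m i).factorial : ℂ)) * Nat.multinomial univ m = k.factorial := by
    exact_mod_cast hm ▸ Nat.multinomial_spec univ m
  rw [integral_const_mul, hμ.integral_prod_pow, hdeg,
    hcolumn (fun n _ _ => (n.factorial : ℂ)) (by simp), ← hmultinomial, Fintype.card_prod]
  ring

theorem integral_column_isHermitian_pow (hμ : IsUniformOnSphere μ) (a : κ) {M : Matrix ι ι ℂ}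
    (hM : M.IsHermitian) (k : ℕ) :
    ∫ y, (star (fun i => y (i, a)) ⬝ᵥ M *ᵥ fun i => y (i, a)) ^ k ∂μ =
      k.factorial / (Fintype.card ι * Fintype.card κ).ascFactorial k *
        completeSymm (fun i => (hM.eigenvalues i : ℂ)) k := by
  classical
  set W : Matrix ι ι ℂ := hM.eigenvectorUnitary.1
  have hspec : M = W * diagonal (fun i => (hM.eigenvalues i : ℂ)) * Wᴴ := hM.spectral_theorem
  have hquad (g : ι → ℂ) : star g ⬝ᵥ M *ᵥ g =
      star (Wᴴ *ᵥ g) ⬝ᵥ diagonal (fun i => (hM.eigenvalues i : ℂ)) *ᵥ (Wᴴ *ᵥ g) := by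
    rw [← star_dotProduct_conj_mulVec, ← hspec]
  have hW : kroneckerMap (· * ·) Wᴴ (1 : Matrix κ κ ℂ) ∈ unitaryGroup (ι × κ) ℂ :=
    kronecker_mem_unitary (Unitary.star_mem hM.eigenvectorUnitary.2) (one_mem _)
  rw [← hμ.integral_column_diagonal_pow a]
  simpa only [kronecker_one_mulVec_apply, ← hquad] using hμ.integral_mulVec hW fun y =>
    (star (fun i => y (i, a)) ⬝ᵥ diagonal (fun i => (hM.eigenvalues i : ℂ)) *ᵥ
      fun i => y (i, a)) ^ k

theorem integral_sumMinors_mul_quadratic_pow (hμ : IsUniformOnSphere μ) (g : ι → ℂ) (i : ι)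
    (j k : ℕ) :
    ∫ x, sumMinors (reducedDensity x) j * (star g ⬝ᵥ reducedDensity x *ᵥ g) ^ k ∂μ =
      (∫ x, sumMinors (reducedDensity x) j * reducedDensity x i i ^ k ∂μ) *
        (star g ⬝ᵥ g) ^ k := by
  classical
  obtain ⟨V, hV, hVg⟩ := exists_unitary_mulVec_eq_single i g
  set c : ℂ := (‖WithLp.toLp 2 g‖ : ℂ)
  have hV' : Vᴴ ∈ unitaryGroup ι ℂ := Unitary.star_mem hV
  have hnorm : star g ⬝ᵥ g = conj c * c := by
    rw [← star_mulVec_dotProduct_mulVec hV, hVg]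
    simp
  rw [← hμ.integral_mulVec (kronecker_mem_unitary hV' (one_mem _)), ← integral_mul_const]
  refine integral_congr_ae (.of_forall fun x => ?_)
  simp only
  rw [reducedDensity_kronecker_mulVec, sumMinors_conj hV', star_dotProduct_conj_mulVec,
    conjTranspose_conjTranspose, hVg, star_single_dotProduct_mulVec_single, hnorm]
  ring

theorem integral_sumMinors_mul_column_pow (hμ : IsUniformOnSphere μ) (a : κ)
    (x : EuclideanSpace ℂ (ι × κ)) (j k : ℕ) :
    ∫ y, sumMinors (reducedDensity x) j *
        (star (fun i => y (i, a)) ⬝ᵥ reducedDensity x *ᵥ fun i => y (i, a)) ^ k ∂μ =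
      k.factorial / (Fintype.card ι * Fintype.card κ).ascFactorial k *
        ((univ.val.map fun i => (schmidtWeights x i : ℂ)).esymm j *
          completeSymm (fun i => (schmidtWeights x i : ℂ)) k) := by
  rw [integral_const_mul, hμ.integral_column_isHermitian_pow a (isHermitian_reducedDensity x),
    sumMinors_reducedDensity]
  exact mul_left_comm _ _ _

theorem integrable_sumMinors_mul_column_pow (hμ : IsUniformOnSphere μ) (a : κ) (j k : ℕ) :
    Integrable (Function.uncurry fun x y : EuclideanSpace ℂ (ι × κ) =>
      sumMinors (reducedDensity x) j *
        (star (fun i => y (i, a)) ⬝ᵥ reducedDensity x *ᵥ fun i => y (i, a)) ^ k) (μ.prod μ) := by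
  refine hμ.integrable_uncurry_of_continuous hμ ?_
  have := continuous_sumMinors (ι := ι) j
  simp only [Function.uncurry_def, dotProduct, mulVec, Pi.star_apply]
  fun_prop

theorem integrable_esymm_mul_completeSymm (hμ : IsUniformOnSphere μ) (j k : ℕ) :
    Integrable (fun x => (univ.val.map fun i => (schmidtWeights x i : ℂ)).esymm j *
      completeSymm (fun i => (schmidtWeights x i : ℂ)) k) μ := by
  have := hμ.toIsProbabilityMeasure
  obtain ⟨-, a⟩ := hμ.nonempty
  have hleft := (hμ.integrable_sumMinors_mul_column_pow a j k).integral_prod_left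
  simp only [Function.uncurry_apply_pair, hμ.integral_sumMinors_mul_column_pow] at hleft
  exact (integrable_const_mul_iff (hμ.factorial_div_ascFactorial_ne_zero k).isUnit _).1 hleft

theorem integral_esymm_mul_completeSymm (hμ : IsUniformOnSphere μ) (i : ι) (j k : ℕ) :
    ∫ x, (univ.val.map fun i => (schmidtWeights x i : ℂ)).esymm j *
        completeSymm (fun i => (schmidtWeights x i : ℂ)) k ∂μ =
      (Fintype.card ι + k - 1).choose k *
        ∫ x, sumMinors (reducedDensity x) j * reducedDensity x i i ^ k ∂μ := by
  have := hμ.toIsProbabilityMeasure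
  obtain ⟨-, a⟩ := hμ.nonempty
  have hones : completeSymm (fun _ : ι => (1 : ℂ)) k = (Fintype.card ι + k - 1).choose k := by
    simp [completeSymm, card_piAntidiag_univ]
  have hnorm := hμ.integral_column_diagonal_pow a (fun _ => 1) k
  rw [diagonal_one, hones] at hnorm
  simp only [one_mulVec] at hnorm
  have hswap := integral_integral_swap (hμ.integrable_sumMinors_mul_column_pow a j k)
  simp only [hμ.integral_sumMinors_mul_column_pow,
    hμ.integral_sumMinors_mul_quadratic_pow _ i, integral_const_mul, hnorm] at hswap
  refine mul_left_cancel₀ (hμ.factorial_div_ascFactorial_ne_zero k) (hswap.trans ?_)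
  ring

theorem integral_sum_schmidtWeights_pow (hμ : IsUniformOnSphere μ) {n : ℕ} (hn : n ≠ 0) :
    ∫ x, ∑ i, schmidtWeights x i ^ n ∂μ = ∑ p ∈ antidiagonal n,
      (-1 : ℝ) ^ (p.1 + 1) * p.1 * ((Fintype.card ι + p.2 - 1).choose p.2 *
        ((Fintype.card κ).descFactorial p.1 * (Fintype.card κ).ascFactorial p.2 *
          (Fintype.card ι).choose p.1 * (Fintype.card ι * Fintype.card κ + p.1 * p.2) /
          (Fintype.card ι * Fintype.card κ *
            (Fintype.card ι * Fintype.card κ).ascFactorial n))) := by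
  obtain ⟨i, -⟩ := hμ.nonempty
  rw [← Complex.ofReal_inj, ← integral_complex_ofReal]
  push_cast
  simp only [sum_pow_eq_sum_esymm_mul_completeSymm _ hn]
  rw [integral_finsetSum _ fun p _ =>
    (hμ.integrable_esymm_mul_completeSymm p.1 p.2).const_mul _]
  refine sum_congr rfl fun p hp => ?_
  rw [integral_const_mul, hμ.integral_esymm_mul_completeSymm i,
    hμ.integral_sumMinors_mul_diag_pow, mem_antidiagonal.1 hp]

end IsUniformOnSphere

end Averages

/-! ### Moment problems on the unit interval -/

section Moments

open Filter Polynomial Topology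

variable {Ω ι : Type*} [MeasurableSpace Ω] {μ : Measure Ω} [Fintype ι]

theorem exists_polynomial_tendstoUniformlyOn {f : ℝ → ℝ} (hf : ContinuousOn f (Set.Icc 0 1))
    (hf₀ : f 0 = 0) : ∃ q : ℕ → ℝ[X], (∀ m, (q m).coeff 0 = 0) ∧
      TendstoUniformlyOn (fun m x => (q m).eval x) f atTop (Set.Icc 0 1) := by
  have happrox (m : ℕ) := exists_polynomial_near_of_continuousOn 0 1 f hf (1 / ((m : ℝ) + 1))
    Nat.one_div_pos_of_nat
  choose p hp using happrox
  refine ⟨fun m => p m - C ((p m).eval 0), fun m => by simp [coeff_zero_eq_eval_zero], ?_⟩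
  rw [Metric.tendstoUniformlyOn_iff]
  intro ε hε
  filter_upwards [tendsto_one_div_add_atTop_nhds_zero_nat.eventually_lt_const (half_pos hε)]
    with m hm x hx
  have hx' := abs_lt.1 (hp m x hx)
  have h0 := abs_lt.1 (hp m 0 (by simp))
  rw [hf₀] at h0
  rw [Real.dist_eq, eval_sub, eval_C, abs_lt]
  constructor <;> linarith

theorem tendsto_integral_sum_comp_mul {s : Set ℝ} {ξ : Ω → ι → ℝ}
    (hξ : ∀ᵐ ω ∂μ, ∀ i, ξ ω i ∈ s) {w : Ω → ℝ} (hw : Integrable w μ) {q : ℕ → ℝ → ℝ} {f : ℝ → ℝ}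
    {B : ℝ} (hf : ∀ x ∈ s, ‖f x‖ ≤ B) (hq : TendstoUniformlyOn q f atTop s)
    (hmeas : ∀ m, AEStronglyMeasurable (fun ω => (∑ i, q m (ξ ω i)) * w ω) μ) :
    Tendsto (fun m => ∫ ω, (∑ i, q m (ξ ω i)) * w ω ∂μ) atTop
      (𝓝 (∫ ω, (∑ i, f (ξ ω i)) * w ω ∂μ)) := by
  refine tendsto_integral_filter_of_dominated_convergence
    (fun ω => (∑ _ : ι, (1 + B)) * ‖w ω‖) (.of_forall hmeas) ?_ (hw.norm.const_mul _) ?_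
  · filter_upwards [Metric.tendstoUniformlyOn_iff.1 hq 1 one_pos] with m hm
    filter_upwards [hξ] with ω hω
    rw [norm_mul]
    gcongr
    refine norm_sum_le_of_le _ fun i _ => ?_
    calc ‖q m (ξ ω i)‖ ≤ ‖q m (ξ ω i) - f (ξ ω i)‖ + ‖f (ξ ω i)‖ := norm_le_norm_sub_add _ _
      _ ≤ 1 + B := by
        gcongr
        · rw [← dist_eq_norm, dist_comm]
          exact (hm _ (hω i)).le
        · exact hf _ (hω i)
  · filter_upwards [hξ] with ω hω
    exact (tendsto_finsetSum _ fun i _ => hq.tendsto_at (hω i)).mul_const _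

theorem sum_eval_mul_eq_sum_coeff_mul (q : ℝ[X]) (l : ι → ℝ) (c : ℝ) :
    (∑ i, q.eval (l i)) * c =
      ∑ n ∈ range (q.natDegree + 1), q.coeff n * ((∑ i, l i ^ n) * c) := by
  simp only [eval_eq_sum_range, ← mul_assoc, ← sum_mul, mul_sum]
  rw [sum_comm]

theorem integral_sum_comp_mul_eq_of_moments {Ω' ι' : Type*} [MeasurableSpace Ω']
    {ν : Measure Ω'} [Fintype ι'] {ξ : Ω → ι → ℝ} {η : Ω' → ι' → ℝ} {v : Ω → ℝ} {w : Ω' → ℝ}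
    (hξ : ∀ᵐ ω ∂μ, ∀ i, ξ ω i ∈ Set.Icc 0 1) (hη : ∀ᵐ ω ∂ν, ∀ i, η ω i ∈ Set.Icc 0 1)
    (hv : Integrable v μ) (hw : Integrable w ν)
    (hξv : ∀ n, Integrable (fun ω => (∑ i, ξ ω i ^ n) * v ω) μ)
    (hηw : ∀ n, Integrable (fun ω => (∑ i, η ω i ^ n) * w ω) ν)
    (hmoments : ∀ n ≠ 0, ∫ ω, (∑ i, ξ ω i ^ n) * v ω ∂μ = ∫ ω, (∑ i, η ω i ^ n) * w ω ∂ν)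
    {f : ℝ → ℝ} (hf : ContinuousOn f (Set.Icc 0 1)) (hf₀ : f 0 = 0) :
    ∫ ω, (∑ i, f (ξ ω i)) * v ω ∂μ = ∫ ω, (∑ i, f (η ω i)) * w ω ∂ν := by
  obtain ⟨q, hq₀, hq⟩ := exists_polynomial_tendstoUniformlyOn hf hf₀
  obtain ⟨B, hB⟩ := isCompact_Icc.exists_bound_of_continuousOn hf
  have hpoly (m : ℕ) : ∫ ω, (∑ i, (q m).eval (ξ ω i)) * v ω ∂μ =
      ∫ ω, (∑ i, (q m).eval (η ω i)) * w ω ∂ν := by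
    simp only [sum_eval_mul_eq_sum_coeff_mul]
    rw [integral_finsetSum _ fun n _ => (hξv n).const_mul _,
      integral_finsetSum _ fun n _ => (hηw n).const_mul _]
    refine sum_congr rfl fun n _ => ?_
    rcases eq_or_ne n 0 with rfl | hn
    · simp only [hq₀, zero_mul, integral_zero]
    · rw [integral_const_mul, integral_const_mul, hmoments n hn]
  refine tendsto_nhds_unique (tendsto_integral_sum_comp_mul hξ hv hB hq fun m => ?_)
    ((tendsto_congr hpoly).2 (tendsto_integral_sum_comp_mul hη hw hB hq fun m => ?_))
  · simp only [sum_eval_mul_eq_sum_coeff_mul]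
    exact (integrable_finsetSum _ fun n _ => (hξv n).const_mul _).aestronglyMeasurable
  · simp only [sum_eval_mul_eq_sum_coeff_mul]
    exact (integrable_finsetSum _ fun n _ => (hηw n).const_mul _).aestronglyMeasurable

theorem integral_sum_comp_eq_of_moments [IsFiniteMeasure μ] {ξ : Ω → ι → ℝ}
    (hξ : ∀ᵐ ω ∂μ, ∀ i, ξ ω i ∈ Set.Icc 0 1)
    (hpow : ∀ n, Integrable (fun ω => ∑ i, ξ ω i ^ n) μ) {w : ℝ → ℝ} (hw : Continuous w)
    (hmoments : ∀ n ≠ 0, ∫ ω, ∑ i, ξ ω i ^ n ∂μ = ∫ x in (0 : ℝ)..1, x ^ n * w x)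
    {f : ℝ → ℝ} (hf : ContinuousOn f (Set.Icc 0 1)) (hf₀ : f 0 = 0) :
    ∫ ω, ∑ i, f (ξ ω i) ∂μ = ∫ x in (0 : ℝ)..1, f x * w x := by
  have hintegrable {g : ℝ → ℝ} (hg : Continuous g) :
      Integrable g (volume.restrict (Set.Ioc 0 1)) :=
    (intervalIntegrable_iff_integrableOn_Ioc_of_le zero_le_one).1 (hg.intervalIntegrable 0 1)
  have hunit : ∀ᵐ x ∂volume.restrict (Set.Ioc (0 : ℝ) 1), ∀ _ : Unit, x ∈ Set.Icc (0 : ℝ) 1 :=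
    (ae_restrict_mem measurableSet_Ioc).mono fun _ hx _ => Set.Ioc_subset_Icc_self hx
  have := integral_sum_comp_mul_eq_of_moments (η := fun x (_ : Unit) => x) hξ hunit
    (integrable_const 1) (hintegrable hw) (by simpa using hpow)
    (fun n => hintegrable (by fun_prop))
    (by simpa [intervalIntegral.integral_of_le] using hmoments) hf hf₀
  simpa [intervalIntegral.integral_of_le] using this

end Moments

/-! ### Entropy as a derivative of the moments -/

section MomentDerivative

open Polynomial

theorem integral_negMulLog_mul_pow (p : ℕ) :
    ∫ x in (0 : ℝ)..1, Real.negMulLog x * x ^ p = 1 / ((p : ℝ) + 2) ^ 2 := by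
  have := Real.continuous_negMulLog
  have hp : (p : ℝ) + 2 ≠ 0 := by positivity
  rw [intervalIntegral.integral_eq_sub_of_hasDerivAt_of_le zero_le_one
    (f := fun x => Real.negMulLog x * x ^ (p + 1) / (p + 2) + x ^ (p + 2) / (p + 2) ^ 2)
    (by fun_prop) (fun x hx => ?_) (Continuous.intervalIntegrable (by fun_prop) _ _)]
  · simp
  · have hderiv := (((Real.hasDerivAt_negMulLog hx.1.ne').mul
      (hasDerivAt_pow (p + 1) x)).div_const ((p : ℝ) + 2)).add
        ((hasDerivAt_pow (p + 2) x).div_const (((p : ℝ) + 2) ^ 2))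
    refine hderiv.congr_deriv ?_
    rw [Real.negMulLog]
    push_cast
    field_simp
    ring

theorem integral_pow_mul_sum (A : Finset ℕ) (c : ℕ → ℝ) (n : ℕ) :
    ∫ x in (0 : ℝ)..1, x ^ n * ∑ p ∈ A, c p * x ^ p = ∑ p ∈ A, c p / (n + (p + 1)) := by
  simp only [mul_sum, mul_left_comm _ (c _), ← pow_add]
  rw [intervalIntegral.integral_finsetSum fun p _ =>
    Continuous.intervalIntegrable (by fun_prop) _ _]
  refine sum_congr rfl fun p _ => ?_
  rw [intervalIntegral.integral_const_mul, integral_pow]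
  simp [div_eq_mul_inv, add_assoc]

theorem integral_negMulLog_mul_sum (A : Finset ℕ) (c : ℕ → ℝ) :
    ∫ x in (0 : ℝ)..1, Real.negMulLog x * ∑ p ∈ A, c p * x ^ p =
      ∑ p ∈ A, c p / ((p : ℝ) + 2) ^ 2 := by
  have := Real.continuous_negMulLog
  simp only [mul_sum, mul_left_comm _ (c _)]
  rw [intervalIntegral.integral_finsetSum fun p _ =>
    Continuous.intervalIntegrable (by fun_prop) _ _]
  refine sum_congr rfl fun p _ => ?_
  rw [intervalIntegral.integral_const_mul, integral_negMulLog_mul_pow, mul_one_div]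

theorem hasDerivAt_sum_div (A : Finset ℕ) (c : ℕ → ℝ) :
    HasDerivAt (fun z : ℝ => ∑ p ∈ A, c p / (z + (p + 1))) (-∑ p ∈ A, c p / ((p : ℝ) + 2) ^ 2)
      1 := by
  rw [← sum_neg_distrib]
  refine HasDerivAt.fun_sum fun p _ => ?_
  have hinv := (((hasDerivAt_id (1 : ℝ)).add_const ((p : ℝ) + 1)).fun_inv
    (by simp only [id]; positivity)).const_mul (c p)
  refine hinv.congr_deriv ?_
  simp only [id]
  ring

theorem integral_sum_negMulLog_eq_neg_deriv {Ω ι : Type*} [MeasurableSpace Ω] {μ : Measure Ω}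
    [IsFiniteMeasure μ] [Fintype ι] {ξ : Ω → ι → ℝ} (hξ : ∀ᵐ ω ∂μ, ∀ i, ξ ω i ∈ Set.Icc 0 1)
    (hpow : ∀ n, Integrable (fun ω => ∑ i, ξ ω i ^ n) μ) {F : ℝ → ℝ}
    (hmoments : ∀ n : ℕ, n ≠ 0 → ∫ ω, ∑ i, ξ ω i ^ n ∂μ = F n) {A : Finset ℕ} {c : ℕ → ℝ}
    (hF : ∀ z > 0, F z = ∑ p ∈ A, c p / (z + (p + 1))) :
    ∫ ω, ∑ i, Real.negMulLog (ξ ω i) ∂μ = -deriv F 1 := by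
  have hderiv : HasDerivAt F (-∑ p ∈ A, c p / ((p : ℝ) + 2) ^ 2) 1 :=
    (hasDerivAt_sum_div A c).congr_of_eventuallyEq
      ((eventually_gt_nhds one_pos).mono fun z hz => hF z hz)
  rw [hderiv.deriv, neg_neg, ← integral_negMulLog_mul_sum]
  refine integral_sum_comp_eq_of_moments hξ hpow (by fun_prop) (fun n hn => ?_)
    Real.continuous_negMulLog.continuousOn Real.negMulLog_zero
  rw [hmoments n hn, hF n (by positivity), integral_pow_mul_sum]

theorem eval_div_prod_eq_sum_div {A : Finset ℕ} {P : ℝ[X]} (hP : P.degree < #A) {z : ℝ}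
    (hz : ∀ p ∈ A, z + p ≠ 0) :
    P.eval z / ∏ p ∈ A, (z + p) =
      ∑ p ∈ A, Lagrange.nodalWeight A (fun p : ℕ => -(p : ℝ)) p * P.eval (-(p : ℝ)) / (z + p) := by
  have hinj : Set.InjOn (fun p : ℕ => -(p : ℝ)) A := fun p _ q _ h => by simpa using h
  have heval := Lagrange.eval_interpolate_not_at_node (s := A) (v := fun p : ℕ => -(p : ℝ)) (x := z)
    (fun p => P.eval (-(p : ℝ))) fun p hp h => hz p hp (by rw [h, neg_add_cancel])
  rw [← Lagrange.eq_interpolate hinj hP, Lagrange.eval_nodal] at heval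
  simp only [sub_neg_eq_add] at heval
  rw [heval, mul_div_cancel_left₀ _ (prod_ne_zero_iff.2 hz)]
  exact sum_congr rfl fun p _ => by ring

theorem exists_eval_div_prod_eq_sum_div {A : Finset ℕ} {n : ℕ} (hA : A ⊆ range (n + 1))
    {P : ℝ[X]} (hP : P.degree < #A) (hP₀ : 0 ∈ A → P.eval 0 = 0) :
    ∃ c : ℕ → ℝ, ∀ z > 0, P.eval z / ∏ p ∈ A, (z + p) =
      ∑ p ∈ range n, c p / (z + (p + 1)) := by
  set c : ℕ → ℝ := fun p => if p ∈ A then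
    Lagrange.nodalWeight A (fun p : ℕ => -(p : ℝ)) p * P.eval (-(p : ℝ)) else 0 with hc
  have hc₀ : c 0 = 0 := by
    simp only [hc]
    split_ifs with h0
    · simp [hP₀ h0]
    · rfl
  refine ⟨fun p => c (p + 1), fun z hz => ?_⟩
  rw [eval_div_prod_eq_sum_div hP fun p _ => by positivity]
  calc _ = ∑ p ∈ A, c p / (z + p) := sum_congr rfl fun p hp => by simp only [hc, if_pos hp]
    _ = ∑ p ∈ range (n + 1), c p / (z + p) :=
      sum_subset hA fun p _ hp => by simp only [hc, if_neg hp, zero_div]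
    _ = _ := by
      rw [sum_range_succ', hc₀, zero_div, add_zero]
      push_cast
      rfl

end MomentDerivative

/-! ### Moments of the Schmidt weights -/

section SchmidtWeights

variable {ι κ : Type*} [Fintype ι] [DecidableEq ι] [Fintype κ]

theorem sum_schmidtWeights (x : EuclideanSpace ℂ (ι × κ)) :
    (∑ i, schmidtWeights x i : ℂ) = ∑ p, x p * conj (x p) := by
  rw [← trace_reducedDensity]
  exact (isHermitian_reducedDensity x).trace_eq_sum_eigenvalues.symm

theorem schmidtWeights_nonneg (x : EuclideanSpace ℂ (ι × κ)) (i : ι) : 0 ≤ schmidtWeights x i :=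
  (posSemidef_reducedDensity x).eigenvalues_nonneg i

namespace IsUniformOnSphere

variable {μ : Measure (EuclideanSpace ℂ (ι × κ))}

theorem ae_sum_schmidtWeights (hμ : IsUniformOnSphere μ) :
    ∀ᵐ x ∂μ, ∑ i, schmidtWeights x i = 1 := by
  filter_upwards [hμ.ae_sum_mul_conj_eq_one] with x hx
  rw [← sum_schmidtWeights] at hx
  exact_mod_cast hx

theorem ae_schmidtWeights_mem_Icc (hμ : IsUniformOnSphere μ) :
    ∀ᵐ x ∂μ, ∀ i, schmidtWeights x i ∈ Set.Icc 0 1 := by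
  filter_upwards [hμ.ae_sum_schmidtWeights] with x hx i
  exact ⟨schmidtWeights_nonneg x i, hx ▸
    single_le_sum (fun i _ => schmidtWeights_nonneg x i) (mem_univ i)⟩

theorem integrable_sum_schmidtWeights_pow (hμ : IsUniformOnSphere μ) (n : ℕ) :
    Integrable (fun x => ∑ i, schmidtWeights x i ^ n) μ := by
  have := hμ.toIsProbabilityMeasure
  rcases eq_or_ne n 0 with rfl | hn
  · simp
  suffices Integrable (fun x => ∑ i, (schmidtWeights x i : ℂ) ^ n) μ by
    simpa [← Complex.ofReal_pow] using this.re
  simp only [sum_pow_eq_sum_esymm_mul_completeSymm _ hn]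
  exact integrable_finsetSum _ fun p _ => (hμ.integrable_esymm_mul_completeSymm p.1 p.2).const_mul _

end IsUniformOnSphere

end SchmidtWeights

/-! ### The rational moment function -/

section MomentTerm

open Polynomial
open scoped Nat

/-- The factor of `momentTerm d s j` that does not depend on `z`. It collects the constants left
over when the factorials of the `n`-th moment are rewritten as products of linear factors in `n`. -/
noncomputable def momentCoeff (d s j : ℕ) : ℝ :=
  (-1) ^ j * d.choose j * ((d + 1) * s - 1)! / ((s - (j + 1))! * d !)

/-- The contribution of the elementary symmetric function `e_{j+1}` to the moment
`z ↦ E[tr ρ ^ z]` for dimensions `d + 1` and `s`, as a rational function of `z`. -/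
noncomputable def momentTerm (d s j : ℕ) (z : ℝ) : ℝ :=
  momentCoeff d s j * ((∏ i ∈ range d, (z - j + i)) *
    (((d + 1) * s : ℕ) + (j + 1) * (z - (j + 1)))) /
      ∏ p ∈ Ico (s - (j + 1)) ((d + 1) * s), (z + p)

theorem factorial_mul_prod_Ico_add {n m N : ℕ} (hn : n ≠ 0) (hm : m ≤ N) :
    ((n + m - 1)! : ℝ) * ∏ p ∈ Ico m N, ((n : ℝ) + p) = (n + N - 1)! := by
  have hprod := prod_range_mul_prod_Ico (fun p => n + p) hm
  rw [← Nat.ascFactorial_eq_prod_range, ← Nat.ascFactorial_eq_prod_range] at hprod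
  have hpos := Nat.pos_of_ne_zero hn
  rw [← Nat.factorial_mul_ascFactorial' n m hpos, ← Nat.factorial_mul_ascFactorial' n N hpos,
    ← hprod]
  push_cast
  ring

theorem choose_mul_factorial_eq_prod (d k : ℕ) :
    ((d + k).choose k * d ! : ℝ) = ∏ i ∈ range d, ((k : ℝ) + 1 + i) := by
  have h := Nat.ascFactorial_eq_factorial_mul_choose k d
  rw [Nat.ascFactorial_eq_prod_range, ← Nat.choose_symm_add, add_comm k d, mul_comm] at h
  exact_mod_cast h.symm

theorem momentTerm_natCast {d s j : ℕ} (hj : j < s) (k : ℕ) :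
    momentTerm d s j (j + 1 + k : ℕ) =
      (-1) ^ j * d.choose j * (d + k).choose k * ((d + 1) * s - 1)! * (s + k - 1)! *
        (((d + 1) * s : ℕ) + (j + 1) * k) / ((s - (j + 1))! * ((d + 1) * s + j + k)!) := by
  have hle : s ≤ (d + 1) * s := Nat.le_mul_of_pos_left _ d.succ_pos
  have hdenom := factorial_mul_prod_Ico_add (n := j + 1 + k) (m := s - (j + 1))
    (N := (d + 1) * s) (by omega) (by omega)
  rw [show j + 1 + k + (s - (j + 1)) - 1 = s + k - 1 by omega,
    show j + 1 + k + (d + 1) * s - 1 = (d + 1) * s + j + k by omega] at hdenom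
  have hfactor (i : ℕ) : ((j + 1 + k : ℕ) : ℝ) - j + i = k + 1 + i := by
    push_cast
    ring
  have hshift : ((j + 1 + k : ℕ) : ℝ) - (j + 1) = k := by
    push_cast
    ring
  simp only [momentTerm, momentCoeff, hfactor, hshift, ← choose_mul_factorial_eq_prod, ← hdenom]
  field_simp

theorem descFactorial_mul_ascFactorial_mul_factorial {s j : ℕ} (hj : j < s) (k : ℕ) :
    s.descFactorial (j + 1) * s.ascFactorial k * (s - (j + 1))! = s * (s + k - 1)! := by
  rw [← Nat.factorial_mul_ascFactorial' s k (by omega), ← mul_assoc,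
    Nat.mul_factorial_pred (by omega), ← Nat.factorial_mul_descFactorial hj]
  ring

theorem moment_summand_eq_momentTerm {d s j : ℕ} (hj : j < s) (k : ℕ) :
    (-1 : ℝ) ^ (j + 1 + 1) * (j + 1 : ℕ) * ((d + 1 + k - 1).choose k *
      (s.descFactorial (j + 1) * s.ascFactorial k * (d + 1).choose (j + 1) *
        ((d + 1 : ℕ) * s + (j + 1 : ℕ) * k) /
          ((d + 1 : ℕ) * s * ((d + 1) * s).ascFactorial (j + 1 + k)))) =
      momentTerm d s j (j + 1 + k : ℕ) := by
  have hpos : 0 < (d + 1) * s := Nat.mul_pos d.succ_pos (by omega)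
  have hs : (s : ℝ) ≠ 0 := by exact_mod_cast (by omega : s ≠ 0)
  have hchoose : ((d + 1).choose (j + 1) * (j + 1) : ℝ) = (d + 1) * d.choose j := by
    exact_mod_cast (Nat.add_one_mul_choose_eq d j).symm
  have hfactorials : (s.descFactorial (j + 1) * s.ascFactorial k * (s - (j + 1))! : ℝ) =
      s * (s + k - 1)! := by
    exact_mod_cast descFactorial_mul_ascFactorial_mul_factorial hj k
  have hdenom := Nat.factorial_mul_ascFactorial' ((d + 1) * s) (j + 1 + k) hpos
  rw [show (d + 1) * s + (j + 1 + k) - 1 = (d + 1) * s + j + k by omega] at hdenom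
  have hasc : (((d + 1) * s).ascFactorial (j + 1 + k) : ℝ) ≠ 0 := by
    exact_mod_cast right_ne_zero_of_mul (hdenom ▸ Nat.factorial_ne_zero _)
  rw [momentTerm_natCast hj, ← hdenom, show d + 1 + k - 1 = d + k by omega]
  push_cast
  field_simp
  linear_combination ((-1) ^ j * (d + k).choose k : ℝ) *
    ((s.descFactorial (j + 1) * s.ascFactorial k * (s - (j + 1))!) * hchoose +
      ((d + 1) * d.choose j) * hfactorials)

theorem momentTerm_natCast_eq_zero {d j n : ℕ} (s : ℕ) (hj : j ≤ d) (hn : n ≠ 0) (hnj : n ≤ j) :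
    momentTerm d s j n = 0 := by
  have hzero : ∏ i ∈ range d, ((n : ℝ) - j + i) = 0 :=
    prod_eq_zero (i := j - n) (by simp; omega) (by rw [Nat.cast_sub hnj]; ring)
  simp [momentTerm, hzero]

theorem exists_momentTerm_eq_sum_div {d s j : ℕ} (hd : d ≠ 0) (hds : d < s) (hj : j ≤ d) :
    ∃ c : ℕ → ℝ, ∀ z > 0, momentTerm d s j z =
      ∑ p ∈ range ((d + 1) * s), c p / (z + (p + 1)) := by
  set P : ℝ[X] := C (momentCoeff d s j) * ((∏ i ∈ range d, (X + C ((i : ℝ) - j))) *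
    (C ((j : ℝ) + 1) * X + C (((d + 1) * s : ℕ) - (j + 1) * (j + 1) : ℝ))) with hP
  have heval (z : ℝ) : P.eval z = momentCoeff d s j * ((∏ i ∈ range d, (z - j + i)) *
      (((d + 1) * s : ℕ) + (j + 1) * (z - (j + 1)))) := by
    simp only [hP, eval_mul, eval_C, eval_prod, eval_add, eval_X, add_sub_assoc',
      sub_add_eq_add_sub]
    ring
  have hdegree : P.natDegree ≤ d + 1 := by
    refine (natDegree_C_mul_le _ _).trans (natDegree_mul_le.trans (add_le_add ?_ ?_))
    · exact (natDegree_prod_le _ _).trans (by simp only [natDegree_X_add_C]; simp)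
    · exact natDegree_linear_le
  have hroots : d + 1 < (d + 1) * s - (s - (j + 1)) := by
    have : d * 2 ≤ d * s := Nat.mul_le_mul_left d (by omega)
    rw [add_one_mul]
    omega
  simp only [momentTerm, ← heval]
  refine exists_eval_div_prod_eq_sum_div (fun p hp => ?_) ?_ fun h0 => ?_
  · exact mem_range.2 ((mem_Ico.1 hp).2.trans (Nat.lt_succ_self _))
  · rw [Nat.card_Ico]
    exact degree_le_natDegree.trans_lt (by exact_mod_cast hdegree.trans_lt hroots)
  · obtain rfl : j = d := by rw [mem_Ico] at h0; omega
    obtain rfl : s = j + 1 := by rw [mem_Ico] at h0; omega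
    rw [heval]
    push_cast
    ring

theorem prod_one_add_ne_zero (A : Finset ℕ) : ∏ p ∈ A, ((1 : ℝ) + p) ≠ 0 :=
  prod_ne_zero_iff.2 fun _ _ => by positivity

theorem logDeriv_prod_add (A : Finset ℕ) :
    logDeriv (fun z : ℝ => ∏ p ∈ A, (z + p)) 1 = ∑ p ∈ A, 1 / ((1 : ℝ) + p) := by
  rw [logDeriv_prod (f := fun (p : ℕ) (z : ℝ) => z + p) (fun p _ => by positivity)
    (fun p _ => by fun_prop)]
  exact sum_congr rfl fun p _ => by simp [logDeriv_apply]

theorem factorial_mul_prod_Ico_one_add {m N : ℕ} (hN : N ≠ 0) (hm : m ≤ N) :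
    (m ! : ℝ) * ∏ p ∈ Ico m N, ((1 : ℝ) + p) = N * (N - 1)! := by
  have h := factorial_mul_prod_Ico_add one_ne_zero hm
  rw [Nat.add_sub_cancel_left, Nat.add_sub_cancel_left, ← Nat.mul_factorial_pred hN] at h
  exact_mod_cast h

theorem differentiableAt_momentTerm (d s j : ℕ) : DifferentiableAt ℝ (momentTerm d s j) 1 :=
  DifferentiableAt.div (by fun_prop) (by fun_prop) (prod_one_add_ne_zero _)

theorem momentTerm_zero_one {d s : ℕ} (hs : s ≠ 0) : momentTerm d s 0 1 = 1 := by
  have hdenom := factorial_mul_prod_Ico_one_add (m := s - 1) (N := (d + 1) * s)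
    (mul_ne_zero d.succ_ne_zero hs)
    ((Nat.sub_le s 1).trans (Nat.le_mul_of_pos_left _ d.succ_pos))
  have hprod : ∏ i ∈ range d, ((1 : ℝ) + i) = d ! := by
    rw [← prod_range_add_one_eq_factorial]
    push_cast
    exact prod_congr rfl fun i _ => add_comm _ _
  have hne := prod_one_add_ne_zero (Ico (s - 1) ((d + 1) * s))
  simp only [momentTerm, momentCoeff, Nat.cast_zero, sub_zero, zero_add, one_mul, sub_self,
    mul_zero, add_zero, hprod, pow_zero, Nat.choose_zero_right, Nat.cast_one]
  field_simp
  linear_combination -hdenom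

theorem logDeriv_momentTerm_zero {d s : ℕ} (hs : s ≠ 0) :
    logDeriv (momentTerm d s 0) 1 = ∑ i ∈ range d, 1 / ((1 : ℝ) + i) + 1 / ((d + 1) * s : ℕ) -
      ∑ p ∈ Ico (s - 1) ((d + 1) * s), 1 / ((1 : ℝ) + p) := by
  set linear : ℝ → ℝ := fun z => ((d + 1) * s : ℕ) + (z - 1) with hlinear
  set numerator : ℝ → ℝ := fun z => (∏ i ∈ range d, (z + i)) * linear z with hnumerator
  have hlinear_ne : linear 1 ≠ 0 := by
    simpa [hlinear] using ⟨Nat.cast_add_one_ne_zero d, hs⟩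
  have hnumerator_ne : numerator 1 ≠ 0 := mul_ne_zero (prod_one_add_ne_zero _) hlinear_ne
  have hlogDeriv_linear : logDeriv linear 1 = 1 / ((d + 1) * s : ℕ) := by
    simp [hlinear, logDeriv_apply]
  have hcoeff : momentCoeff d s 0 ≠ 0 := fun h => by
    simpa [momentTerm, h] using momentTerm_zero_one (d := d) hs
  have hterm : momentTerm d s 0 = fun z : ℝ => momentCoeff d s 0 * numerator z /
      ∏ p ∈ Ico (s - 1) ((d + 1) * s), (z + p) := by
    ext z
    simp [momentTerm, hnumerator, hlinear]
  rw [hterm, logDeriv_div (f := fun z => momentCoeff d s 0 * numerator z) 1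
    (mul_ne_zero hcoeff hnumerator_ne) (prod_one_add_ne_zero _) (by fun_prop) (by fun_prop),
    logDeriv_const_mul _ _ hcoeff, hnumerator, logDeriv_mul 1 (prod_one_add_ne_zero _) hlinear_ne
    (by fun_prop) (by fun_prop), logDeriv_prod_add, logDeriv_prod_add, hlogDeriv_linear]

theorem hasDerivAt_momentTerm_zero {d s : ℕ} (hs : s ≠ 0) :
    HasDerivAt (momentTerm d s 0) (∑ i ∈ range d, 1 / ((1 : ℝ) + i) + 1 / ((d + 1) * s : ℕ) -
      ∑ p ∈ Ico (s - 1) ((d + 1) * s), 1 / ((1 : ℝ) + p)) 1 := by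
  have hlog := logDeriv_momentTerm_zero (d := d) hs
  rw [logDeriv_apply, momentTerm_zero_one hs, div_one] at hlog
  exact hlog ▸ (differentiableAt_momentTerm d s 0).hasDerivAt

theorem prod_erase_natCast_sub (m t : ℕ) :
    ∏ i ∈ (range (m + 1 + t)).erase m, ((i : ℝ) - m) = (-1) ^ m * m ! * t ! := by
  have hsplit : (range (m + 1 + t)).erase m = range m ∪ Ico (m + 1) (m + 1 + t) := by
    ext i
    simp only [mem_erase, mem_range, mem_union, mem_Ico]
    omega
  have hdisjoint : Disjoint (range m) (Ico (m + 1) (m + 1 + t)) := by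
    rw [disjoint_left]
    intro i
    simp only [mem_range, mem_Ico]
    omega
  have hbelow : ∏ i ∈ range m, ((i : ℝ) - m) = (-1) ^ m * m ! := by
    rw [← prod_range_add_one_eq_factorial, ← prod_range_reflect, Nat.cast_prod,
      ← card_range m, ← prod_const, card_range, ← prod_mul_distrib]
    refine prod_congr rfl fun i hi => ?_
    rw [mem_range] at hi
    rw [Nat.sub_sub, Nat.cast_sub (by omega)]
    push_cast
    ring
  have habove : ∏ i ∈ Ico (m + 1) (m + 1 + t), ((i : ℝ) - m) = t ! := by
    rw [prod_Ico_eq_prod_range, Nat.add_sub_cancel_left, ← prod_range_add_one_eq_factorial,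
      Nat.cast_prod]
    refine prod_congr rfl fun i _ => ?_
    push_cast
    ring
  rw [hsplit, prod_union hdisjoint, hbelow, habove]

theorem momentCoeff_succ_mul_div_prod {s m : ℕ} (hm : m + 1 < s) (t : ℕ) :
    momentCoeff (m + 1 + t) s (m + 1) * ((-1) ^ m * m ! * t !) /
      ∏ p ∈ Ico (s - (m + 1 + 1)) ((m + 1 + t + 1) * s), ((1 : ℝ) + p) =
      -1 / ((m + 1) * ((m + 1 + t + 1) * s : ℕ)) := by
  have hN : (m + 1 + t + 1) * s ≠ 0 := mul_ne_zero (Nat.succ_ne_zero _) (by omega)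
  have : (((m + 1 + t + 1) * s : ℕ) : ℝ) ≠ 0 := by exact_mod_cast hN
  have hdenom := factorial_mul_prod_Ico_one_add (m := s - (m + 1 + 1)) hN
    ((Nat.sub_le s _).trans (Nat.le_mul_of_pos_left _ (Nat.succ_pos _)))
  have hchoose : ((m + 1 + t).choose (m + 1) * ((m + 1) * m !) * t ! : ℝ) = (m + 1 + t)! := by
    have := Nat.choose_mul_factorial_mul_factorial (Nat.le_add_right (m + 1) t)
    rw [Nat.add_sub_cancel_left, Nat.factorial_succ] at this
    exact_mod_cast this
  have hsign : ((-1 : ℝ) ^ m) ^ 2 = 1 := by rw [← pow_mul, mul_comm, pow_mul]; simp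
  have := prod_one_add_ne_zero (Ico (s - (m + 1 + 1)) ((m + 1 + t + 1) * s))
  rw [momentCoeff, div_mul_eq_mul_div, div_div, div_eq_div_iff (by positivity) (by positivity)]
  linear_combination
    (-((m + 1 + t).choose (m + 1) * ((m + 1) * m !) * t !) : ℝ) *
        (((m + 1 + t + 1) * s : ℕ) * ((m + 1 + t + 1) * s - 1)!) * hsign -
      (((m + 1 + t + 1) * s : ℕ) * ((m + 1 + t + 1) * s - 1)! : ℝ) * hchoose +
      (m + 1 + t)! * hdenom

theorem hasDerivAt_sub_mul {f : ℝ → ℝ} {a : ℝ} (hf : DifferentiableAt ℝ f a) :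
    HasDerivAt (fun z => (z - a) * f z) (f a) a := by
  simpa using ((hasDerivAt_id a).sub_const a).fun_mul hf.hasDerivAt

theorem hasDerivAt_momentTerm_succ {d s m : ℕ} (hm : m < d) (hs : m + 1 < s) :
    HasDerivAt (momentTerm d s (m + 1))
      (((m : ℝ) + 2) / ((d + 1) * s : ℕ) - 1 / ((m : ℝ) + 1)) 1 := by
  obtain ⟨t, rfl⟩ := Nat.exists_eq_add_of_le (show m + 1 ≤ d from hm)
  have hs₀ : (s : ℝ) ≠ 0 := by exact_mod_cast (by omega : s ≠ 0)
  have hfactor : momentTerm (m + 1 + t) s (m + 1) = fun z : ℝ => (z - 1) *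
      (momentCoeff (m + 1 + t) s (m + 1) *
        ((∏ i ∈ (range (m + 1 + t)).erase m, (z - (m + 1 : ℕ) + i)) *
          (((m + 1 + t + 1) * s : ℕ) + ((m + 1 : ℕ) + 1) * (z - ((m + 1 : ℕ) + 1)))) /
            ∏ p ∈ Ico (s - (m + 1 + 1)) ((m + 1 + t + 1) * s), (z + p)) := by
    ext z
    rw [momentTerm, ← mul_prod_erase (range (m + 1 + t)) _ (mem_range.2 hm)]
    push_cast
    ring
  have hprod : ∏ i ∈ (range (m + 1 + t)).erase m, ((1 : ℝ) - (m + 1 : ℕ) + i) =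
      (-1) ^ m * m ! * t ! := by
    rw [← prod_erase_natCast_sub]
    refine prod_congr rfl fun i _ => ?_
    push_cast
    ring
  rw [hfactor]
  refine (hasDerivAt_sub_mul (DifferentiableAt.fun_div (by fun_prop) (by fun_prop)
    (prod_one_add_ne_zero _))).congr_deriv ?_
  rw [hprod, ← mul_assoc, mul_div_right_comm, momentCoeff_succ_mul_div_prod hs]
  push_cast
  field_simp
  ring

end MomentTerm

section PageEntropy

theorem exists_sum_momentTerm_eq_sum_div {d s : ℕ} (hd : d ≠ 0) (hds : d < s) :
    ∃ c : ℕ → ℝ, ∀ z > 0, ∑ j ∈ range (d + 1), momentTerm d s j z =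
      ∑ p ∈ range ((d + 1) * s), c p / (z + (p + 1)) := by
  choose c hc using fun j : Fin (d + 1) => exists_momentTerm_eq_sum_div hd hds j.is_le
  refine ⟨fun p => ∑ j, c j p, fun z hz => ?_⟩
  simp only [sum_range (n := d + 1), hc _ z hz, sum_div]
  exact sum_comm

theorem sum_natCast_add_two (d : ℕ) : ∑ m ∈ range d, ((m : ℝ) + 2) = d * (d + 3) / 2 := by
  induction d with
  | zero => simp
  | succ d ih =>
    rw [sum_range_succ, ih]
    push_cast
    ring

theorem sum_Ico_pred_one_div_one_add {s N : ℕ} (hs : s ≠ 0) (hsN : s ≤ N) :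
    ∑ p ∈ Ico (s - 1) N, 1 / ((1 : ℝ) + p) = 1 / s + ∑ i ∈ Icc (s + 1) N, (1 : ℝ) / i := by
  have hshift := sum_Ico_add' (fun i : ℕ => (1 : ℝ) / i) (s - 1) N 1
  rw [Nat.sub_add_cancel (Nat.one_le_iff_ne_zero.2 hs),
    sum_eq_sum_Ico_succ_bot (Nat.lt_add_one_of_le hsN), Ico_add_one_right_eq_Icc] at hshift
  simpa [add_comm] using hshift

theorem hasDerivAt_sum_momentTerm {d s : ℕ} (hds : d < s) :
    HasDerivAt (fun z => ∑ j ∈ range (d + 1), momentTerm d s j z)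
      (d / (2 * s) - ∑ i ∈ Icc (s + 1) ((d + 1) * s), (1 : ℝ) / i) 1 := by
  have hs : s ≠ 0 := by omega
  have hs' : (s : ℝ) ≠ 0 := by exact_mod_cast hs
  simp only [sum_range_succ' _ d]
  refine ((HasDerivAt.fun_sum fun m hm => hasDerivAt_momentTerm_succ (mem_range.1 hm)
    (by rw [mem_range] at hm; omega)).add (hasDerivAt_momentTerm_zero hs)).congr_deriv ?_
  rw [sum_sub_distrib, ← sum_div, sum_natCast_add_two,
    sum_Ico_pred_one_div_one_add hs (Nat.le_mul_of_pos_left _ d.succ_pos)]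
  simp only [add_comm (1 : ℝ)]
  push_cast
  field_simp
  ring

namespace IsUniformOnSphere

variable {ι κ : Type*} [Fintype ι] [DecidableEq ι] [Fintype κ]
  {μ : Measure (EuclideanSpace ℂ (ι × κ))}

theorem integral_sum_schmidtWeights_pow_eq_sum_momentTerm (hμ : IsUniformOnSphere μ) {d : ℕ}
    (hι : Fintype.card ι = d + 1) (hκ : d < Fintype.card κ) {n : ℕ} (hn : n ≠ 0) :
    ∫ x, ∑ i, schmidtWeights x i ^ n ∂μ =
      ∑ j ∈ range (d + 1), momentTerm d (Fintype.card κ) j n := by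
  rw [hμ.integral_sum_schmidtWeights_pow hn, hι, Nat.sum_antidiagonal_eq_sum_range_succ_mk,
    sum_range_succ']
  simp only [Nat.cast_zero, mul_zero, zero_mul, add_zero]
  refine sum_congr_of_eq_on_inter (fun j _ hj => ?_) (fun j hj hjn => ?_) fun j hjn hj => ?_
  · rw [mem_range, not_lt] at hj
    simp [Nat.choose_eq_zero_of_lt (show d + 1 < j + 1 by omega)]
  · rw [mem_range] at hj hjn
    exact momentTerm_natCast_eq_zero _ (by omega) hn (by omega)
  · rw [mem_range] at hj hjn
    obtain ⟨k, rfl⟩ := Nat.exists_eq_add_of_le (show j + 1 ≤ n from hjn)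
    rw [Nat.add_sub_cancel_left]
    exact moment_summand_eq_momentTerm (by omega) k

theorem integral_sum_negMulLog_schmidtWeights (hμ : IsUniformOnSphere μ) {d : ℕ} (hd : d ≠ 0)
    (hι : Fintype.card ι = d + 1) (hκ : d < Fintype.card κ) :
    ∫ x, ∑ i, Real.negMulLog (schmidtWeights x i) ∂μ =
      ∑ i ∈ Icc (Fintype.card κ + 1) ((d + 1) * Fintype.card κ), (1 : ℝ) / i -
        d / (2 * Fintype.card κ) := by
  have := hμ.toIsProbabilityMeasure
  obtain ⟨c, hc⟩ := exists_sum_momentTerm_eq_sum_div hd hκ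
  rw [integral_sum_negMulLog_eq_neg_deriv
    (F := fun z => ∑ j ∈ range (d + 1), momentTerm d (Fintype.card κ) j z)
    hμ.ae_schmidtWeights_mem_Icc hμ.integrable_sum_schmidtWeights_pow
    (fun n hn => hμ.integral_sum_schmidtWeights_pow_eq_sum_momentTerm hι hκ hn) hc,
    (hasDerivAt_sum_momentTerm hκ).deriv, neg_sub]

theorem integral_sum_negMulLog_schmidtWeights_of_unique [Unique ι] (hμ : IsUniformOnSphere μ) :
    ∫ x, ∑ i, Real.negMulLog (schmidtWeights x i) ∂μ = 0 := by
  refine integral_eq_zero_of_ae ?_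
  filter_upwards [hμ.ae_sum_schmidtWeights] with x hx
  rw [Fintype.sum_unique] at hx ⊢
  rw [hx, Real.negMulLog_one, Pi.zero_apply]

end IsUniformOnSphere

end PageEntropy

end Page

/-- **Page's formula for the average entanglement entropy.**  Let `1 ≤ d ≤ s`, let `x` be a
uniform random pure state on `ℂ^d ⊗ ℂ^s` (i.e. `x` has the unitarily invariant probability
distribution on the unit sphere of `ℂ^{ds}`), and let `ρ` be the partial trace over `ℂ^s` of
`xx*`, namely `ρ = A Aᴴ` where `A i a = x (i,a)`.  Then the expected von Neumann entropy of
`ρ` is `E[H(ρ)] = Σ_{i=s+1}^{ds} 1/i − (d−1)/(2s)`, where `H(ρ) = −Σ λ_i log λ_i` is computed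
from the eigenvalues of the Hermitian matrix `ρ` (with `0·log 0 = 0`). -/
theorem page_average_entropy
    (d s : ℕ) (hd : 1 ≤ d) (hds : d ≤ s)
    (μ : Measure (EuclideanSpace ℂ (Fin d × Fin s))) [IsProbabilityMeasure μ]
    (hsphere : μ (Metric.sphere 0 1) = 1)
    (hinv : ∀ U : EuclideanSpace ℂ (Fin d × Fin s) ≃ₗᵢ[ℂ]
        EuclideanSpace ℂ (Fin d × Fin s),
      Measure.map (fun x => U x) μ = μ) :
    ∫ x, ∑ i, Real.negMulLog
        ((Matrix.isHermitian_mul_conjTranspose_self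
            (Matrix.of fun (i : Fin d) (a : Fin s) => x (i, a))).eigenvalues i) ∂μ =
      (∑ i ∈ Finset.Icc (s + 1) (d * s), (1 : ℝ) / i) - ((d : ℝ) - 1) / (2 * s) := by
  have hμ : Page.IsUniformOnSphere μ := ⟨inferInstance, hsphere, hinv⟩
  obtain ⟨d, rfl⟩ := Nat.exists_eq_succ_of_ne_zero (Nat.one_le_iff_ne_zero.1 hd)
  rcases eq_or_ne d 0 with rfl | hd₀
  · refine hμ.integral_sum_negMulLog_schmidtWeights_of_unique.trans ?_
    simp
  · refine (hμ.integral_sum_negMulLog_schmidtWeights hd₀ (by simp) (by simpa using hds)).trans ?_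
    simp
end

section
/- Let n, k ≥ 1 with nk ≥ 2, and identify M_{nk}(ℂ) with matrices indexed by pairs in {1,…,n}×{1,…,k}. (i) Every Hermitian matrix ρ ∈ M_{nk}(ℂ) with Tr(ρ) = 1 and Frobenius norm distance ‖ρ − I/(nk)‖₂ ≤ (nk(nk−1))^{−1/2} is a separable density matrix (in particular it is positive semidefinite). (ii) This radius is optimal: for every r > (nk(nk−1))^{−1/2} there exists a Hermitian matrix σ with Tr(σ) = 1 and ‖σ − I/(nk)‖₂ ≤ r that is not positive semidefinite, so the ball of radius (nk(nk−1))^{−1/2} centered at the maximally mixed state I/(nk) is the largest Euclidean ball contained in the set of density matrices. -/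
open scoped Kronecker ComplexOrder

/-- A density matrix: a positive-semidefinite matrix of trace `1`. -/
def IsDensityMatrix {m : Type*} [Fintype m] (ρ : Matrix m m ℂ) : Prop :=
  ρ.PosSemidef ∧ ρ.trace = 1

/-- A density matrix on `ℂ^n ⊗ ℂ^k` is separable when it is a convex combination of Kronecker
products of density matrices. -/
def IsSeparableState {n k : ℕ}
    (ρ : Matrix (Fin n × Fin k) (Fin n × Fin k) ℂ) : Prop :=
  ∃ (m : ℕ) (p : Fin m → ℝ) (σ : Fin m → Matrix (Fin n) (Fin n) ℂ)
    (τ : Fin m → Matrix (Fin k) (Fin k) ℂ),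
    (∀ i, 0 ≤ p i) ∧ ∑ i, p i = 1 ∧
    (∀ i, IsDensityMatrix (σ i)) ∧ (∀ i, IsDensityMatrix (τ i)) ∧
    ρ = ∑ i, (p i : ℂ) • (σ i ⊗ₖ τ i)

/-- The Frobenius (Hilbert–Schmidt) norm `‖A‖₂ = √(Σ |A_{ij}|²)`. -/
noncomputable def frobNorm {m l : Type*} [Fintype m] [Fintype l]
    (A : Matrix m l ℂ) : ℝ :=
  Real.sqrt (∑ i, ∑ j, ‖A i j‖ ^ 2)

/-!
Call a Hermitian `W` on `ℂ^m ⊗ ℂ^l` block-positive if `⟨x ⊗ y, W (x ⊗ y)⟩ ≥ 0` for all `x`, `y`, and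
write `‖·‖` for the Frobenius norm. The heart of the argument is that `‖W‖ ≤ Tr W` for such `W`.
For fixed `x` the matrix `M = (⟨x| ⊗ 1) W (|x⟩ ⊗ 1)` is positive semidefinite, so `‖M‖² ≤ (Tr M)²`.
Averaging this quartic inequality in `x` over vectors of random phases, and adding its instances at
the basis vectors, gives `‖W‖² + ‖Tr₁ W‖² ≤ (Tr W)² + ‖Tr₂ W‖²`; adding the same inequality with the
two factors exchanged cancels the partial traces.

If now `‖M - 1‖ ≤ 1`, then `Tr (W M) = Tr W + Tr (W (M - 1)) ≥ Tr W - ‖W‖ ≥ 0` for every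
block-positive `W`, so no hyperplane separates `M` from the cone of separable matrices. A trace-one
`ρ` in the ball satisfies `‖(N - 1) ρ - 1‖ ≤ 1`, where `N = ml`, by Pythagoras.
Moving from `1 / N` away from a rank-one projection leaves the positive cone exactly at the
critical radius.
-/

namespace GurvitsBarnum

open Matrix
open scoped BigOperators ComplexConjugate Matrix.Norms.Frobenius

section FrobeniusNorm

variable {m l : Type*} [Fintype m] [Fintype l]

lemma frobenius_norm_sq (A : Matrix m l ℂ) : ‖A‖ ^ 2 = ∑ i, ∑ j, ‖A i j‖ ^ 2 := by
  simp only [frobenius_norm_def, ← Real.sqrt_eq_rpow, Real.rpow_two]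
  exact Real.sq_sqrt (by positivity)

lemma frobNorm_eq_norm (A : Matrix m l ℂ) : frobNorm A = ‖A‖ := by
  rw [frobNorm, ← frobenius_norm_sq, Real.sqrt_sq (norm_nonneg A)]

lemma frobenius_norm_submatrix_equiv {m' l' : Type*} [Fintype m'] [Fintype l'] (A : Matrix m l ℂ)
    (e : m' ≃ m) (e' : l' ≃ l) : ‖A.submatrix e e'‖ = ‖A‖ := by
  rw [← sq_eq_sq₀ (norm_nonneg _) (norm_nonneg _), frobenius_norm_sq, frobenius_norm_sq,
    ← e.sum_comp]
  exact Fintype.sum_congr _ _ fun i ↦ e'.sum_comp fun j ↦ ‖A (e i) j‖ ^ 2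

lemma trace_conjTranspose_mul_self (A : Matrix m l ℂ) : (Aᴴ * A).trace = ((‖A‖ ^ 2 : ℝ) : ℂ) := by
  rw [frobenius_norm_sq, Finset.sum_comm]
  simp [trace, mul_apply, Complex.conj_mul']

lemma norm_trace_mul_le (A B : Matrix m m ℂ) : ‖(A * B).trace‖ ≤ ‖A‖ * ‖B‖ := by
  calc ‖(A * B).trace‖ ≤ ∑ p : m × m, ‖A p.1 p.2‖ * ‖B p.2 p.1‖ := by
        rw [Fintype.sum_prod_type]
        simp only [trace, diag_apply, mul_apply]
        refine (norm_sum_le _ _).trans (Finset.sum_le_sum fun i _ ↦ ?_)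
        exact (norm_sum_le _ _).trans_eq (by simp only [norm_mul])
    _ ≤ √(∑ p : m × m, ‖A p.1 p.2‖ ^ 2) * √(∑ p : m × m, ‖B p.2 p.1‖ ^ 2) :=
        Real.sum_mul_le_sqrt_mul_sqrt _ _ _
    _ = ‖A‖ * ‖B‖ := by
        simp only [Fintype.sum_prod_type]
        rw [Finset.sum_comm (f := fun i j ↦ ‖B j i‖ ^ 2), ← frobenius_norm_sq, ← frobenius_norm_sq,
          Real.sqrt_sq (norm_nonneg A), Real.sqrt_sq (norm_nonneg B)]

lemma norm_le_re_trace_of_posSemidef {A : Matrix m m ℂ} (hA : A.PosSemidef) :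
    ‖A‖ ≤ A.trace.re := by
  classical
  obtain ⟨B, rfl⟩ : ∃ B, A = Bᴴ * B := by
    open scoped MatrixOrder Matrix.Norms.L2Operator in
    exact CStarAlgebra.nonneg_iff_eq_star_mul_self.mp hA.nonneg
  calc ‖Bᴴ * B‖ ≤ ‖Bᴴ‖ * ‖B‖ := frobenius_norm_mul _ _
    _ = ‖B‖ ^ 2 := by rw [frobenius_norm_conjTranspose, sq]
    _ = (Bᴴ * B).trace.re := by rw [trace_conjTranspose_mul_self, Complex.ofReal_re]

lemma norm_add_smul_one_sq [DecidableEq m] {A : Matrix m m ℂ} (hA : A.trace = 0) (c : ℂ) :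
    ‖A + c • (1 : Matrix m m ℂ)‖ ^ 2 = ‖A‖ ^ 2 + ‖c‖ ^ 2 * Fintype.card m := by
  have hA' : Aᴴ.trace = 0 := by rw [trace_conjTranspose, hA, star_zero]
  apply Complex.ofReal_injective
  rw [← trace_conjTranspose_mul_self, Complex.ofReal_add, ← trace_conjTranspose_mul_self]
  simp [add_mul, mul_add, hA, hA', ← mul_assoc, Complex.mul_conj']

end FrobeniusNorm

section RandomPhases

lemma expect_norm_sq_sum_addChar {G κ : Type*} [AddCommGroup G] [Fintype G] [Fintype κ]
    [DecidableEq (AddChar G ℂ)] (χ : κ → AddChar G ℂ) (a : κ → ℂ) :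
    ((𝔼 g, ‖∑ p, a p * χ p g‖ ^ 2 : ℝ) : ℂ) =
      ∑ p, ∑ q, if χ p = χ q then a p * conj (a q) else 0 := by
  have horth (p q : κ) : 𝔼 g, χ p g * conj (χ q g) = if χ p = χ q then 1 else 0 := by
    simpa [RCLike.wInner_cWeight_eq_expect, eq_comm] using
      AddChar.wInner_cWeight_eq_boole (χ q) (χ p)
  calc ((𝔼 g, ‖∑ p, a p * χ p g‖ ^ 2 : ℝ) : ℂ)
      = 𝔼 g, ∑ p, ∑ q, a p * conj (a q) * (χ p g * conj (χ q g)) := by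
        simp only [Complex.ofReal_expect, Complex.ofReal_pow, ← Complex.mul_conj', map_sum, map_mul,
          Finset.sum_mul_sum, mul_mul_mul_comm]
    _ = ∑ p, ∑ q, a p * conj (a q) * 𝔼 g, χ p g * conj (χ q g) := by
        simp only [Finset.expect_sum_comm, Finset.mul_expect]
    _ = _ := by simp only [horth, mul_ite, mul_one, mul_zero]

variable {ι : Type*}

/-- The vector of phases `exp (2πi f j / 3)`; for uniformly random `f` it serves as a random vector
with known fourth moments. Cube roots of unity are used because signs would not distinguish
`A i j` from `A j i` in the quadratic form. -/
noncomputable def phase (f : ι → ZMod 3) (i : ι) : ℂ := ZMod.stdAddChar (f i)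

/-- The character `f ↦ exp (2πi (f p.2 - f p.1) / 3)`, the coefficient of `A p.1 p.2` in the
quadratic form of `A` at `phase f`. -/
noncomputable def phaseChar (p : ι × ι) : AddChar (ι → ZMod 3) ℂ :=
  ZMod.stdAddChar.compAddMonoidHom
    (Pi.evalAddMonoidHom (fun _ ↦ ZMod 3) p.2 - Pi.evalAddMonoidHom (fun _ ↦ ZMod 3) p.1)

lemma star_phase_mul_phase (f : ι → ZMod 3) (i j : ι) :
    star (phase f i) * phase f j = phaseChar (i, j) f := by
  simp [phase, phaseChar, sub_eq_add_neg, AddChar.map_add_eq_mul, AddChar.map_neg_eq_conj, mul_comm]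

lemma phaseChar_eq_iff {p q : ι × ι} :
    phaseChar p = phaseChar q ↔ p.1 = p.2 ∧ q.1 = q.2 ∨ p = q := by
  classical
  constructor
  · intro h
    have hsub (f : ι → ZMod 3) : f p.2 - f p.1 = f q.2 - f q.1 :=
      ZMod.injective_stdAddChar (DFunLike.congr_fun h f)
    have hp₁ := hsub (Pi.single p.1 1)
    have hp₂ := hsub (Pi.single p.2 1)
    have hq₁ := hsub (Pi.single q.1 1)
    simp only [Pi.single_apply] at hp₁ hp₂ hq₁
    rw [Prod.ext_iff]
    have : (1 : ZMod 3) ≠ 0 ∧ (1 : ZMod 3) ≠ -1 ∧ (2 : ZMod 3) ≠ 0 := by decide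
    grind
  · rintro (⟨hp, hq⟩ | rfl)
    · ext; simp [phaseChar, hp, hq]
    · rfl

variable [Fintype ι]

lemma star_phase_dotProduct_mulVec_phase (A : Matrix ι ι ℂ) (f : ι → ZMod 3) :
    star (phase f) ⬝ᵥ A *ᵥ phase f = ∑ p : ι × ι, A p.1 p.2 * phaseChar p f := by
  simp only [dotProduct, mulVec, Finset.mul_sum, Pi.star_apply, Fintype.sum_prod_type,
    ← star_phase_mul_phase]
  exact Finset.sum_congr rfl fun i _ ↦ Finset.sum_congr rfl fun j _ ↦ by ring

lemma expect_norm_sq_phase [DecidableEq ι] (A : Matrix ι ι ℂ) :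
    𝔼 f : ι → ZMod 3, ‖star (phase f) ⬝ᵥ A *ᵥ phase f‖ ^ 2 + ∑ i, ‖A i i‖ ^ 2 =
      ‖A.trace‖ ^ 2 + ‖A‖ ^ 2 := by
  classical
  have hsplit (p q : ι × ι) (a b : ℂ) :
      (if phaseChar p = phaseChar q then a * b else 0) +
          (if p = q then if p.1 = p.2 then a * b else 0 else 0) =
        (if p.1 = p.2 then a else 0) * (if q.1 = q.2 then b else 0) +
          (if p = q then a * b else 0) := by
    simp only [phaseChar_eq_iff]
    split_ifs <;> simp_all
  have hsum : ∑ p : ι × ι, ∑ q : ι × ι, _ = ∑ p : ι × ι, ∑ q : ι × ι, _ :=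
    Fintype.sum_congr _ _ fun p ↦ Fintype.sum_congr _ _ fun q ↦
      hsplit p q (A p.1 p.2) (conj (A q.1 q.2))
  simp only [Finset.sum_add_distrib, Finset.sum_ite_eq, Finset.mem_univ, if_true,
    ← Finset.sum_mul_sum] at hsum
  apply Complex.ofReal_injective
  simp only [star_phase_dotProduct_mulVec_phase]
  rw [Complex.ofReal_add, expect_norm_sq_sum_addChar, frobenius_norm_sq]
  convert hsum using 2
  · simp [Fintype.sum_prod_type, Complex.mul_conj']
  · simp [Fintype.sum_prod_type, ← Complex.mul_conj', trace]

lemma sum_norm_trace_sq_add_norm_sq_le {κ : Type*} [Fintype κ]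
    (A : κ → Matrix ι ι ℂ) (B : Matrix ι ι ℂ)
    (h : ∀ x, ∑ a, ‖star x ⬝ᵥ A a *ᵥ x‖ ^ 2 ≤ ‖star x ⬝ᵥ B *ᵥ x‖ ^ 2) :
    ∑ a, (‖(A a).trace‖ ^ 2 + ‖A a‖ ^ 2) ≤ ‖B.trace‖ ^ 2 + ‖B‖ ^ 2 := by
  classical
  have hdiag (i : ι) : ∑ a, ‖A a i i‖ ^ 2 ≤ ‖B i i‖ ^ 2 := by
    simpa [Pi.star_single] using h (Pi.single i 1)
  simp only [← expect_norm_sq_phase, Finset.sum_add_distrib]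
  rw [← Finset.expect_sum_comm, Finset.sum_comm]
  exact add_le_add (Finset.expect_le_expect fun f _ ↦ h (phase f))
    (Finset.sum_le_sum fun i _ ↦ hdiag i)

end RandomPhases

section BlockPositive

variable {m l : Type*}

/-- The product vector `x ⊗ y`, with the tensor product of coordinate spaces indexed by pairs. -/
def tensorVec (x : m → ℂ) (y : l → ℂ) : m × l → ℂ := fun p ↦ x p.1 * y p.2

lemma star_tensorVec (x : m → ℂ) (y : l → ℂ) :
    star (tensorVec x y) = tensorVec (star x) (star y) := by
  ext p
  simp [tensorVec]

lemma tensorVec_single_single [DecidableEq m] [DecidableEq l] (p : m × l) :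
    tensorVec (Pi.single p.1 1) (Pi.single p.2 1) = Pi.single p 1 := by
  ext q
  simp [tensorVec, Pi.single_apply, Prod.ext_iff, ← ite_and, and_comm]

lemma tensorVec_comp_swap (x : m → ℂ) (y : l → ℂ) :
    tensorVec x y ∘ Prod.swap = tensorVec y x := by
  ext p
  simp [tensorVec, mul_comm]

/-- The block `(1 ⊗ ⟨a|) W (1 ⊗ |b⟩)` of `W` at the basis vectors `a` and `b` of the second
factor. -/
def slice (W : Matrix (m × l) (m × l) ℂ) (a b : l) : Matrix m m ℂ :=
  W.submatrix (·, a) (·, b)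

/-- The partial trace `Tr₁` over the first factor. -/
def partialTraceLeft [Fintype m] (W : Matrix (m × l) (m × l) ℂ) : Matrix l l ℂ :=
  of fun a b ↦ ∑ i, W (i, a) (i, b)

/-- The partial trace `Tr₂` over the second factor. -/
def partialTraceRight [Fintype l] (W : Matrix (m × l) (m × l) ℂ) : Matrix m m ℂ :=
  of fun i j ↦ ∑ a, W (i, a) (j, a)

/-- The compression `(⟨x| ⊗ 1) W (|x⟩ ⊗ 1)` of `W` along a vector `x` of the first factor. -/
def partialForm [Fintype m] (W : Matrix (m × l) (m × l) ℂ) (x : m → ℂ) : Matrix l l ℂ :=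
  of fun a b ↦ star x ⬝ᵥ slice W a b *ᵥ x

lemma partialTraceRight_submatrix_swap [Fintype m] (W : Matrix (m × l) (m × l) ℂ) :
    partialTraceRight (W.submatrix Prod.swap Prod.swap) = partialTraceLeft W := rfl

lemma partialTraceLeft_submatrix_swap [Fintype l] (W : Matrix (m × l) (m × l) ℂ) :
    partialTraceLeft (W.submatrix Prod.swap Prod.swap) = partialTraceRight W := rfl

lemma isHermitian_partialForm [Fintype m] {W : Matrix (m × l) (m × l) ℂ}
    (hW : W.IsHermitian) (x : m → ℂ) : (partialForm W x).IsHermitian := by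
  ext a b
  have hslice : (slice W b a)ᴴ = slice W a b := by
    rw [slice, conjTranspose_submatrix, hW.eq, slice]
  simp only [partialForm, conjTranspose_apply, of_apply]
  rw [star_dotProduct, star_star, star_mulVec, hslice, dotProduct_mulVec]

variable [Fintype m] [Fintype l]

lemma trace_partialTraceRight (W : Matrix (m × l) (m × l) ℂ) :
    (partialTraceRight W).trace = W.trace := by
  simp [partialTraceRight, trace, Fintype.sum_prod_type]

lemma sum_norm_slice_sq (W : Matrix (m × l) (m × l) ℂ) :
    ∑ p : l × l, ‖slice W p.1 p.2‖ ^ 2 = ‖W‖ ^ 2 := by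
  simp only [frobenius_norm_sq, slice, submatrix_apply, Fintype.sum_prod_type_right]
  rw [Finset.sum_comm]
  exact Fintype.sum_congr _ _ fun a ↦ Finset.sum_comm

lemma trace_partialForm (W : Matrix (m × l) (m × l) ℂ) (x : m → ℂ) :
    (partialForm W x).trace = star x ⬝ᵥ partialTraceRight W *ᵥ x := by
  have hsum : partialTraceRight W = ∑ a, slice W a a := by
    ext i j
    simp [partialTraceRight, slice, Matrix.sum_apply]
  simp [hsum, partialForm, trace, sum_mulVec, dotProduct_sum]

lemma star_dotProduct_partialForm_mulVec (W : Matrix (m × l) (m × l) ℂ) (x : m → ℂ) (y : l → ℂ) :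
    star y ⬝ᵥ partialForm W x *ᵥ y = star (tensorVec x y) ⬝ᵥ W *ᵥ tensorVec x y := by
  simp only [dotProduct, mulVec, partialForm, slice, tensorVec, Fintype.sum_prod_type_right,
    Finset.mul_sum, Finset.sum_mul, Pi.star_apply, star_mul', of_apply, submatrix_apply]
  refine Fintype.sum_congr _ _ fun a ↦ Finset.sum_comm.trans ?_
  refine Fintype.sum_congr _ _ fun i ↦ Fintype.sum_congr _ _ fun b ↦
    Fintype.sum_congr _ _ fun j ↦ ?_
  ring

/-- Block positivity of a Hermitian bipartite matrix: the quadratic form is nonnegative on product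
vectors. These matrices form the dual cone of the separable ones (entanglement witnesses). -/
structure IsBlockPositive (W : Matrix (m × l) (m × l) ℂ) : Prop where
  isHermitian : W.IsHermitian
  dotProduct_mulVec_nonneg (x : m → ℂ) (y : l → ℂ) :
    0 ≤ star (tensorVec x y) ⬝ᵥ W *ᵥ tensorVec x y

namespace IsBlockPositive

variable {W : Matrix (m × l) (m × l) ℂ}

lemma submatrix_swap (hW : IsBlockPositive W) :
    IsBlockPositive (W.submatrix Prod.swap Prod.swap) where
  isHermitian := hW.isHermitian.submatrix Prod.swap
  dotProduct_mulVec_nonneg x y := by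
    have h := hW.dotProduct_mulVec_nonneg y x
    rw [← tensorVec_comp_swap x y] at h
    simpa only [dotProduct, mulVec, ← (Equiv.prodComm m l).sum_comp, Equiv.prodComm_apply,
      submatrix_apply, Prod.swap_swap, Pi.star_apply, Function.comp_apply] using h

lemma trace_nonneg (hW : IsBlockPositive W) : 0 ≤ W.trace := by
  classical
  refine Finset.sum_nonneg fun p _ ↦ ?_
  simpa [tensorVec_single_single, Pi.star_single] using
    hW.dotProduct_mulVec_nonneg (Pi.single p.1 1) (Pi.single p.2 1)

lemma posSemidef_partialForm (hW : IsBlockPositive W) (x : m → ℂ) : (partialForm W x).PosSemidef :=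
  .of_dotProduct_mulVec_nonneg (isHermitian_partialForm hW.isHermitian x) fun y ↦
    (hW.dotProduct_mulVec_nonneg x y).trans_eq (star_dotProduct_partialForm_mulVec W x y).symm

lemma norm_sq_add_norm_partialTraceLeft_sq_le (hW : IsBlockPositive W) :
    ‖W‖ ^ 2 + ‖partialTraceLeft W‖ ^ 2 ≤ ‖W.trace‖ ^ 2 + ‖partialTraceRight W‖ ^ 2 := by
  have hform (x : m → ℂ) : ∑ p : l × l, ‖star x ⬝ᵥ slice W p.1 p.2 *ᵥ x‖ ^ 2 ≤
      ‖star x ⬝ᵥ partialTraceRight W *ᵥ x‖ ^ 2 := by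
    calc ∑ p : l × l, ‖star x ⬝ᵥ slice W p.1 p.2 *ᵥ x‖ ^ 2 = ‖partialForm W x‖ ^ 2 := by
          simp [frobenius_norm_sq, Fintype.sum_prod_type, partialForm]
      _ ≤ ‖(partialForm W x).trace‖ ^ 2 := by
          gcongr
          exact (norm_le_re_trace_of_posSemidef (hW.posSemidef_partialForm x)).trans
            (Complex.re_le_norm _)
      _ = ‖star x ⬝ᵥ partialTraceRight W *ᵥ x‖ ^ 2 := by rw [trace_partialForm]
  have hsum := sum_norm_trace_sq_add_norm_sq_le _ _ hform
  rw [Finset.sum_add_distrib, sum_norm_slice_sq, trace_partialTraceRight] at hsum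
  rw [frobenius_norm_sq (partialTraceLeft W), ← Fintype.sum_prod_type']
  rwa [add_comm] at hsum

lemma norm_le_re_trace (hW : IsBlockPositive W) : ‖W‖ ≤ W.trace.re := by
  have hle := hW.norm_sq_add_norm_partialTraceLeft_sq_le
  have hle_swap := hW.submatrix_swap.norm_sq_add_norm_partialTraceLeft_sq_le
  rw [partialTraceLeft_submatrix_swap, partialTraceRight_submatrix_swap] at hle_swap
  have hnorm : ‖W.submatrix Prod.swap Prod.swap‖ = ‖W‖ :=
    frobenius_norm_submatrix_equiv W (Equiv.prodComm l m) (Equiv.prodComm l m)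
  have htrace : (W.submatrix Prod.swap Prod.swap).trace = W.trace :=
    (Equiv.prodComm l m).sum_comp fun p ↦ W p p
  rw [hnorm, htrace] at hle_swap
  rw [← Complex.norm_of_nonneg' hW.trace_nonneg]
  exact abs_le_of_sq_le_sq' (by linarith) (norm_nonneg _) |>.2

lemma re_trace_mul_nonneg [DecidableEq m] [DecidableEq l] (hW : IsBlockPositive W)
    {M : Matrix (m × l) (m × l) ℂ} (hM : ‖M - 1‖ ≤ 1) : 0 ≤ (W * M).trace.re := by
  have hcs : ‖(W * (M - 1)).trace‖ ≤ W.trace.re :=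
    calc ‖(W * (M - 1)).trace‖ ≤ ‖W‖ * ‖M - 1‖ := norm_trace_mul_le W (M - 1)
      _ ≤ ‖W‖ := mul_le_of_le_one_right (norm_nonneg W) hM
      _ ≤ W.trace.re := hW.norm_le_re_trace
  have hsplit : (W * M).trace = W.trace + (W * (M - 1)).trace := by
    rw [mul_sub, mul_one, trace_sub, add_sub_cancel]
  rw [hsplit, Complex.add_re]
  linarith [(abs_le.mp (Complex.abs_re_le_norm (W * (M - 1)).trace)).1]

end IsBlockPositive

end BlockPositive

section ConvexHull

open Module in
lemma isCompact_convexHull {E : Type*} [AddCommGroup E] [Module ℝ E] [FiniteDimensional ℝ E]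
    [TopologicalSpace E] [IsTopologicalAddGroup E] [ContinuousSMul ℝ E] {s : Set E}
    (hs : IsCompact s) : IsCompact (convexHull ℝ s) := by
  -- Carathéodory: the hull is a union of images of finitely many compact sets.
  let comb (k : ℕ) (c : (Fin k → ℝ) × (Fin k → E)) : E := ∑ i, c.1 i • c.2 i
  have hunion : convexHull ℝ s = ⋃ k ∈ Set.Iic (finrank ℝ E + 1),
      comb k '' (stdSimplex ℝ (Fin k) ×ˢ Set.univ.pi fun _ ↦ s) := by
    refine Set.Subset.antisymm (fun x hx ↦ ?_) (Set.iUnion₂_subset fun k _ ↦ ?_)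
    · obtain ⟨ι, _, z, w, hz, hind, hw, hw1, rfl⟩ := eq_pos_convex_span_of_mem_convexHull hx
      let e := Fintype.equivFin ι
      refine Set.mem_biUnion (x := Fintype.card ι) ?_ ⟨(w ∘ e.symm, z ∘ e.symm), ⟨⟨?_, ?_⟩, ?_⟩, ?_⟩
      · exact hind.card_le_finrank_succ.trans (Nat.succ_le_succ (Submodule.finrank_le _))
      · exact fun i ↦ (hw _).le
      · exact (e.symm.sum_comp w).trans hw1
      · exact fun i _ ↦ hz (Set.mem_range_self _)
      · exact e.symm.sum_comp fun i ↦ w i • z i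
    · rintro _ ⟨⟨w, z⟩, ⟨⟨hw, hw1⟩, hz⟩, rfl⟩
      exact mem_convexHull_of_exists_fintype w z hw hw1 (fun i ↦ hz i trivial) rfl
  rw [hunion]
  refine (Set.finite_Iic _).isCompact_biUnion fun k _ ↦ ?_
  exact ((isCompact_stdSimplex ℝ (Fin k)).prod (isCompact_univ_pi fun _ ↦ hs)).image (by fun_prop)

end ConvexHull

section DensityMatrix

variable {m l : Type*} [Fintype m] [Fintype l]

lemma isCompact_setOf_isDensityMatrix : IsCompact {ρ : Matrix m m ℂ | IsDensityMatrix ρ} := by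
  refine Metric.isCompact_of_isClosed_isBounded ?_ ?_
  · have hset : {ρ : Matrix m m ℂ | IsDensityMatrix ρ} =
        {ρ | ρᴴ = ρ} ∩ {ρ | ∀ x, 0 ≤ star x ⬝ᵥ ρ *ᵥ x} ∩ {ρ | ρ.trace = 1} := by
      ext ρ
      simp only [IsDensityMatrix, posSemidef_iff_dotProduct_mulVec, IsHermitian,
        Set.mem_inter_iff, Set.mem_ofPred_eq]
    rw [hset, Set.ofPred_forall]
    refine .inter (.inter (isClosed_eq ?_ ?_) (isClosed_iInter fun x ↦ ?_)) (isClosed_eq ?_ ?_)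
    · fun_prop
    · fun_prop
    · exact isClosed_le continuous_const (by fun_prop)
    · fun_prop
    · fun_prop
  · refine Metric.isBounded_closedBall (x := 0) (r := 1) |>.subset fun ρ hρ ↦ ?_
    simpa [hρ.2] using norm_le_re_trace_of_posSemidef hρ.1

lemma eq_zero_or_exists_smul_isDensityMatrix {P : Matrix m m ℂ} (hP : P.PosSemidef) :
    P = 0 ∨ ∃ t : ℝ, 0 ≤ t ∧ ∃ σ, IsDensityMatrix σ ∧ P = t • σ := by
  obtain htr | htr := eq_or_ne P.trace 0
  · exact .inl (hP.trace_eq_zero_iff.mp htr)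
  · have hnorm : (‖P.trace‖ : ℂ) = P.trace := Complex.norm_of_nonneg' hP.trace_nonneg
    refine .inr ⟨‖P.trace‖, norm_nonneg _, ‖P.trace‖⁻¹ • P, ⟨hP.smul (by positivity), ?_⟩, ?_⟩
    · rw [trace_smul, Complex.real_smul, Complex.ofReal_inv, hnorm, inv_mul_cancel₀ htr]
    · rw [smul_inv_smul₀ (norm_ne_zero_iff.mpr htr)]

variable (m l) in
/-- The pure-tensor states `σ ⊗ τ` with density matrices `σ` and `τ`; the separable states are the
convex hull of this set. -/
def productStates : Set (Matrix (m × l) (m × l) ℂ) :=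
  Set.image2 (· ⊗ₖ ·) {σ : Matrix m m ℂ | IsDensityMatrix σ} {τ : Matrix l l ℂ | IsDensityMatrix τ}

lemma isCompact_productStates : IsCompact (productStates m l) := by
  rw [productStates, ← Set.image_prod]
  refine (isCompact_setOf_isDensityMatrix.prod isCompact_setOf_isDensityMatrix).image ?_
  refine continuous_matrix fun p q ↦ ?_
  exact (continuous_fst.matrix_elem p.1 q.1).mul (continuous_snd.matrix_elem p.2 q.2)

lemma isDensityMatrix_of_mem_productStates {ρ : Matrix (m × l) (m × l) ℂ}
    (hρ : ρ ∈ productStates m l) : IsDensityMatrix ρ := by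
  obtain ⟨σ, hσ, τ, hτ, rfl⟩ := hρ
  exact ⟨hσ.1.kronecker hτ.1, by rw [trace_kronecker, hσ.2, hτ.2, one_mul]⟩

lemma isSeparableState_of_mem_convexHull {n k : ℕ} {ρ : Matrix (Fin n × Fin k) (Fin n × Fin k) ℂ}
    (hρ : ρ ∈ convexHull ℝ (productStates (Fin n) (Fin k))) : IsSeparableState ρ := by
  obtain ⟨ι, _, w, z, hw, hw1, hz, rfl⟩ := mem_convexHull_iff_exists_fintype.mp hρ
  choose σ hσ τ hτ hz using hz
  let e := (Fintype.equivFin ι).symm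
  refine ⟨Fintype.card ι, w ∘ e, σ ∘ e, τ ∘ e, fun i ↦ hw _, (e.sum_comp w).trans hw1,
    fun i ↦ hσ _, fun i ↦ hτ _, ?_⟩
  rw [← e.sum_comp]
  simp only [Function.comp_apply, ← hz, Complex.coe_smul]

end DensityMatrix

section Separation

variable {m l : Type*} [Fintype m] [Fintype l]

lemma exists_forall_eq_trace_mul (φ : Matrix m m ℂ →ₗ[ℂ] ℂ) :
    ∃ W : Matrix m m ℂ, ∀ A, φ A = (W * A).trace := by
  classical
  refine ⟨of fun i j ↦ φ (single j i 1), fun A ↦ ?_⟩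
  conv_lhs => rw [matrix_eq_sum_single A]
  simp only [map_sum, trace, diag_apply, mul_apply, of_apply]
  rw [Finset.sum_comm]
  refine Fintype.sum_congr _ _ fun i ↦ Fintype.sum_congr _ _ fun j ↦ ?_
  have hsingle : single j i (A j i) = A j i • single j i 1 := by
    rw [smul_single, smul_eq_mul, mul_one]
  rw [hsingle, map_smul, smul_eq_mul, mul_comm]

open scoped ComplexStarModule in
lemma re_trace_realPart_mul (A : Matrix m m ℂ) {B : Matrix m m ℂ} (hB : B.IsHermitian) :
    ((ℜ A : Matrix m m ℂ) * B).trace.re = (A * B).trace.re := by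
  have hstar : (star A * B).trace = star (A * B).trace := by
    rw [← trace_conjTranspose, conjTranspose_mul, hB.eq, trace_mul_comm, star_eq_conjTranspose]
  rw [realPart_apply_coe, smul_mul_assoc, trace_smul, add_mul, trace_add, hstar]
  simp [← two_mul]

lemma trace_mul_vecMulVec_star (W : Matrix m m ℂ) (x : m → ℂ) :
    (W * vecMulVec x (star x)).trace = star x ⬝ᵥ W *ᵥ x := by
  rw [mul_vecMulVec, trace_vecMulVec, dotProduct_comm]

omit [Fintype m] [Fintype l] in
lemma vecMulVec_kronecker_vecMulVec (x x' : m → ℂ) (y y' : l → ℂ) :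
    vecMulVec x x' ⊗ₖ vecMulVec y y' = vecMulVec (tensorVec x y) (tensorVec x' y') := by
  ext p q
  simp [vecMulVec, tensorVec, mul_mul_mul_comm]

lemma IsBlockPositive.of_forall_productStates {W : Matrix (m × l) (m × l) ℂ} (hW : W.IsHermitian)
    (h : ∀ ρ ∈ productStates m l, 0 ≤ (W * ρ).trace.re) : IsBlockPositive W := by
  refine ⟨hW, fun x y ↦ Complex.nonneg_iff.mpr ⟨?_, (hW.im_star_dotProduct_mulVec_self _).symm⟩⟩
  rw [← trace_mul_vecMulVec_star, star_tensorVec, ← vecMulVec_kronecker_vecMulVec]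
  obtain hx | ⟨s, hs, σ, hσ, hx⟩ :=
    eq_zero_or_exists_smul_isDensityMatrix (posSemidef_vecMulVec_self_star x)
  · simp [hx]
  obtain hy | ⟨t, ht, τ, hτ, hy⟩ :=
    eq_zero_or_exists_smul_isDensityMatrix (posSemidef_vecMulVec_self_star y)
  · simp [hy]
  have hρ := h _ ⟨σ, hσ, τ, hτ, rfl⟩
  rw [hx, hy, smul_kronecker, kronecker_smul, smul_smul]
  simpa using mul_nonneg (mul_nonneg hs ht) hρ

theorem mem_convexHull_productStates {ρ : Matrix (m × l) (m × l) ℂ} (hρ : ρ.IsHermitian)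
    (htr : ρ.trace = 1) (h : ∀ W, IsBlockPositive W → 0 ≤ (W * ρ).trace.re) :
    ρ ∈ convexHull ℝ (productStates m l) := by
  classical
  by_contra hmem
  have : LocallyConvexSpace ℝ (Matrix (m × l) (m × l) ℂ) :=
    inferInstanceAs (LocallyConvexSpace ℝ (m × l → m × l → ℂ))
  obtain ⟨f, u, hfρ, hfs⟩ := RCLike.geometric_hahn_banach_point_closed (𝕜 := ℂ)
    (convex_convexHull ℝ _) (isCompact_convexHull isCompact_productStates).isClosed hmem
  obtain ⟨A, hA⟩ := exists_forall_eq_trace_mul (f : Matrix (m × l) (m × l) ℂ →ₗ[ℂ] ℂ)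
  open scoped ComplexStarModule in
  let W : Matrix (m × l) (m × l) ℂ := ℜ (A - (u : ℂ) • 1)
  have hre {τ : Matrix (m × l) (m × l) ℂ} (hτ : τ.IsHermitian) (hτ1 : τ.trace = 1) :
      (W * τ).trace.re = (f τ).re - u := by
    rw [re_trace_realPart_mul _ hτ, sub_mul, trace_sub, ← hA, smul_mul_assoc, one_mul, trace_smul,
      hτ1]
    simp
  have hW : IsBlockPositive W := by
    refine .of_forall_productStates (realPart _).2 fun τ hτ ↦ ?_
    have hdens := isDensityMatrix_of_mem_productStates hτ
    rw [hre hdens.1.1 hdens.2]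
    exact sub_nonneg.mpr (hfs τ (subset_convexHull ℝ _ hτ)).le
  have hneg : (W * ρ).trace.re < 0 := (hre hρ htr).trans_lt (sub_neg.mpr hfρ)
  exact hneg.not_ge (h W hW)

end Separation

section Radius

variable (m : Type*) [Fintype m]

/-- The radius `1 / √(N (N - 1))` of the largest ball of density matrices around the maximally mixed
state on `ℂ^m`, where `N = card m`. Division by zero makes it `0` when `N ≤ 1`. -/
noncomputable def stateInradius : ℝ :=
  1 / √((Fintype.card m : ℝ) * ((Fintype.card m : ℝ) - 1))

/-- The maximally mixed state `1 / N` on `ℂ^m`, where `N = card m`. -/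
noncomputable def maximallyMixed [DecidableEq m] : Matrix m m ℂ := (Fintype.card m : ℂ)⁻¹ • 1

variable {m}

lemma stateInradius_sq [Nonempty m] :
    stateInradius m ^ 2 = ((Fintype.card m : ℝ) * ((Fintype.card m : ℝ) - 1))⁻¹ := by
  have hcard : (1 : ℝ) ≤ Fintype.card m := by exact_mod_cast Fintype.card_pos (α := m)
  rw [stateInradius, div_pow, one_pow, Real.sq_sqrt (by nlinarith), one_div]

variable [DecidableEq m]

lemma isHermitian_maximallyMixed : (maximallyMixed m).IsHermitian := by
  simp [IsHermitian, maximallyMixed]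

lemma trace_maximallyMixed [Nonempty m] : (maximallyMixed m).trace = 1 := by
  simp [maximallyMixed]

lemma trace_sub_maximallyMixed [Nonempty m] {ρ : Matrix m m ℂ} (hρ : ρ.trace = 1) :
    (ρ - maximallyMixed m).trace = 0 := by
  rw [trace_sub, hρ, trace_maximallyMixed, sub_self]

lemma norm_card_sub_one_smul_sub_one_le [Nontrivial m] {ρ : Matrix m m ℂ} (hρ : ρ.trace = 1)
    (hdist : ‖ρ - maximallyMixed m‖ ≤ stateInradius m) :
    ‖((Fintype.card m : ℝ) - 1) • ρ - 1‖ ≤ 1 := by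
  set N : ℕ := Fintype.card m with hN
  have hN1 : (1 : ℝ) < N := by exact_mod_cast Fintype.one_lt_card (α := m)
  have hN0 : (N : ℂ) ≠ 0 := by exact_mod_cast (zero_lt_one.trans hN1).ne'
  have htr : (((N : ℝ) - 1) • (ρ - maximallyMixed m)).trace = 0 := by
    rw [trace_smul, trace_sub_maximallyMixed hρ, smul_zero]
  have hdecomp : ((N : ℝ) - 1) • ρ - 1 =
      ((N : ℝ) - 1) • (ρ - maximallyMixed m) + (-(N : ℂ)⁻¹) • (1 : Matrix m m ℂ) := by
    rw [maximallyMixed, ← hN]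
    match_scalars <;> simp only [mul_one]
    field_simp
    ring
  refine (sq_le_one_iff₀ (norm_nonneg _)).mp ?_
  calc ‖((N : ℝ) - 1) • ρ - 1‖ ^ 2
      = ((N : ℝ) - 1) ^ 2 * ‖ρ - maximallyMixed m‖ ^ 2 + (N : ℝ)⁻¹ := by
        rw [hdecomp, norm_add_smul_one_sq htr, norm_smul, mul_pow, Real.norm_eq_abs, sq_abs,
          norm_neg, norm_inv, Complex.norm_natCast, ← hN]
        field_simp
    _ ≤ ((N : ℝ) - 1) ^ 2 * stateInradius m ^ 2 + (N : ℝ)⁻¹ := by gcongr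
    _ = 1 := by
        have : (N : ℝ) - 1 ≠ 0 := (sub_pos.mpr hN1).ne'
        rw [stateInradius_sq, ← hN]
        field_simp
        ring

lemma norm_single_sub_maximallyMixed_sq (p : m) :
    ‖single p p (1 : ℂ) - maximallyMixed m‖ ^ 2 = 1 - (Fintype.card m : ℝ)⁻¹ := by
  have : Nonempty m := ⟨p⟩
  have hnorm : ‖single p p (1 : ℂ)‖ ^ 2 = 1 := by
    simp [frobenius_norm_sq, single_apply, ite_and, apply_ite]
  have hpyth := norm_add_smul_one_sq (trace_sub_maximallyMixed (trace_single_eq_same p (1 : ℂ)))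
    (Fintype.card m : ℂ)⁻¹
  rw [← maximallyMixed, sub_add_cancel, hnorm, norm_inv, Complex.norm_natCast] at hpyth
  rw [hpyth]
  field_simp
  ring

lemma stateInradius_mul_norm_single_sub_maximallyMixed [Nontrivial m] (p : m) :
    stateInradius m * ‖single p p (1 : ℂ) - maximallyMixed m‖ = (Fintype.card m : ℝ)⁻¹ := by
  have hcard : (1 : ℝ) < Fintype.card m := by exact_mod_cast Fintype.one_lt_card (α := m)
  have hradius : 0 ≤ stateInradius m := by rw [stateInradius]; positivity
  have hsub : (Fintype.card m : ℝ) - 1 ≠ 0 := (sub_pos.mpr hcard).ne'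
  rw [← sq_eq_sq₀ (by positivity) (by positivity), mul_pow, stateInradius_sq,
    norm_single_sub_maximallyMixed_sq]
  field_simp

lemma exists_not_posSemidef_norm_sub_maximallyMixed_le [Nontrivial m] {r : ℝ}
    (hr : stateInradius m < r) :
    ∃ σ : Matrix m m ℂ, σ.IsHermitian ∧ σ.trace = 1 ∧ ‖σ - maximallyMixed m‖ ≤ r ∧
      ¬ σ.PosSemidef := by
  obtain ⟨p⟩ : Nonempty m := inferInstance
  set D := single p p (1 : ℂ) - maximallyMixed m with hD
  have hDherm : D.IsHermitian := .sub (by simp [IsHermitian]) isHermitian_maximallyMixed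
  have hDtr : D.trace = 0 := trace_sub_maximallyMixed (trace_single_eq_same p 1)
  have hcrit : stateInradius m * ‖D‖ = (Fintype.card m : ℝ)⁻¹ :=
    stateInradius_mul_norm_single_sub_maximallyMixed p
  have hDpos : 0 < ‖D‖ := (norm_nonneg D).lt_of_ne fun h ↦ by
    simp [← h, eq_comm] at hcrit
  have hrpos : 0 < r := lt_of_le_of_lt (by rw [stateInradius]; positivity) hr
  refine ⟨maximallyMixed m - (r / ‖D‖) • D,
    isHermitian_maximallyMixed.sub (hDherm.smul (.all _)), ?_, ?_, fun hpsd ↦ ?_⟩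
  · rw [trace_sub, trace_smul, hDtr, smul_zero, sub_zero, trace_maximallyMixed]
  · rw [sub_sub_cancel_left, norm_neg, norm_smul, Real.norm_of_nonneg (by positivity),
      div_mul_cancel₀ _ hDpos.ne']
  · have hDpp : D p p = ((‖D‖ ^ 2 : ℝ) : ℂ) := by
      rw [norm_single_sub_maximallyMixed_sq]
      simp [hD, maximallyMixed]
    have hpp : (maximallyMixed m - (r / ‖D‖) • D) p p =
        (((Fintype.card m : ℝ)⁻¹ - r * ‖D‖ : ℝ) : ℂ) := by
      rw [Matrix.sub_apply, Matrix.smul_apply, hDpp, Complex.real_smul, ← Complex.ofReal_mul,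
        div_mul_eq_mul_div, sq, ← mul_assoc, mul_div_cancel_right₀ _ hDpos.ne']
      simp [maximallyMixed]
    have hnonneg := hpsd.diag_nonneg (i := p)
    rw [hpp, Complex.zero_le_real, ← hcrit] at hnonneg
    exact (mul_lt_mul_of_pos_right hr hDpos).not_ge (sub_nonneg.mp hnonneg)

end Radius

theorem mem_convexHull_productStates_of_norm_sub_maximallyMixed_le {m l : Type*} [Fintype m]
    [Fintype l] [DecidableEq m] [DecidableEq l] [Nontrivial (m × l)]
    {ρ : Matrix (m × l) (m × l) ℂ} (hρ : ρ.IsHermitian) (htr : ρ.trace = 1)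
    (hdist : ‖ρ - maximallyMixed (m × l)‖ ≤ stateInradius (m × l)) :
    ρ ∈ convexHull ℝ (productStates m l) := by
  refine mem_convexHull_productStates hρ htr fun W hW ↦ ?_
  have hcard : (1 : ℝ) < Fintype.card (m × l) := by
    exact_mod_cast Fintype.one_lt_card (α := m × l)
  have hscaled := hW.re_trace_mul_nonneg (norm_card_sub_one_smul_sub_one_le htr hdist)
  rw [mul_smul_comm, trace_smul, Complex.smul_re, smul_eq_mul] at hscaled
  exact nonneg_of_mul_nonneg_right hscaled (sub_pos.mpr hcard)

end GurvitsBarnum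

/-- **The Gurvits–Barnum separable ball.**  (i) Every Hermitian matrix of trace `1` within
Frobenius distance `(nk(nk−1))^{−1/2}` of the maximally mixed state `I/(nk)` is a separable
density matrix.  (ii) The radius is optimal: for every larger radius `r` there is a Hermitian
trace-one matrix within distance `r` of `I/(nk)` which is not positive semidefinite; hence the
above ball is the largest Euclidean ball centered at `I/(nk)` contained in the set of density
matrices. -/
theorem gurvits_barnum_separable_ball
    (n k : ℕ) (hn : 1 ≤ n) (hk : 1 ≤ k) (hnk : 2 ≤ n * k) :
    (∀ ρ : Matrix (Fin n × Fin k) (Fin n × Fin k) ℂ,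
      ρ.IsHermitian → ρ.trace = 1 →
      frobNorm (ρ - (((n * k : ℕ) : ℂ))⁻¹ • 1) ≤
        1 / Real.sqrt (((n * k : ℕ) : ℝ) * (((n * k : ℕ) : ℝ) - 1)) →
      IsSeparableState ρ) ∧
    (∀ r : ℝ, 1 / Real.sqrt (((n * k : ℕ) : ℝ) * (((n * k : ℕ) : ℝ) - 1)) < r →
      ∃ σ : Matrix (Fin n × Fin k) (Fin n × Fin k) ℂ,
        σ.IsHermitian ∧ σ.trace = 1 ∧
        frobNorm (σ - (((n * k : ℕ) : ℂ))⁻¹ • 1) ≤ r ∧ ¬ σ.PosSemidef) := by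
  have hcard : Fintype.card (Fin n × Fin k) = n * k := by simp
  have : Nontrivial (Fin n × Fin k) := Fintype.one_lt_card_iff_nontrivial.mp (by omega)
  simp only [GurvitsBarnum.frobNorm_eq_norm, ← hcard]
  exact ⟨fun ρ hρ htr hdist ↦ GurvitsBarnum.isSeparableState_of_mem_convexHull
      (GurvitsBarnum.mem_convexHull_productStates_of_norm_sub_maximallyMixed_le hρ htr hdist),
    fun r hr ↦ GurvitsBarnum.exists_not_posSemidef_norm_sub_maximallyMixed_le hr⟩
end

section
/- (Peres PPT criterion) Let n, k ≥ 1 and let ρ ∈ M_{nk}(ℂ), indexed by pairs in {1,…,n}×{1,…,k}, be a separable density matrix. Then its partial transpose ρ^Γ, defined entrywise by (ρ^Γ)_{(i,a),(j,b)} = ρ_{(i,b),(j,a)}, is positive semidefinite. -/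
open scoped Kronecker ComplexOrder

/-- The partial transpose (on the second factor):
`(ρ^Γ)_{(i,a),(j,b)} = ρ_{(i,b),(j,a)}`. -/
def partialTranspose {n k : ℕ}
    (ρ : Matrix (Fin n × Fin k) (Fin n × Fin k) ℂ) :
    Matrix (Fin n × Fin k) (Fin n × Fin k) ℂ :=
  Matrix.of fun p q => ρ (p.1, q.2) (q.1, p.2)

section PartialTranspose

variable {n k : ℕ}

lemma partialTranspose_sum {ι : Type*} (s : Finset ι)
    (M : ι → Matrix (Fin n × Fin k) (Fin n × Fin k) ℂ) :
    partialTranspose (∑ i ∈ s, M i) = ∑ i ∈ s, partialTranspose (M i) := by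
  ext a b
  simp only [partialTranspose, Matrix.of_apply, Matrix.sum_apply]

lemma partialTranspose_smul {R : Type*} [SMul R ℂ] (c : R)
    (M : Matrix (Fin n × Fin k) (Fin n × Fin k) ℂ) :
    partialTranspose (c • M) = c • partialTranspose M :=
  rfl

lemma partialTranspose_kronecker (A : Matrix (Fin n) (Fin n) ℂ) (B : Matrix (Fin k) (Fin k) ℂ) :
    partialTranspose (A ⊗ₖ B) = A ⊗ₖ B.transpose :=
  rfl

lemma posSemidef_partialTranspose_kronecker
    {A : Matrix (Fin n) (Fin n) ℂ} {B : Matrix (Fin k) (Fin k) ℂ}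
    (hA : A.PosSemidef) (hB : B.PosSemidef) :
    (partialTranspose (A ⊗ₖ B)).PosSemidef := by
  rw [partialTranspose_kronecker]
  exact hA.kronecker hB.transpose

end PartialTranspose

/-- **The Peres PPT criterion**: the partial transpose of a separable density matrix is
positive semidefinite. -/
theorem ppt_criterion {n k : ℕ}
    (ρ : Matrix (Fin n × Fin k) (Fin n × Fin k) ℂ)
    (hsep : IsSeparableState ρ) :
    (partialTranspose ρ).PosSemidef := by
  obtain ⟨m, p, σ, τ, hp, -, hσ, hτ, rfl⟩ := hsep
  simp only [partialTranspose_sum, partialTranspose_smul]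
  refine Matrix.posSemidef_sum _ fun i _ ↦ ?_
  have hterm : (partialTranspose (σ i ⊗ₖ τ i)).PosSemidef :=
    posSemidef_partialTranspose_kronecker (hσ i).1 (hτ i).1
  exact hterm.smul (Complex.zero_le_real.mpr (hp i))
end

section
/- Let n, k ≥ 1 and let ρ ∈ M_{nk}(ℂ), indexed by pairs in {1,…,n}×{1,…,k}, be a density matrix whose partial transpose ρ^Γ (defined by (ρ^Γ)_{(i,a),(j,b)} = ρ_{(i,b),(j,a)}) is positive semidefinite. Then its reduction ρ^{red}, defined entrywise by (ρ^{red})_{(i,a),(j,b)} = δ_{ab}·Σ_{c=1}^{k} ρ_{(i,c),(j,c)} − ρ_{(i,a),(j,b)}, is also positive semidefinite. That is, the PPT criterion is stronger than the reduction criterion: every PPT state satisfies the reduction criterion. -/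
open scoped ComplexOrder

/-- The reduction map applied to the second factor:
`(ρ^{red})_{(i,a),(j,b)} = δ_{ab}·Σ_c ρ_{(i,c),(j,c)} − ρ_{(i,a),(j,b)}`. -/
noncomputable def reduction {n k : ℕ}
    (ρ : Matrix (Fin n × Fin k) (Fin n × Fin k) ℂ) :
    Matrix (Fin n × Fin k) (Fin n × Fin k) ℂ :=
  Matrix.of fun p q =>
    (if p.2 = q.2 then ∑ c : Fin k, ρ (p.1, c) (q.1, c) else 0) - ρ p q

/-!
Reduction composed with transposition, `Y ↦ tr(Y) I - Yᵀ`, is completely positive: it is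
`½ ∑_{c,d} A_{cd}ᴴ Y A_{cd}` with the antisymmetric operators `A_{cd} = E_{cd} - E_{dc}`.
Since `ρ^{red}` is obtained from `ρ^Γ` by applying this map to the second factor, it is positive
semidefinite as soon as `ρ^Γ` is.
-/

open Matrix
open scoped Kronecker

section Ampliation

variable {m κ ν R : Type*}

/-- The ampliation `id ⊗ Φ` of a map `Φ` between matrix algebras: a matrix indexed by `m × κ` is
read as an `m × m` array of `κ × κ` blocks, and `Φ` is applied to each block. Here
`Φ` is an arbitrary function, not bundled as a linear map. -/
def ampliation (Φ : Matrix κ κ R → Matrix ν ν R) (M : Matrix (m × κ) (m × κ) R) :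
    Matrix (m × ν) (m × ν) R :=
  comp m m ν ν R (((comp m m κ κ R).symm M).map Φ)

theorem ampliation_conj [Fintype m] [DecidableEq m] [Fintype κ] [CommSemiring R] [StarRing R]
    (A : Matrix κ ν R) (M : Matrix (m × κ) (m × κ) R) :
    ampliation (fun Y => Aᴴ * Y * A) M =
      ((1 : Matrix m m R) ⊗ₖ A)ᴴ * M * ((1 : Matrix m m R) ⊗ₖ A) := by
  rw [conjTranspose_kronecker, conjTranspose_one]
  ext ⟨i, a⟩ ⟨j, b⟩
  simp [ampliation, mul_apply, Fintype.sum_prod_type, one_apply, Finset.sum_mul]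

theorem ampliation_smul {S : Type*} [SMul S R] (r : S) (Φ : Matrix κ κ R → Matrix ν ν R)
    (M : Matrix (m × κ) (m × κ) R) :
    ampliation (fun Y => r • Φ Y) M = r • ampliation Φ M :=
  rfl

theorem ampliation_sum {ι : Type*} [AddCommMonoid R] (s : Finset ι)
    (Φ : ι → Matrix κ κ R → Matrix ν ν R) (M : Matrix (m × κ) (m × κ) R) :
    ampliation (fun Y => ∑ i ∈ s, Φ i Y) M = ∑ i ∈ s, ampliation (Φ i) M := by
  ext p q
  simp [ampliation, Matrix.sum_apply]

theorem posSemidef_ampliation_sum_conj {ι : Type*} [Finite m] [Fintype κ] [Finite ν] [CommRing R]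
    [PartialOrder R] [StarRing R] [AddLeftMono R] (s : Finset ι) (A : ι → Matrix κ ν R)
    {M : Matrix (m × κ) (m × κ) R} (hM : M.PosSemidef) :
    (ampliation (fun Y => ∑ i ∈ s, (A i)ᴴ * Y * A i) M).PosSemidef := by
  classical
  have := Fintype.ofFinite m
  rw [ampliation_sum]
  refine posSemidef_sum s fun i _ => ?_
  rw [ampliation_conj]
  exact hM.conjTranspose_mul_mul_same _

end Ampliation

section AntisymmetricUnit

variable {κ R : Type*} [DecidableEq κ]

/-- The antisymmetric matrix unit `E_{cd} - E_{dc}`. These are the Kraus operators of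
`Y ↦ tr(Y) I - Yᵀ`. -/
def antisymmetricUnit [Ring R] (c d : κ) : Matrix κ κ R :=
  single c d 1 - single d c 1

theorem antisymmetricUnit_conj [Fintype κ] [Ring R] [StarRing R] (Y : Matrix κ κ R) (c d : κ) :
    (antisymmetricUnit c d)ᴴ * Y * antisymmetricUnit c d =
      single d d (Y c c) - single d c (Y c d) - single c d (Y d c) + single c c (Y d d) := by
  simp only [antisymmetricUnit, conjTranspose_sub, conjTranspose_single, star_one, sub_mul, mul_sub,
    single_mul_mul_single, one_mul, mul_one]
  abel

theorem sum_single_diagonal_eq_trace_smul_one [Fintype κ] [Semiring R] (Y : Matrix κ κ R) :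
    ∑ c, ∑ d, single d d (Y c c) = Y.trace • (1 : Matrix κ κ R) := by
  simp [sum_single_eq_diagonal, trace, Finset.sum_smul, smul_one_eq_diagonal]

theorem sum_single_swap_eq_transpose [Fintype κ] [AddCommMonoid R] (Y : Matrix κ κ R) :
    ∑ c, ∑ d, single d c (Y c d) = Yᵀ := by
  rw [Finset.sum_comm]
  exact sum_sum_single fun d c => Y c d

theorem sum_antisymmetricUnit_conj [Fintype κ] [Ring R] [StarRing R] (Y : Matrix κ κ R) :
    ∑ p : κ × κ, (antisymmetricUnit p.1 p.2)ᴴ * Y * antisymmetricUnit p.1 p.2 =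
      2 • (Y.trace • 1 - Yᵀ) := by
  have trace_swapped : ∑ c, ∑ d, single c c (Y d d) = Y.trace • (1 : Matrix κ κ R) := by
    rw [Finset.sum_comm, sum_single_diagonal_eq_trace_smul_one]
  have transpose_swapped : ∑ c, ∑ d, single c d (Y d c) = Yᵀ :=
    sum_sum_single fun c d => Y d c
  simp only [Fintype.sum_prod_type, antisymmetricUnit_conj, Finset.sum_add_distrib,
    Finset.sum_sub_distrib, sum_single_diagonal_eq_trace_smul_one, sum_single_swap_eq_transpose,
    trace_swapped, transpose_swapped]
  abel

end AntisymmetricUnit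

theorem posSemidef_ampliation_trace_smul_one_sub_transpose {m κ 𝕜 : Type*} [Finite m] [Fintype κ]
    [DecidableEq κ] [RCLike 𝕜] {M : Matrix (m × κ) (m × κ) 𝕜} (hM : M.PosSemidef) :
    (ampliation (fun Y => Y.trace • (1 : Matrix κ κ 𝕜) - Yᵀ) M).PosSemidef := by
  have kraus_form (Y : Matrix κ κ 𝕜) : Y.trace • 1 - Yᵀ = (2⁻¹ : ℝ) •
      ∑ p : κ × κ, (antisymmetricUnit p.1 p.2)ᴴ * Y * antisymmetricUnit p.1 p.2 := by
    rw [sum_antisymmetricUnit_conj, ← Nat.cast_smul_eq_nsmul ℝ, smul_smul]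
    norm_num
  simp only [kraus_form, ampliation_smul]
  exact (posSemidef_ampliation_sum_conj _ _ hM).smul (by positivity)

theorem reduction_eq_ampliation_partialTranspose {n k : ℕ}
    (ρ : Matrix (Fin n × Fin k) (Fin n × Fin k) ℂ) :
    reduction ρ = ampliation (fun Y => Y.trace • 1 - Yᵀ) (partialTranspose ρ) := by
  ext ⟨i, a⟩ ⟨j, b⟩
  simp [reduction, ampliation, partialTranspose, trace, one_apply]

theorem ppt_implies_reduction_general {n k : ℕ}
    (ρ : Matrix (Fin n × Fin k) (Fin n × Fin k) ℂ)
    (hppt : (partialTranspose ρ).PosSemidef) :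
    (reduction ρ).PosSemidef := by
  rw [reduction_eq_ampliation_partialTranspose]
  exact posSemidef_ampliation_trace_smul_one_sub_transpose hppt

/-- **PPT implies the reduction criterion**: if a density matrix has positive-semidefinite
partial transpose, then its reduction is also positive semidefinite. -/
theorem ppt_implies_reduction {n k : ℕ}
    (ρ : Matrix (Fin n × Fin k) (Fin n × Fin k) ℂ)
    (hρ : ρ.PosSemidef) (htr : ρ.trace = 1)
    (hppt : (partialTranspose ρ).PosSemidef) :
    (reduction ρ).PosSemidef :=
  ppt_implies_reduction_general ρ hppt
end

section
/- Let n ≥ 1 and k = 2, and let ρ ∈ M_{2n}(ℂ), indexed by pairs in {1,…,n}×{1,2}, be a density matrix. Then the partial transpose ρ^Γ (defined by (ρ^Γ)_{(i,a),(j,b)} = ρ_{(i,b),(j,a)}) is positive semidefinite if and only if the reduction ρ^{red} (defined by (ρ^{red})_{(i,a),(j,b)} = δ_{ab}·Σ_{c=1}^{2} ρ_{(i,c),(j,c)} − ρ_{(i,a),(j,b)}) is positive semidefinite. That is, when the second subsystem is a qubit, the PPT and reduction criteria are equivalent. -/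
open scoped ComplexOrder

/-!
On `2 × 2` matrices the reduction map `X ↦ Tr(X) • 1 - X` (the adjugate) is the transpose followed
by conjugation by the rotation `J = !![0, 1; -1, 0]`. Applying this to each block of `ρ` shows that
the reduction of `ρ` is the partial transpose conjugated by the invertible matrix `1 ⊗ J`, and such
a congruence preserves positive semidefiniteness in both directions.
-/

open Matrix
open scoped Kronecker

section Blocks

variable {m m' l l' o o' R : Type*}

/-- The block `(i, j)` of a matrix on product index sets, so that `M = ∑ E_{ij} ⊗ block M i j`.
Maps acting on the second tensor factor act on each block separately. -/
def block (M : Matrix (m × l) (m' × o) R) (i : m) (j : m') : Matrix l o R :=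
  (comp m m' l o R).symm M i j

theorem ext_block {M N : Matrix (m × l) (m' × o) R} (h : ∀ i j, block M i j = block N i j) :
    M = N :=
  (comp m m' l o R).symm.injective (Matrix.ext h)

theorem block_one_kronecker_mul [Fintype m] [DecidableEq m] [Fintype l] [NonAssocSemiring R]
    (A : Matrix l' l R) (M : Matrix (m × l) (m' × o) R) (i : m) (j : m') :
    block ((1 : Matrix m m R) ⊗ₖ A * M) i j = A * block M i j := by
  ext a b
  simp [block, mul_apply, Fintype.sum_prod_type, one_apply]

theorem block_mul_one_kronecker [Fintype m'] [DecidableEq m'] [Fintype o] [NonAssocSemiring R]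
    (M : Matrix (m × l) (m' × o) R) (B : Matrix o o' R) (i : m) (j : m') :
    block (M * (1 : Matrix m' m' R) ⊗ₖ B) i j = block M i j * B := by
  ext a b
  simp [block, mul_apply, Fintype.sum_prod_type, one_apply]

end Blocks

section Maps

variable {n k : ℕ} (ρ : Matrix (Fin n × Fin k) (Fin n × Fin k) ℂ) (i j : Fin n)

theorem block_partialTranspose : block (partialTranspose ρ) i j = (block ρ i j)ᵀ :=
  rfl

theorem block_reduction :
    block (reduction ρ) i j =
      (block ρ i j).trace • (1 : Matrix (Fin k) (Fin k) ℂ) - block ρ i j := by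
  ext a b
  simp [block, reduction, trace, one_apply]

end Maps

section Rotation

variable (R : Type*) [Ring R]

/-- The quarter turn `iσ_y`, the matrix of the standard symplectic form on `R²`;
conjugation by it turns the transpose of a `2 × 2` matrix into the adjugate. -/
def quarterTurn : Matrix (Fin 2) (Fin 2) R :=
  !![0, 1; -1, 0]

theorem isUnit_quarterTurn : IsUnit (quarterTurn R) := by
  refine isUnit_iff_exists.2 ⟨(quarterTurn R)ᵀ, ?_, ?_⟩ <;>
  · ext a b
    fin_cases a <;> fin_cases b <;> simp [quarterTurn, mul_apply]

theorem conjTranspose_quarterTurn [StarRing R] : (quarterTurn R)ᴴ = (quarterTurn R)ᵀ := by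
  ext a b
  fin_cases a <;> fin_cases b <;> simp [quarterTurn]

variable {R}

theorem trace_smul_one_sub_eq_quarterTurn_conj (X : Matrix (Fin 2) (Fin 2) R) :
    X.trace • (1 : Matrix (Fin 2) (Fin 2) R) - X = (quarterTurn R)ᵀ * Xᵀ * quarterTurn R := by
  ext a b
  fin_cases a <;> fin_cases b <;> simp [quarterTurn, trace_fin_two, mul_apply]

end Rotation

theorem reduction_eq_conj_partialTranspose {n : ℕ}
    (ρ : Matrix (Fin n × Fin 2) (Fin n × Fin 2) ℂ) :
    reduction ρ = star ((1 : Matrix (Fin n) (Fin n) ℂ) ⊗ₖ quarterTurn ℂ) * partialTranspose ρ *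
      (1 : Matrix (Fin n) (Fin n) ℂ) ⊗ₖ quarterTurn ℂ := by
  refine ext_block fun i j => ?_
  rw [star_eq_conjTranspose, conjTranspose_kronecker, conjTranspose_one,
    conjTranspose_quarterTurn, block_mul_one_kronecker, block_one_kronecker_mul,
    block_partialTranspose, block_reduction, trace_smul_one_sub_eq_quarterTurn_conj]

theorem ppt_iff_reduction_qubit_general {n : ℕ}
    (ρ : Matrix (Fin n × Fin 2) (Fin n × Fin 2) ℂ) :
    (partialTranspose ρ).PosSemidef ↔ (reduction ρ).PosSemidef := by
  have isUnit_kronecker : IsUnit ((1 : Matrix (Fin n) (Fin n) ℂ) ⊗ₖ quarterTurn ℂ) :=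
    Matrix.IsUnit.kronecker isUnit_one (isUnit_quarterTurn ℂ)
  rw [reduction_eq_conj_partialTranspose,
    IsUnit.posSemidef_star_left_conjugate_iff isUnit_kronecker]

/-- **Equivalence of PPT and reduction criteria when the second subsystem is a qubit**: for a
density matrix on `ℂ^n ⊗ ℂ²`, the partial transpose is positive semidefinite if and only if
the reduction is positive semidefinite. -/
theorem ppt_iff_reduction_qubit {n : ℕ}
    (ρ : Matrix (Fin n × Fin 2) (Fin n × Fin 2) ℂ)
    (hρ : ρ.PosSemidef) (htr : ρ.trace = 1) :
    (partialTranspose ρ).PosSemidef ↔ (reduction ρ).PosSemidef :=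
  ppt_iff_reduction_qubit_general ρ
end

section
/- (Realignment criterion) Let n, k ≥ 1 and let ρ ∈ M_{nk}(ℂ), indexed by pairs in {1,…,n}×{1,…,k}, be a separable density matrix. Define the realignment ρ^{rln} ∈ M_{n²×k²}(ℂ), with rows indexed by pairs (i,j) ∈ {1,…,n}² and columns by pairs (a,b) ∈ {1,…,k}², by (ρ^{rln})_{(i,j),(a,b)} = ρ_{(i,a),(j,b)}. Then the trace norm (sum of singular values) of ρ^{rln} satisfies ‖ρ^{rln}‖₁ ≤ 1. -/
open scoped Kronecker ComplexOrder

/-- The trace norm (sum of the singular values, i.e. `Tr√(A*A)`) of a rectangular complex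
matrix, computed as the sum of the square roots of the eigenvalues of the Hermitian
positive-semidefinite matrix `Aᴴ·A`. -/
noncomputable def traceNorm {m l : Type*} [Fintype m] [Fintype l] [DecidableEq l]
    (A : Matrix m l ℂ) : ℝ :=
  ∑ i, Real.sqrt ((Matrix.isHermitian_conjTranspose_mul_self A).eigenvalues i)

/-- The realignment `ρ^{rln} ∈ M_{n²×k²}(ℂ)` of a matrix `ρ ∈ M_{nk}(ℂ)`:
`(ρ^{rln})_{(i,j),(a,b)} = ρ_{(i,a),(j,b)}`. -/
def realignment {n k : ℕ}
    (ρ : Matrix (Fin n × Fin k) (Fin n × Fin k) ℂ) :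
    Matrix (Fin n × Fin n) (Fin k × Fin k) ℂ :=
  Matrix.of fun ij ab => ρ (ij.1, ab.1) (ij.2, ab.2)

/-!
The trace norm is dual to the operator norm: `‖A‖₁ = Tr (W A)` for the contraction
`W = (Aᴴ A)^(-1/2) Aᴴ` (with a pseudo-inverse). Since `|Tr (W x yᵀ)| ≤ ‖x‖ ‖y‖`, a sum of
rank-one matrices `xᵢ yᵢᵀ` has trace norm at most `∑ ‖xᵢ‖ ‖yᵢ‖`. Realignment turns `σ ⊗ τ` into
the rank-one matrix `vec(σ) vec(τ)ᵀ`, and for a density matrix `σ` the Euclidean norm of `vec(σ)`,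
which is the Frobenius norm of `σ`, is at most `Tr σ = 1`.
-/

open Matrix WithLp

section TraceNorm

open scoped Matrix.Norms.L2Operator

variable {ι m l 𝕜 : Type*} [RCLike 𝕜] [Fintype m] [Fintype l]

theorem trace_cfc_eq_sum_eigenvalues [DecidableEq l] {H : Matrix l l 𝕜} (hH : H.IsHermitian)
    (f : ℝ → ℝ) : (cfc f H).trace = ∑ i, (f (hH.eigenvalues i) : 𝕜) := by
  rw [hH.cfc_eq, IsHermitian.cfc, Unitary.conjStarAlgAut_apply, trace_mul_cycle,
    Unitary.coe_star_mul_self, one_mul, trace_diagonal]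
  rfl

theorem norm_toLp_star (x : l → 𝕜) : ‖toLp 2 (star x)‖ = ‖toLp 2 x‖ := by
  simp only [EuclideanSpace.norm_eq, Pi.star_apply, norm_star]

theorem norm_dotProduct_le (x y : l → 𝕜) : ‖x ⬝ᵥ y‖ ≤ ‖toLp 2 x‖ * ‖toLp 2 y‖ := by
  have inner_eq : inner 𝕜 (toLp 2 (star y)) (toLp 2 x) = x ⬝ᵥ y := by
    rw [EuclideanSpace.inner_toLp_toLp, star_star]
  rw [← inner_eq, ← norm_toLp_star y, mul_comm]
  exact norm_inner_le_norm _ _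

theorem norm_trace_mul_vecMulVec_le [DecidableEq m] (W : Matrix l m 𝕜) (x : m → 𝕜) (y : l → 𝕜) :
    ‖(W * vecMulVec x y).trace‖ ≤ ‖W‖ * ‖toLp 2 x‖ * ‖toLp 2 y‖ :=
  calc ‖(W * vecMulVec x y).trace‖ = ‖(W *ᵥ x) ⬝ᵥ y‖ := by rw [mul_vecMulVec, trace_vecMulVec]
    _ ≤ ‖toLp 2 (W *ᵥ x)‖ * ‖toLp 2 y‖ := norm_dotProduct_le _ _
    _ ≤ ‖W‖ * ‖toLp 2 x‖ * ‖toLp 2 y‖ := by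
      gcongr
      exact l2_opNorm_mulVec W (toLp 2 x)

theorem exists_norm_le_one_trace_mul_eq_traceNorm [DecidableEq m] [DecidableEq l]
    (A : Matrix m l ℂ) : ∃ W : Matrix l m ℂ, ‖W‖ ≤ 1 ∧ (W * A).trace = traceNorm A := by
  set H := Aᴴ * A
  have hH : H.IsHermitian := isHermitian_conjTranspose_mul_self A
  have continuousOn_spectrum (f : ℝ → ℝ) : ContinuousOn f (spectrum ℝ H) :=
    H.finite_real_spectrum.continuousOn f
  -- The convention `(√0)⁻¹ = 0` makes `R` the Moore–Penrose inverse of `√H`.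
  set R := cfc (fun t ↦ (√t)⁻¹) H
  have hR : Rᴴ = R := IsSelfAdjoint.cfc
  have R_mul_H : R * H = cfc Real.sqrt H :=
    calc R * H = R * cfc (fun t : ℝ ↦ t) H := by rw [cfc_id' ℝ H hH.isSelfAdjoint]
      _ = cfc (fun t ↦ (√t)⁻¹ * t) H :=
        (cfc_mul _ _ H (continuousOn_spectrum _) (continuousOn_spectrum _)).symm
      _ = cfc Real.sqrt H := by simp only [inv_mul_eq_div, Real.div_sqrt]
  have norm_R_mul_H_mul_R : ‖R * H * R‖ ≤ 1 := by
    rw [R_mul_H, ← cfc_mul _ _ H (continuousOn_spectrum _) (continuousOn_spectrum _)]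
    refine norm_cfc_le zero_le_one fun t _ ↦ ?_
    rw [Real.norm_of_nonneg (by positivity)]
    exact mul_inv_le_one
  refine ⟨R * Aᴴ, ?_, ?_⟩
  · have norm_sq : ‖R * H * R‖ = ‖R * Aᴴ‖ * ‖R * Aᴴ‖ := by
      rw [← l2_opNorm_conjTranspose (R * Aᴴ), ← l2_opNorm_conjTranspose_mul_self]
      simp only [conjTranspose_conjTranspose, conjTranspose_mul, hR, Matrix.mul_assoc, H]
    rwa [← sq_le_one_iff₀ (norm_nonneg _), sq, ← norm_sq]
  · rw [Matrix.mul_assoc, R_mul_H, trace_cfc_eq_sum_eigenvalues hH, traceNorm]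
    norm_cast

theorem traceNorm_sum_vecMulVec_le [DecidableEq l] (s : Finset ι) (x : ι → m → ℂ)
    (y : ι → l → ℂ) :
    traceNorm (∑ i ∈ s, vecMulVec (x i) (y i)) ≤ ∑ i ∈ s, ‖toLp 2 (x i)‖ * ‖toLp 2 (y i)‖ := by
  classical
  set A := ∑ i ∈ s, vecMulVec (x i) (y i) with hA
  obtain ⟨W, norm_W, trace_W_A⟩ := exists_norm_le_one_trace_mul_eq_traceNorm A
  calc traceNorm A ≤ ‖(traceNorm A : ℂ)‖ := by
        rw [Complex.norm_real]; exact Real.le_norm_self _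
    _ = ‖∑ i ∈ s, (W * vecMulVec (x i) (y i)).trace‖ := by
        rw [← trace_W_A, hA, Matrix.mul_sum, trace_sum]
    _ ≤ ∑ i ∈ s, ‖W‖ * ‖toLp 2 (x i)‖ * ‖toLp 2 (y i)‖ :=
        norm_sum_le_of_le s fun i _ ↦ norm_trace_mul_vecMulVec_le W (x i) (y i)
    _ ≤ ∑ i ∈ s, ‖toLp 2 (x i)‖ * ‖toLp 2 (y i)‖ := by
        gcongr
        exact mul_le_of_le_one_left (norm_nonneg _) norm_W

end TraceNorm

section Frobenius

open scoped Matrix.Norms.Frobenius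

variable {m l 𝕜 : Type*} [RCLike 𝕜] [Fintype m] [Fintype l]

theorem norm_toLp_vec (A : Matrix m l 𝕜) : ‖toLp 2 A.vec‖ = ‖A‖ := by
  rw [frobenius_norm_def, EuclideanSpace.norm_eq, Fintype.sum_prod_type_right, Real.sqrt_eq_rpow]
  simp

theorem frobenius_norm_vecMulVec_le (x : m → 𝕜) (y : l → 𝕜) :
    ‖vecMulVec x y‖ ≤ ‖toLp 2 x‖ * ‖toLp 2 y‖ := by
  rw [vecMulVec_eq Unit, ← frobenius_norm_replicateCol (ι := Unit),
    ← frobenius_norm_replicateRow (ι := Unit)]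
  exact frobenius_norm_mul _ _

theorem frobenius_norm_le_re_trace_of_posSemidef {A : Matrix m m 𝕜} (hA : A.PosSemidef) :
    ‖A‖ ≤ RCLike.re A.trace := by
  obtain ⟨r, v, rfl⟩ := posSemidef_iff_eq_sum_vecMulVec.mp hA
  rw [trace_sum, map_sum]
  refine norm_sum_le_of_le _ fun i _ ↦ ?_
  calc ‖vecMulVec (v i) (star (v i))‖ ≤ ‖toLp 2 (v i)‖ * ‖toLp 2 (star (v i))‖ :=
        frobenius_norm_vecMulVec_le _ _
    _ = ‖toLp 2 (v i)‖ * ‖toLp 2 (v i)‖ := by rw [norm_toLp_star]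
    _ = RCLike.re (vecMulVec (v i) (star (v i))).trace := by
        rw [trace_vecMulVec, ← EuclideanSpace.inner_toLp_toLp, inner_self_eq_norm_mul_norm]

theorem frobenius_norm_le_one_of_isDensityMatrix {σ : Matrix m m ℂ} (hσ : IsDensityMatrix σ) :
    ‖σ‖ ≤ 1 := by
  simpa [hσ.2] using frobenius_norm_le_re_trace_of_posSemidef hσ.1

end Frobenius

section Realignment

open scoped Matrix.Norms.Frobenius

variable {ι : Type*} {n k : ℕ}

-- The transposes appear because `Matrix.vec` stacks columns whereas `realignment` reads off rows.
theorem realignment_kronecker (σ : Matrix (Fin n) (Fin n) ℂ) (τ : Matrix (Fin k) (Fin k) ℂ) :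
    realignment (σ ⊗ₖ τ) = vecMulVec σᵀ.vec τᵀ.vec :=
  rfl

theorem realignment_sum (s : Finset ι)
    (ρ : ι → Matrix (Fin n × Fin k) (Fin n × Fin k) ℂ) :
    realignment (∑ i ∈ s, ρ i) = ∑ i ∈ s, realignment (ρ i) := by
  ext
  simp [realignment, Matrix.sum_apply]

theorem traceNorm_realignment_sum_kronecker_le (s : Finset ι)
    (σ : ι → Matrix (Fin n) (Fin n) ℂ) (τ : ι → Matrix (Fin k) (Fin k) ℂ) :
    traceNorm (realignment (∑ i ∈ s, σ i ⊗ₖ τ i)) ≤ ∑ i ∈ s, ‖σ i‖ * ‖τ i‖ := by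
  simp only [realignment_sum, realignment_kronecker]
  refine (traceNorm_sum_vecMulVec_le s _ _).trans_eq ?_
  simp only [norm_toLp_vec, frobenius_norm_transpose]

theorem traceNorm_realignment_sum_smul_kronecker_le (s : Finset ι) (c : ι → ℂ)
    {σ : ι → Matrix (Fin n) (Fin n) ℂ} {τ : ι → Matrix (Fin k) (Fin k) ℂ}
    (hσ : ∀ i ∈ s, IsDensityMatrix (σ i)) (hτ : ∀ i ∈ s, IsDensityMatrix (τ i)) :
    traceNorm (realignment (∑ i ∈ s, c i • (σ i ⊗ₖ τ i))) ≤ ∑ i ∈ s, ‖c i‖ :=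
  calc traceNorm (realignment (∑ i ∈ s, c i • (σ i ⊗ₖ τ i)))
      = traceNorm (realignment (∑ i ∈ s, (c i • σ i) ⊗ₖ τ i)) := by simp only [smul_kronecker]
    _ ≤ ∑ i ∈ s, ‖c i • σ i‖ * ‖τ i‖ := traceNorm_realignment_sum_kronecker_le _ _ _
    _ = ∑ i ∈ s, ‖c i‖ * ‖σ i‖ * ‖τ i‖ := by simp only [norm_smul]
    _ ≤ ∑ i ∈ s, ‖c i‖ * 1 * 1 := by
        gcongr with i hi
        exacts [frobenius_norm_le_one_of_isDensityMatrix (hσ i hi),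
          frobenius_norm_le_one_of_isDensityMatrix (hτ i hi)]
    _ = ∑ i ∈ s, ‖c i‖ := by simp only [mul_one]

end Realignment

/-- **The realignment criterion**: a separable density matrix `ρ` on `ℂ^n ⊗ ℂ^k` satisfies
`‖ρ^{rln}‖₁ ≤ 1`. -/
theorem realignment_criterion {n k : ℕ}
    (ρ : Matrix (Fin n × Fin k) (Fin n × Fin k) ℂ)
    (hsep : IsSeparableState ρ) :
    traceNorm (realignment ρ) ≤ 1 := by
  obtain ⟨N, p, σ, τ, p_nonneg, p_sum, hσ, hτ, rfl⟩ := hsep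
  calc traceNorm (realignment (∑ i, (p i : ℂ) • (σ i ⊗ₖ τ i)))
      ≤ ∑ i, ‖(p i : ℂ)‖ :=
        traceNorm_realignment_sum_smul_kronecker_le _ _ (fun i _ ↦ hσ i) fun i _ ↦ hτ i
    _ = ∑ i, p i := by simp only [Complex.norm_of_nonneg (p_nonneg _)]
    _ = 1 := p_sum
end

section
/- (Hayden–Winter trick) Let d, k, n ≥ 1 with d ≤ kn, and let V ∈ M_{kn×d}(ℂ), rows indexed by pairs in {1,…,k}×{1,…,n}, be an isometry: V*V = I_d. Define the quantum channel Φ : M_d(ℂ) → M_k(ℂ) by Φ(X)_{ij} = Σ_{a=1}^{n} (V X V*)_{(i,a),(j,a)} (partial trace over ℂ^n of V X V*), and its conjugate channel Φ̄ by Φ̄(X)_{ij} = Σ_{a=1}^{n} (V̄ X V̄*)_{(i,a),(j,a)}, where V̄ is the entrywise complex conjugate of V. Let E_{st} ∈ M_d(ℂ) denote the matrix units and define the output of the maximally entangled state Z = [Φ ⊗ Φ̄](Ω_d) = (1/d) Σ_{s,t=1}^{d} Φ(E_{st}) ⊗ Φ̄(E_{st}) ∈ M_{k²}(ℂ) (Kronecker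 product). Then Z is a density matrix whose largest eigenvalue satisfies ‖Z‖ ≥ d/(nk). -/
open Matrix
open scoped Kronecker ComplexOrder

/-!
Reshuffle the projection `P = V V*` into the matrix `R` with entries
`R (i, j) (a, b) = P (i, a) (j, b)`. Summing over the matrix units gives `d Z = R R*`, so `Z` is
positive semidefinite, and since reshuffling only permutes entries,
`d tr Z = tr (P P*) = tr P = d`. The unnormalised maximally entangled vectors `vec 1_k`
and `vec 1_n` have squared norms `k` and `n` and satisfy `⟨vec 1_k, R vec 1_n⟩ = tr P = d`, hence
by Cauchy–Schwarz `d² ≤ n ⟨vec 1_k, R R* vec 1_k⟩`: the normalised vector `vec 1_k` witnesses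
the bound.
-/

section DotProduct

variable {𝕜 m n : Type*} [RCLike 𝕜] [Fintype m] [Fintype n]

lemma star_dotProduct_self_eq_sum_norm_sq (x : m → 𝕜) :
    star x ⬝ᵥ x = ((∑ i, ‖x i‖ ^ 2 : ℝ) : 𝕜) := by
  simp [dotProduct, RCLike.conj_mul]

lemma norm_star_dotProduct_sq_le (x y : m → 𝕜) :
    ‖star x ⬝ᵥ y‖ ^ 2 ≤ (∑ i, ‖x i‖ ^ 2) * ∑ i, ‖y i‖ ^ 2 := by
  have cauchySchwarz := norm_inner_le_norm (𝕜 := 𝕜) (WithLp.toLp 2 x) (WithLp.toLp 2 y)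
  rw [EuclideanSpace.inner_toLp_toLp, dotProduct_comm] at cauchySchwarz
  simpa only [mul_pow, EuclideanSpace.norm_sq_eq] using
    pow_le_pow_left₀ (norm_nonneg _) cauchySchwarz 2

lemma norm_star_dotProduct_mulVec_sq_le (A : Matrix m n 𝕜) (x : m → 𝕜) (y : n → 𝕜) :
    ‖star x ⬝ᵥ A *ᵥ y‖ ^ 2 ≤ (∑ j, ‖y j‖ ^ 2) * RCLike.re (star x ⬝ᵥ (A * Aᴴ) *ᵥ x) := by
  have adjoint_mulVec (z : n → 𝕜) : star x ⬝ᵥ A *ᵥ z = star (Aᴴ *ᵥ x) ⬝ᵥ z := by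
    rw [dotProduct_mulVec, star_mulVec, conjTranspose_conjTranspose]
  rw [← mulVec_mulVec, adjoint_mulVec, adjoint_mulVec, star_dotProduct_self_eq_sum_norm_sq,
    RCLike.ofReal_re, mul_comm]
  exact norm_star_dotProduct_sq_le _ _

lemma exists_unit_star_dotProduct_mulVec_eq_div (A : Matrix m m 𝕜) {u : m → 𝕜} {c : ℝ}
    (hc : 0 < c) (hu : ∑ i, ‖u i‖ ^ 2 = c) :
    ∃ v : m → 𝕜, ∑ i, ‖v i‖ ^ 2 = 1 ∧
      RCLike.re (star v ⬝ᵥ A *ᵥ v) = RCLike.re (star u ⬝ᵥ A *ᵥ u) / c := by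
  have inv_sqrt_sq : (√c)⁻¹ ^ 2 = c⁻¹ := by rw [inv_pow, Real.sq_sqrt hc.le]
  refine ⟨(√c)⁻¹ • u, ?_, ?_⟩
  · simp only [Pi.smul_apply, norm_smul, mul_pow, ← Finset.mul_sum, hu, Real.norm_eq_abs, sq_abs,
      inv_sqrt_sq]
    exact inv_mul_cancel₀ hc.ne'
  · rw [star_smul, star_trivial, mulVec_smul, smul_dotProduct, dotProduct_smul, smul_smul, ← sq,
      inv_sqrt_sq, RCLike.smul_re, div_eq_inv_mul]

lemma sum_norm_vec_one_sq [DecidableEq m] :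
    ∑ p, ‖vec (1 : Matrix m m 𝕜) p‖ ^ 2 = Fintype.card m := by
  have h : star (vec (1 : Matrix m m 𝕜)) ⬝ᵥ vec 1 = Fintype.card m := by
    rw [star_vec_dotProduct_vec, conjTranspose_one, one_mul, trace_one]
  rw [star_dotProduct_self_eq_sum_norm_sq] at h
  exact_mod_cast h

end DotProduct

section Isometry

variable {α m δ : Type*} [Fintype m] [DecidableEq δ] {V : Matrix m δ α}

lemma nonempty_of_conjTranspose_mul_self_eq_one [NonAssocSemiring α] [Star α] [Nontrivial α]
    [Nonempty δ] (hV : Vᴴ * V = 1) : Nonempty m := by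
  obtain ⟨s⟩ := ‹Nonempty δ›
  by_contra h
  have := not_nonempty_iff.mp h
  have diagonal_entry := congrFun₂ hV s s
  simp [mul_apply] at diagonal_entry

variable [Fintype δ]

lemma mul_conjTranspose_mul_conjTranspose_self [Semiring α] [StarRing α] (hV : Vᴴ * V = 1) :
    V * Vᴴ * (V * Vᴴ)ᴴ = V * Vᴴ := by
  rw [conjTranspose_mul, conjTranspose_conjTranspose, Matrix.mul_assoc, ← Matrix.mul_assoc Vᴴ, hV,
    Matrix.one_mul]

lemma trace_mul_conjTranspose_eq_card [CommSemiring α] [StarRing α] (hV : Vᴴ * V = 1) :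
    (V * Vᴴ).trace = Fintype.card δ := by
  rw [trace_mul_comm, hV, trace_one]

end Isometry

section Reshuffle

variable {α ι κ μ ν : Type*}

/-- The reshuffling (realignment) of a matrix between tensor products: it exchanges the second row
index with the first column index, so that the entry of `P` at `((i, a), (j, b))` moves to
`((i, j), (a, b))`. -/
def reshuffle (P : Matrix (ι × μ) (κ × ν) α) : Matrix (ι × κ) (μ × ν) α :=
  of fun p q => P (p.1, q.1) (p.2, q.2)

lemma trace_reshuffle_mul_conjTranspose [Fintype ι] [Fintype κ] [Fintype μ] [Fintype ν]
    [NonUnitalNonAssocSemiring α] [Star α] (P : Matrix (ι × μ) (κ × ν) α) :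
    (reshuffle P * (reshuffle P)ᴴ).trace = (P * Pᴴ).trace := by
  simp only [trace, diag_apply, mul_apply, conjTranspose_apply, reshuffle, of_apply,
    Fintype.sum_prod_type]
  exact Finset.sum_congr rfl fun i _ => Finset.sum_comm

lemma star_vec_one_dotProduct_reshuffle_mulVec_vec_one [Fintype κ] [Fintype ν] [DecidableEq κ]
    [DecidableEq ν] [NonAssocSemiring α] [StarRing α] (P : Matrix (κ × ν) (κ × ν) α) :
    star (vec (1 : Matrix κ κ α)) ⬝ᵥ reshuffle P *ᵥ vec (1 : Matrix ν ν α) = P.trace := by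
  have star_vec_one : star (vec (1 : Matrix κ κ α)) = vec 1 := by
    rw [star_vec, ← transpose_conjTranspose, transpose_one, conjTranspose_one]
  rw [star_vec_one]
  simp [dotProduct, mulVec, vec, reshuffle, trace, one_apply, Fintype.sum_prod_type]

lemma norm_trace_sq_le_card_mul_re_reshuffle {𝕜 : Type*} [RCLike 𝕜] [Fintype κ] [Fintype ν]
    [DecidableEq κ] (P : Matrix (κ × ν) (κ × ν) 𝕜) :
    ‖P.trace‖ ^ 2 ≤ Fintype.card ν *
      RCLike.re (star (vec 1) ⬝ᵥ (reshuffle P * (reshuffle P)ᴴ) *ᵥ vec (1 : Matrix κ κ 𝕜)) := by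
  classical
  rw [← star_vec_one_dotProduct_reshuffle_mulVec_vec_one, ← sum_norm_vec_one_sq (𝕜 := 𝕜) (m := ν)]
  exact norm_star_dotProduct_mulVec_sq_le _ _ _

end Reshuffle

section Channel

variable {α δ κ κ' ν ν' : Type*} [Fintype δ] [Fintype ν]

/-- The channel `X ↦ Tr_ν (V X V*)` with Stinespring matrix `V`, where the environment `ν` is the
second tensor factor. -/
def stinespringChannel [NonUnitalNonAssocSemiring α] [Star α] (V : Matrix (κ × ν) δ α)
    (X : Matrix δ δ α) : Matrix κ κ α :=
  of fun i j => ∑ a, (V * X * Vᴴ) (i, a) (j, a)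

variable [DecidableEq δ]

lemma stinespringChannel_single_apply [Semiring α] [Star α] (V : Matrix (κ × ν) δ α) (s t : δ)
    (i j : κ) :
    stinespringChannel V (single s t 1) i j = ∑ a, V (i, a) s * star (V (j, a) t) := by
  simp only [stinespringChannel, of_apply, single_eq_single_vecMulVec_single, mul_vecMulVec,
    vecMulVec_mul, vecMulVec_apply, mulVec_single_one, single_one_vecMul, col_apply, row_apply,
    conjTranspose_apply]

lemma sum_stinespringChannel_kronecker_eq_reshuffle [Fintype ν'] [CommSemiring α] [StarRing α]
    (V : Matrix (κ × ν) δ α) (W : Matrix (κ' × ν') δ α) :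
    ∑ s, ∑ t, stinespringChannel V (single s t 1) ⊗ₖ
        stinespringChannel (W.map star) (single s t 1) =
      reshuffle (V * Wᴴ) * (reshuffle (V * Wᴴ))ᴴ := by
  ext ⟨i, j⟩ ⟨i', j'⟩
  have regroup (s t : δ) :
      (∑ a, V (i, a) s * star (V (i', a) t)) * ∑ b, star (W (j, b) s) * W (j', b) t =
        ∑ q : ν × ν', V (i, q.1) s * star (W (j, q.2) s) *
          (star (V (i', q.1) t) * W (j', q.2) t) := by
    rw [Finset.sum_mul_sum, Fintype.sum_prod_type]
    exact Finset.sum_congr rfl fun a _ => Finset.sum_congr rfl fun b _ => by ring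
  simp only [Matrix.sum_apply, kroneckerMap_apply, stinespringChannel_single_apply, map_apply,
    star_star, regroup, mul_apply, reshuffle, of_apply, conjTranspose_apply, star_sum, star_mul',
    Finset.sum_mul_sum]
  exact Finset.sum_comm_cycle

end Channel

section MaximallyEntangledOutput

variable {𝕜 δ κ ν : Type*} [RCLike 𝕜] [Fintype δ] [DecidableEq δ] [Fintype ν]

/-- The output `[Φ ⊗ Φ̄](Ω)` of the maximally entangled state `Ω = |δ|⁻¹ ∑ s t, E_st ⊗ E_st`, where
`Φ` is the channel with Stinespring matrix `V` and `Φ̄` is its conjugate channel. -/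
noncomputable def maximallyEntangledOutput (V : Matrix (κ × ν) δ 𝕜) :
    Matrix (κ × κ) (κ × κ) 𝕜 :=
  (Fintype.card δ : 𝕜)⁻¹ • ∑ s, ∑ t,
    stinespringChannel V (single s t 1) ⊗ₖ stinespringChannel (V.map star) (single s t 1)

lemma maximallyEntangledOutput_eq_reshuffle (V : Matrix (κ × ν) δ 𝕜) :
    maximallyEntangledOutput V =
      (Fintype.card δ : 𝕜)⁻¹ • (reshuffle (V * Vᴴ) * (reshuffle (V * Vᴴ))ᴴ) := by
  rw [maximallyEntangledOutput, sum_stinespringChannel_kronecker_eq_reshuffle]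

lemma posSemidef_maximallyEntangledOutput [Finite κ] (V : Matrix (κ × ν) δ 𝕜) :
    (maximallyEntangledOutput V).PosSemidef := by
  rw [maximallyEntangledOutput_eq_reshuffle]
  exact (posSemidef_self_mul_conjTranspose _).smul (inv_nonneg.mpr (Nat.cast_nonneg _))

variable [Fintype κ] [Nonempty δ] {V : Matrix (κ × ν) δ 𝕜}

lemma trace_maximallyEntangledOutput (hV : Vᴴ * V = 1) :
    (maximallyEntangledOutput V).trace = 1 := by
  rw [maximallyEntangledOutput_eq_reshuffle, trace_smul, trace_reshuffle_mul_conjTranspose,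
    mul_conjTranspose_mul_conjTranspose_self hV, trace_mul_conjTranspose_eq_card hV, smul_eq_mul,
    inv_mul_cancel₀ (Nat.cast_ne_zero.mpr Fintype.card_ne_zero)]

lemma card_div_card_le_re_maximallyEntangledOutput [DecidableEq κ] (hV : Vᴴ * V = 1) :
    (Fintype.card δ : ℝ) / Fintype.card ν ≤
      RCLike.re (star (vec 1) ⬝ᵥ maximallyEntangledOutput V *ᵥ vec (1 : Matrix κ κ 𝕜)) := by
  have : Nonempty ν := (nonempty_prod.mp (nonempty_of_conjTranspose_mul_self_eq_one hV)).2
  have card_sq_le := norm_trace_sq_le_card_mul_re_reshuffle (V * Vᴴ)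
  rw [trace_mul_conjTranspose_eq_card hV, RCLike.norm_natCast] at card_sq_le
  have hδ : (0 : ℝ) < Fintype.card δ := Nat.cast_pos.mpr Fintype.card_pos
  have hν : (0 : ℝ) < Fintype.card ν := Nat.cast_pos.mpr Fintype.card_pos
  rw [maximallyEntangledOutput_eq_reshuffle, smul_mulVec, dotProduct_smul, smul_eq_mul,
    ← RCLike.ofReal_natCast (K := 𝕜), ← RCLike.ofReal_inv, RCLike.re_ofReal_mul,
    le_inv_mul_iff₀ hδ, ← mul_div_assoc, ← sq, div_le_iff₀' hν]
  exact card_sq_le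

lemma exists_unit_card_div_le_re_maximallyEntangledOutput (hV : Vᴴ * V = 1) :
    ∃ v : κ × κ → 𝕜, ∑ p, ‖v p‖ ^ 2 = 1 ∧
      (Fintype.card δ : ℝ) / (Fintype.card ν * Fintype.card κ) ≤
        RCLike.re (star v ⬝ᵥ maximallyEntangledOutput V *ᵥ v) := by
  classical
  have : Nonempty κ := (nonempty_prod.mp (nonempty_of_conjTranspose_mul_self_eq_one hV)).1
  obtain ⟨v, hv, re_eq⟩ := exists_unit_star_dotProduct_mulVec_eq_div (maximallyEntangledOutput V)
    (Nat.cast_pos.mpr Fintype.card_pos) (sum_norm_vec_one_sq (𝕜 := 𝕜) (m := κ))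
  refine ⟨v, hv, ?_⟩
  rw [re_eq, ← div_div]
  gcongr
  exact card_div_card_le_re_maximallyEntangledOutput hV

theorem hayden_winter_trick_general (hV : Vᴴ * V = 1) :
    (maximallyEntangledOutput V).PosSemidef ∧ (maximallyEntangledOutput V).trace = 1 ∧
      ∃ v : κ × κ → 𝕜, ∑ p, ‖v p‖ ^ 2 = 1 ∧
        (Fintype.card δ : ℝ) / (Fintype.card ν * Fintype.card κ) ≤
          RCLike.re (star v ⬝ᵥ maximallyEntangledOutput V *ᵥ v) :=
  ⟨posSemidef_maximallyEntangledOutput V, trace_maximallyEntangledOutput hV,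
    exists_unit_card_div_le_re_maximallyEntangledOutput hV⟩

end MaximallyEntangledOutput

/-- **The Hayden–Winter trick.**  Let `V : ℂ^d → ℂ^k ⊗ ℂ^n` be an isometry, let
`Φ(X) = Tr_{ℂ^n}(V X V*)` be the associated quantum channel and `Φ̄` its conjugate channel
(built from the entrywise conjugate isometry `V̄`).  Then the output
`Z = [Φ ⊗ Φ̄](Ω_d) = (1/d)·Σ_{s,t} Φ(E_{st}) ⊗ Φ̄(E_{st})` of the maximally entangled state is
a density matrix whose largest eigenvalue is at least `d/(nk)`; the latter is expressed by the
existence of a unit vector `v` with `⟨v, Z v⟩ ≥ d/(nk)`. -/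
theorem hayden_winter_trick
    (d k n : ℕ) (hd : 1 ≤ d) (hk : 1 ≤ k) (hn : 1 ≤ n) (hdkn : d ≤ k * n)
    (V : Matrix (Fin k × Fin n) (Fin d) ℂ) (hV : Vᴴ * V = 1) :
    let Φ : Matrix (Fin d) (Fin d) ℂ → Matrix (Fin k) (Fin k) ℂ := fun X =>
      Matrix.of fun i j => ∑ a : Fin n, (V * X * Vᴴ) (i, a) (j, a)
    let Φc : Matrix (Fin d) (Fin d) ℂ → Matrix (Fin k) (Fin k) ℂ := fun X =>
      Matrix.of fun i j =>
        ∑ a : Fin n, (V.map star * X * (V.map star)ᴴ) (i, a) (j, a)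
    let Z : Matrix (Fin k × Fin k) (Fin k × Fin k) ℂ :=
      ((d : ℂ))⁻¹ • ∑ s : Fin d, ∑ t : Fin d,
        (Φ (Matrix.single s t 1)) ⊗ₖ (Φc (Matrix.single s t 1))
    Z.PosSemidef ∧ Z.trace = 1 ∧
      ∃ v : Fin k × Fin k → ℂ, (∑ p, ‖v p‖ ^ 2 = 1) ∧
        (d : ℝ) / (n * k) ≤ (star v ⬝ᵥ Z.mulVec v).re := by
  have : Nonempty (Fin d) := ⟨⟨0, hd⟩⟩
  simpa only [maximallyEntangledOutput, stinespringChannel, Fintype.card_fin, RCLike.re_to_complex]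
    using hayden_winter_trick_general hV
end
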